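/- arXiv:1202.0874 — 2 statements merged into one kernel-verified Lean document; each statement's English description precedes it below -/
import Mathlib

section
/- Let p, q, a, b, c be positive integers and let s be a complex number with Re(s) > 1. Then S_{λ₂}(p,q,a,b,c,s) = 2(−1)^p Σ_{j=0}^{⌊p/2⌋} φ(2j) Σ_{ω=0}^{p−2j} C(ω+a−1, ω) C(p+c−2j−ω−1, c−1) T(q+a+ω, s, p+b+c−2j−ω; 1, −1) + 2(−1)^{p+a} Σ_{j=0}^{⌊c/2⌋} φ(2j) Σ_{ω=0}^{c−2j} C(ω+a−1, ω) C(p+c−2j−ω−1, p−1) T(q, s+a+ω, p+b+c−2j−ω; −1, 1) + 2(−1)^p Σ_{j=0}^{⌊a/2⌋} φ(2j) Σ_{ω=0}^{p−1} C(ω+a−2j, ω) C(p+c−2−ω, c−1) T(q+a−2j+ω+1, s, p+b+c−1−ω; −1, −1) + 2(−1)^{p+a} Σ_{j=0}^{⌊a/2⌋} φ(2j) Σ_{ω=0}^{c−1} C(ω+a−2j, ω) C(p+c−2−ω, p−1) T(q, s+a−2j+ω+1, p+b+c−1−ω; −1, −1), where C(n,k) denotes the binomial coefficient. -/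
open Complex Finset

/-- `φ(s) = (2^{1-s} - 1) ζ(s)` (with the convention `φ(1) = -log 2`). -/
noncomputable def phi (s : ℂ) : ℂ :=
  if s = 1 then -(Real.log 2 : ℂ) else ((2 : ℂ) ^ ((1 : ℂ) - s) - 1) * riemannZeta s

/-- `T(p,s,q;x,y) = Σ_{l ≠ 0, m ≥ 1, l+m ≠ 0} x^l y^m / (l^p m^s (l+m)^q)`. -/
noncomputable def T (p : ℕ) (s : ℂ) (q : ℕ) (x y : ℂ) : ℂ :=
  ∑' lm : ℤ × ℕ,
    if lm.1 ≠ 0 ∧ lm.1 + ((lm.2 : ℤ) + 1) ≠ 0 then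
      x ^ lm.1 * y ^ (lm.2 + 1) /
        ((lm.1 : ℂ) ^ p * (((lm.2 + 1 : ℕ) : ℂ)) ^ s *
          (((lm.1 + (lm.2 : ℤ) + 1 : ℤ) : ℂ)) ^ q)
    else 0

/-- Generic triple zeta-sum of type `A₃` with a weight `w` on `(l,m,n)`. -/
noncomputable def Z3 (w : ℕ → ℕ → ℕ → ℂ) (s₁ s₂ s₃ s₄ s₅ s₆ : ℂ) : ℂ :=
  ∑' t : ℕ × ℕ × ℕ,
    w (t.1 + 1) (t.2.1 + 1) (t.2.2 + 1) /
      ((((t.1 + 1 : ℕ) : ℂ)) ^ s₁ * (((t.2.1 + 1 : ℕ) : ℂ)) ^ s₂ *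
        (((t.2.2 + 1 : ℕ) : ℂ)) ^ s₃ * (((t.1 + 1 + (t.2.1 + 1) : ℕ) : ℂ)) ^ s₄ *
        (((t.2.1 + 1 + (t.2.2 + 1) : ℕ) : ℂ)) ^ s₅ *
        (((t.1 + 1 + (t.2.1 + 1) + (t.2.2 + 1) : ℕ) : ℂ)) ^ s₆)

/-- `ζ₃(s₁,…,s₆,λ₂∨;SU(4))`, with numerator `(-1)^{l+n}`. -/
noncomputable def Zlam2 : ℂ → ℂ → ℂ → ℂ → ℂ → ℂ → ℂ :=
  Z3 (fun l _ n => (-1 : ℂ) ^ (l + n))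

/-- The twelve-term alternating combination `S` built from a six-variable zeta `Z`. -/
noncomputable def Scomb (Z : ℂ → ℂ → ℂ → ℂ → ℂ → ℂ → ℂ) (p q a b c : ℕ) (s : ℂ) : ℂ :=
  Z p q s a b c + (-1 : ℂ) ^ p * Z p a s q c b + (-1 : ℂ) ^ (p + a) * Z q a c p s b +
    (-1 : ℂ) ^ (p + a + c) * Z q s c b a p + (-1 : ℂ) ^ q * Z a q b p s c +
    (-1 : ℂ) ^ (q + b) * Z a s b c q p + (-1 : ℂ) ^ (q + a) * Z a p b q c s +
    (-1 : ℂ) ^ (q + a + b) * Z a c b s p q + (-1 : ℂ) ^ (q + a + b + c) * Z s c p a b q +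
    (-1 : ℂ) ^ (p + q + a) * Z q p c a b s + (-1 : ℂ) ^ (p + q + a + c) * Z q b c s p a +
    (-1 : ℂ) ^ (p + q + a + b + c) * Z s b p q c a

/-- The right-hand side `J₂` of the functional relation for `ζ₃(·,λ₂∨;SU(4))`. -/
noncomputable def J2 (p q a b c : ℕ) (s : ℂ) : ℂ :=
  2 * (-1 : ℂ) ^ p * ∑ j ∈ range (p / 2 + 1), phi (2 * j) *
      ∑ ω ∈ range (p - 2 * j + 1),
        (Nat.choose (ω + a - 1) ω : ℂ) * (Nat.choose (p + c - 2 * j - ω - 1) (c - 1) : ℂ) *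
          T (q + a + ω) s (p + b + c - 2 * j - ω) 1 (-1) +
  2 * (-1 : ℂ) ^ (p + a) * ∑ j ∈ range (c / 2 + 1), phi (2 * j) *
      ∑ ω ∈ range (c - 2 * j + 1),
        (Nat.choose (ω + a - 1) ω : ℂ) * (Nat.choose (p + c - 2 * j - ω - 1) (p - 1) : ℂ) *
          T q (s + a + ω) (p + b + c - 2 * j - ω) (-1) 1 +
  2 * (-1 : ℂ) ^ p * ∑ j ∈ range (a / 2 + 1), phi (2 * j) *
      ∑ ω ∈ range p,
        (Nat.choose (ω + a - 2 * j) ω : ℂ) * (Nat.choose (p + c - 2 - ω) (c - 1) : ℂ) *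
          T (q + a - 2 * j + ω + 1) s (p + b + c - 1 - ω) (-1) (-1) +
  2 * (-1 : ℂ) ^ (p + a) * ∑ j ∈ range (a / 2 + 1), phi (2 * j) *
      ∑ ω ∈ range c,
        (Nat.choose (ω + a - 2 * j) ω : ℂ) * (Nat.choose (p + c - 2 - ω) (p - 1) : ℂ) *
          T q (s + ((a - 2 * j : ℕ) : ℂ) + ω + 1) (p + b + c - 1 - ω) (-1) (-1)




/-- Taylor coefficients of `(y + X)^(-c)`. -/
noncomputable def vco (y : ℂ) (c k : ℕ) : ℂ :=
  (-1) ^ k * (Nat.choose (k + c - 1) k : ℂ) * (y ^ (c + k))⁻¹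

lemma vco_zero_left (y : ℂ) (k : ℕ) : vco y 0 k = if k = 0 then 1 else 0 := by
  unfold vco
  rcases k with _ | k
  · simp
  · simp

lemma vco_zero_right {y : ℂ} (hy : y ≠ 0) (c : ℕ) : y * vco y (c + 1) 0 = vco y c 0 := by
  unfold vco
  simp
  field_simp
  ring

lemma vco_succ {y : ℂ} (hy : y ≠ 0) (c k : ℕ) :
    y * vco y (c + 1) (k + 1) + vco y (c + 1) k = vco y c (k + 1) := by
  unfold vco
  have h : (Nat.choose (k + 1 + (c + 1) - 1) (k + 1) : ℂ) =
      Nat.choose (k + (c + 1) - 1) k + Nat.choose (k + 1 + c - 1) (k + 1) := by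
    have h1 : k + 1 + (c + 1) - 1 = (k + c) + 1 := by omega
    have h2 : k + (c + 1) - 1 = k + c := by omega
    have h3 : k + 1 + c - 1 = k + c := by omega
    rw [h1, h2, h3, Nat.choose_succ_succ]; push_cast; ring
  rw [h]
  field_simp
  ring

/-- The power series `(y + X)^(-c)`. -/
noncomputable def V (y : ℂ) (c : ℕ) : PowerSeries ℂ := PowerSeries.mk (vco y c)

lemma V_zero (y : ℂ) : V y 0 = 1 := by
  ext k
  rw [V, PowerSeries.coeff_mk, vco_zero_left, PowerSeries.coeff_one]

lemma V_succ {y : ℂ} (hy : y ≠ 0) (c : ℕ) :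
    (PowerSeries.C y + PowerSeries.X) * V y (c + 1) = V y c := by
  ext k
  rcases k with _ | k
  · simp [V, add_mul, vco_zero_right hy]
  · simp only [V, add_mul, map_add, PowerSeries.coeff_C_mul, PowerSeries.coeff_succ_X_mul,
      PowerSeries.coeff_mk, vco_succ hy]

/-- partial fractions -/
lemma parfrac {R : Type*} [CommRing R] [Algebra ℂ R] (A B : R) {y : ℂ} (hy : y ≠ 0)
    (h : algebraMap ℂ R y * (A * B) = A - B) (p c : ℕ) (hpc : p + c ≠ 0) :
    A ^ p * B ^ c = ∑ i ∈ range p, algebraMap ℂ R (vco y c i) * A ^ (p - i) +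
      ∑ i ∈ range c, algebraMap ℂ R (vco (-y) p i) * B ^ (c - i) := by
  have inj : ∀ u v : R, algebraMap ℂ R y * u = algebraMap ℂ R y * v → u = v := by
    intro u v huv
    have := congrArg (fun t => algebraMap ℂ R y⁻¹ * t) huv
    simp only [← mul_assoc, ← map_mul, inv_mul_cancel₀ hy, map_one, one_mul] at this
    exact this
  have key : ∀ n p c : ℕ, p + c = n + 1 →
      A ^ p * B ^ c = ∑ i ∈ range p, algebraMap ℂ R (vco y c i) * A ^ (p - i) +
      ∑ i ∈ range c, algebraMap ℂ R (vco (-y) p i) * B ^ (c - i) := by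
    intro n
    induction n with
    | zero =>
      intro p c hpc
      rcases p with _ | p
      · obtain rfl : c = 1 := by omega
        simp [vco_zero_left]
      · obtain rfl : p = 0 := by omega
        obtain rfl : c = 0 := by omega
        simp [vco_zero_left]
    | succ n ih =>
      intro p c hpc
      rcases p with _ | p
      · rcases c with _ | c
        · omega
        rw [sum_range_succ']
        simp [vco_zero_left]
      rcases c with _ | c
      · rw [sum_range_succ']
        simp [vco_zero_left]
      apply inj
      have e1 : algebraMap ℂ R y * (A ^ (p + 1) * B ^ (c + 1)) =
          A ^ (p + 1) * B ^ c - A ^ p * B ^ (c + 1) := by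
        linear_combination (A ^ p * B ^ c) * h
      rw [e1, ih (p + 1) c (by omega), ih p (c + 1) (by omega)]
      have f1 : algebraMap ℂ R y * ∑ i ∈ range (p + 1), algebraMap ℂ R (vco y (c + 1) i) * A ^ (p + 1 - i)
          = ∑ i ∈ range (p + 1), algebraMap ℂ R (vco y c i) * A ^ (p + 1 - i) -
            ∑ i ∈ range p, algebraMap ℂ R (vco y (c + 1) i) * A ^ (p - i) := by
        rw [sum_range_succ', sum_range_succ', mul_add, mul_sum, add_sub_right_comm,
          ← sum_sub_distrib, ← mul_assoc, ← map_mul, vco_zero_right hy]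
        congr 1
        apply sum_congr rfl
        intro i _
        rw [← vco_succ hy c i, Nat.add_sub_add_right]
        simp only [map_add, map_mul]
        ring
      have hy' : -y ≠ 0 := neg_ne_zero.mpr hy
      have f2 : algebraMap ℂ R y * ∑ i ∈ range (c + 1), algebraMap ℂ R (vco (-y) (p + 1) i) * B ^ (c + 1 - i)
          = - ∑ i ∈ range (c + 1), algebraMap ℂ R (vco (-y) p i) * B ^ (c + 1 - i) +
            ∑ i ∈ range c, algebraMap ℂ R (vco (-y) (p + 1) i) * B ^ (c - i) := by
        rw [sum_range_succ', sum_range_succ', mul_add, mul_sum, neg_add, add_right_comm,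
          ← sum_neg_distrib, ← sum_add_distrib, ← vco_zero_right hy' p]
        congr 1
        · apply sum_congr rfl
          intro i _
          rw [← vco_succ hy' p i, Nat.add_sub_add_right]
          simp only [map_add, map_mul, map_neg]
          ring
        · simp only [map_mul, map_neg]; ring
      rw [mul_add, f1, f2]
      ring
  obtain ⟨n, hn⟩ := Nat.exists_eq_succ_of_ne_zero hpc
  exact key n p c hn

lemma V_eq_pow {y : ℂ} (hy : y ≠ 0) (c : ℕ) : V y c = V y 1 ^ c := by
  induction c with
  | zero => simp [V_zero]
  | succ c ih =>
    have h1 := V_succ hy 0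
    rw [V_zero] at h1
    have h2 := V_succ hy c
    rw [pow_succ, ← ih, ← h2]
    linear_combination (-(V y (c+1))) * h1

/-- partial fractions for `V` -/
lemma V_parfrac {m N : ℂ} (hm : m ≠ 0) (hN : N ≠ 0) (hy : m + N ≠ 0) (p c k : ℕ)
    (hpc : p + c ≠ 0) :
    PowerSeries.coeff k (V (-m) p * V N c) =
      ∑ i ∈ range p, vco (m + N) c i * vco (-m) (p - i) k +
      ∑ i ∈ range c, vco (-(m + N)) p i * vco N (c - i) k := by
  have hm' : -m ≠ 0 := neg_ne_zero.mpr hm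
  have h1 := V_succ hm' 0
  have h2 := V_succ hN 0
  rw [V_zero] at h1 h2
  have := parfrac (V (-m) 1) (V N 1) hy (by
    have : algebraMap ℂ (PowerSeries ℂ) (m + N) = PowerSeries.C N - PowerSeries.C (-m) := by
      rw [← map_sub]
      show PowerSeries.C _ = _
      congr 1; ring
    rw [this]
    linear_combination (V (-m) 1) * h2 - (V N 1) * h1) p c hpc
  rw [V_eq_pow hm', V_eq_pow hN, this, map_add, map_sum, map_sum]
  congr 1 <;>
  · apply sum_congr rfl
    intro i _
    show PowerSeries.coeff k (PowerSeries.C _ * _) = _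
    rw [← V_eq_pow (by assumption), PowerSeries.coeff_C_mul, V, PowerSeries.coeff_mk]


lemma neg_pow_inv' (x : ℂ) (k : ℕ) : ((-x) ^ k)⁻¹ = (-1) ^ k * (x ^ k)⁻¹ := by
  rw [neg_pow, mul_inv, ← inv_pow, inv_neg_one]

open Filter Topology in
/-- symmetric summation over the integers -/
def SymSum (g : ℤ → ℂ) (A : ℂ) : Prop :=
  Tendsto (fun L : ℕ => ∑ l ∈ Icc (-(L : ℤ)) L, g l) atTop (𝓝 A)

lemma symIcc_succ (g : ℤ → ℂ) (L : ℕ) :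
    ∑ l ∈ Icc (-((L + 1 : ℕ) : ℤ)) ((L + 1 : ℕ) : ℤ), g l =
      ∑ l ∈ Icc (-(L : ℤ)) L, g l + g (L + 1) + g (-L - 1) := by
  have : Icc (-((L + 1 : ℕ) : ℤ)) ((L + 1 : ℕ) : ℤ) =
      insert ((L : ℤ) + 1) (insert (-(L : ℤ) - 1) (Icc (-(L : ℤ)) L)) := by
    ext l
    simp only [mem_Icc, mem_insert]
    push_cast
    omega
  rw [this, sum_insert, sum_insert]
  · ring
  · simp only [mem_Icc]; omega
  · simp only [mem_Icc, mem_insert]; omega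

lemma symIcc_shift (g : ℤ → ℂ) (L : ℕ) :
    ∑ l ∈ Icc (-(L : ℤ)) L, g (l - 1) = ∑ l ∈ Icc (-(L : ℤ)) L, g l - g L + g (-L - 1) := by
  induction L with
  | zero => simp
  | succ L ih =>
    rw [symIcc_succ, symIcc_succ, ih]
    push_cast
    have h1 : (L : ℤ) + 1 - 1 = L := by ring
    have h2 : -(L : ℤ) - 1 - 1 = -((L : ℤ) + 1) - 1 := by ring
    rw [h1, h2]
    ring

open Filter Topology in
lemma symSum_shift_one {g : ℤ → ℂ} (hg : Tendsto g cofinite (𝓝 0)) (A : ℂ) :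
    SymSum (fun l => g (l - 1)) A ↔ SymSum g A := by
  unfold SymSum
  simp only [symIcc_shift]
  have h1 : Tendsto (fun L : ℕ => g L) atTop (𝓝 0) := by
    rw [← Nat.cofinite_eq_atTop]
    exact hg.comp (Nat.cast_injective.tendsto_cofinite)
  have h2 : Tendsto (fun L : ℕ => g (-L - 1)) atTop (𝓝 0) := by
    rw [← Nat.cofinite_eq_atTop]
    refine hg.comp (Function.Injective.tendsto_cofinite (f := fun L : ℕ => (-(L:ℤ) - 1)) ?_)
    intro a b h
    simpa using h
  constructor
  · intro h
    have := (h.add h1).sub h2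
    simp only [add_zero, sub_zero] at this
    refine this.congr fun L => by ring
  · intro h
    have := (h.sub h1).add h2
    simpa using this

open Filter Topology in
lemma symSum_shift {g : ℤ → ℂ} (hg : Tendsto g cofinite (𝓝 0)) (A : ℂ) (x : ℤ) :
    SymSum (fun l => g (l - x)) A ↔ SymSum g A := by
  have hx : ∀ x : ℤ, Tendsto (fun l => g (l - x)) cofinite (𝓝 0) := fun x =>
    hg.comp (Function.Injective.tendsto_cofinite (f := fun l : ℤ => l - x) (sub_left_injective))
  induction x using Int.induction_on with
  | zero => simp
  | succ i ih =>
    refine Iff.trans ?_ ih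
    rw [← symSum_shift_one (hx i)]
    simp only [sub_sub, add_comm]
  | pred i ih =>
    refine Iff.trans ?_ ih
    rw [← symSum_shift_one (hx (-i - 1))]
    have : ∀ l : ℤ, l - 1 - (-(i:ℤ) - 1) = l - -i := fun l => by ring
    simp only [this]

open Filter Topology in
lemma altpow_decay (k : ℕ) (hk : 0 < k) :
    Tendsto (fun l : ℤ => (-1 : ℂ) ^ l * ((l : ℂ) ^ k)⁻¹) cofinite (𝓝 0) := by
  have h1 : Tendsto (fun l : ℤ => (l : ℝ)⁻¹) cofinite (𝓝 0) := by
    have h0 := Int.tendsto_coe_cofinite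
    rw [← Metric.cobounded_eq_cocompact] at h0
    exact (tendsto_inv₀_cobounded (α := ℝ)).comp h0
  have h2 := h1.pow k
  rw [zero_pow hk.ne'] at h2
  rw [tendsto_zero_iff_norm_tendsto_zero] at h2 ⊢
  refine h2.congr fun l => ?_
  simp [norm_zpow]

/-- generating series of `φ(2j)` -/
noncomputable def Phi : PowerSeries ℂ := PowerSeries.mk fun k => if Even k then phi k else 0

lemma phi_zero : phi 0 = -1 / 2 := by
  simp [phi, riemannZeta_zero]; norm_num

lemma hasSum_phi (k : ℕ) (hk : 1 < k) :
    HasSum (fun n : ℕ => (-1 : ℂ) ^ (n + 1) * (((n + 1 : ℕ) : ℂ) ^ k)⁻¹) (phi k) := by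
  have hk1 : (k : ℂ) ≠ 1 := by exact_mod_cast hk.ne'
  have hsum : Summable (fun n : ℕ => ((n : ℂ) ^ k)⁻¹) := by
    apply Summable.of_norm
    simpa using (Real.summable_nat_pow_inv (p := k)).mpr hk
  have hz : HasSum (fun n : ℕ => ((n : ℂ) ^ k)⁻¹) (riemannZeta k) := by
    rw [zeta_nat_eq_tsum_of_gt_one hk]
    simpa using hsum.hasSum
  have he : HasSum (fun n : ℕ => (((2 * n : ℕ) : ℂ) ^ k)⁻¹) ((2 ^ k)⁻¹ * riemannZeta k) := by
    refine (hz.mul_left ((2 ^ k)⁻¹ : ℂ)).congr_fun ?_ 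
    intro n; push_cast; rw [mul_pow, mul_inv]
  have ho' : Summable (fun n : ℕ => (((2 * n + 1 : ℕ) : ℂ) ^ k)⁻¹) :=
    hsum.comp_injective (i := fun n => 2 * n + 1) (fun a b h => by simpa using h)
  have ho : HasSum (fun n : ℕ => (((2 * n + 1 : ℕ) : ℂ) ^ k)⁻¹)
      (riemannZeta k - (2 ^ k)⁻¹ * riemannZeta k) := by
    have h1 := (he.even_add_odd (f := fun n : ℕ => ((n : ℂ) ^ k)⁻¹) ho'.hasSum).unique hz
    rw [← eq_sub_iff_add_eq'] at h1
    rw [← h1]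
    exact ho'.hasSum
  have hall : HasSum (fun n : ℕ => (-1 : ℂ) ^ n * ((n : ℂ) ^ k)⁻¹) (phi k) := by
    have : phi k = (2 ^ k)⁻¹ * riemannZeta k + -(riemannZeta k - (2 ^ k)⁻¹ * riemannZeta k) := by
      rw [phi, if_neg hk1, cpow_sub _ _ two_ne_zero, cpow_one, cpow_natCast]
      ring
    rw [this]
    refine HasSum.even_add_odd ?_ ?_
    · refine he.congr_fun fun n => ?_
      simp
    · refine ho.neg.congr_fun fun n => ?_
      simp [pow_succ]
  have := (hasSum_nat_add_iff' 1).mpr hall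
  simpa [show k ≠ 0 by omega] using this

lemma symSum_altpow (k : ℕ) (hk : 0 < k) :
    SymSum (fun l : ℤ => (-1 : ℂ) ^ l * ((l : ℂ) ^ k)⁻¹) (2 * PowerSeries.coeff k Phi) := by
  have key : ∀ L : ℕ, ∑ l ∈ Icc (-(L : ℤ)) L, (-1 : ℂ) ^ l * ((l : ℂ) ^ k)⁻¹ =
      (1 + (-1) ^ k) * ∑ n ∈ range L, (-1 : ℂ) ^ (n + 1) * (((n + 1 : ℕ) : ℂ) ^ k)⁻¹ := by
    intro L
    induction L with
    | zero => simp [hk.ne']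
    | succ L ih =>
      rw [symIcc_succ, ih, sum_range_succ]
      have h1 : -(L:ℤ) - 1 = -((L + 1 : ℕ) : ℤ) := by push_cast; ring
      have h2 : (L : ℤ) + 1 = ((L + 1 : ℕ) : ℤ) := by push_cast; ring
      rw [h1, h2, zpow_neg, zpow_natCast, Int.cast_neg, Int.cast_natCast, neg_pow_inv' (((L + 1 : ℕ) : ℂ)),
        ← inv_pow (-1 : ℂ), inv_neg_one]
      ring
  unfold SymSum
  simp only [key]
  rw [Phi, PowerSeries.coeff_mk]
  split_ifs with h
  · have hk2 : 1 < k := by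
      obtain ⟨r, hr⟩ := h
      omega
    have := ((hasSum_phi k hk2).tendsto_sum_nat).const_mul (2 : ℂ)
    rw [h.neg_one_pow]
    norm_num at this ⊢
    exact this
  · rw [Nat.not_even_iff_odd] at h
    simp [h.neg_one_pow]


/-- summand with three poles -/
noncomputable def Hf (x y z : ℤ) (p a c : ℕ) (l : ℤ) : ℂ :=
  if l = x ∨ l = y ∨ l = z then 0 else
    (-1 : ℂ) ^ l * (((l : ℂ) - x) ^ p)⁻¹ * (((l : ℂ) - y) ^ a)⁻¹ * (((l : ℂ) - z) ^ c)⁻¹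

/-- local contribution of a pole -/
noncomputable def Kl (x y z : ℤ) (p a c : ℕ) : ℂ :=
  (-1 : ℂ) ^ x * PowerSeries.coeff p (Phi * (V ((x : ℂ) - y) a * V ((x : ℂ) - z) c))

/-- value of the inner sum -/
noncomputable def Kf (x y z : ℤ) (p a c : ℕ) : ℂ :=
  2 * (Kl x y z p a c + Kl y x z a p c + Kl z x y c p a)

lemma Kl_swap (x y z : ℤ) (p a c : ℕ) : Kl x y z p a c = Kl x z y p c a := by
  unfold Kl; rw [mul_comm (V _ _)]

lemma Kf_swap (x y z : ℤ) (p a c : ℕ) : Kf x y z p a c = Kf y x z a p c := by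
  unfold Kf; rw [Kl_swap z x y]; ring

lemma Kf_rot (x y z : ℤ) (p a c : ℕ) : Kf x y z p a c = Kf y z x a c p := by
  unfold Kf; rw [Kl_swap y x z, Kl_swap z x y]; ring

lemma Hf_swap (x y z : ℤ) (p a c : ℕ) : Hf x y z p a c = Hf y x z a p c := by
  funext l
  unfold Hf
  have : (l = x ∨ l = y ∨ l = z) ↔ (l = y ∨ l = x ∨ l = z) := by tauto
  simp only [this]
  split_ifs <;> ring

lemma Hf_rot (x y z : ℤ) (p a c : ℕ) : Hf x y z p a c = Hf y z x a c p := by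
  funext l
  unfold Hf
  have : (l = x ∨ l = y ∨ l = z) ↔ (l = y ∨ l = z ∨ l = x) := by tauto
  simp only [this]
  split_ifs <;> ring

lemma Hf_rec (x y z : ℤ) (p a c : ℕ) (l : ℤ) :
    ((x : ℂ) - y) * Hf x y z (p + 1) (a + 1) c l =
      Hf x y z (p + 1) a c l - Hf x y z p (a + 1) c l := by
  unfold Hf
  split_ifs with h
  · simp
  · push Not at h
    have hx : (l : ℂ) - x ≠ 0 := sub_ne_zero.mpr (by exact_mod_cast h.1)
    have hy : (l : ℂ) - y ≠ 0 := sub_ne_zero.mpr (by exact_mod_cast h.2.1)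
    have hz : (l : ℂ) - z ≠ 0 := sub_ne_zero.mpr (by exact_mod_cast h.2.2)
    have e : ∀ (u : ℂ) (k : ℕ), u ≠ 0 → (u ^ k)⁻¹ = u * (u ^ (k + 1))⁻¹ := by
      intro u k hu
      field_simp
      ring
    rw [e _ a hy, e _ p hx]
    ring

lemma Kl_rec1 (x y z : ℤ) (hxy : x ≠ y) (p a c : ℕ) :
    ((x : ℂ) - y) * Kl x y z (p + 1) (a + 1) c =
      Kl x y z (p + 1) a c - Kl x y z p (a + 1) c := by
  have hxy' : (x : ℂ) - y ≠ 0 := sub_ne_zero.mpr (by exact_mod_cast hxy)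
  unfold Kl
  rw [← V_succ hxy' a]
  have : Phi * ((PowerSeries.C ((x : ℂ) - y) + PowerSeries.X) * V ((x : ℂ) - y) (a + 1) *
      V ((x : ℂ) - z) c) = PowerSeries.C ((x : ℂ) - y) * (Phi * (V ((x : ℂ) - y) (a + 1) *
      V ((x : ℂ) - z) c)) + PowerSeries.X * (Phi * (V ((x : ℂ) - y) (a + 1) *
      V ((x : ℂ) - z) c)) := by ring
  rw [this, map_add, PowerSeries.coeff_C_mul, PowerSeries.coeff_succ_X_mul]
  ring

lemma Kl_rec2 (x y z : ℤ) (hzx : z ≠ x) (hzy : z ≠ y) (p a c : ℕ) :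
    ((x : ℂ) - y) * Kl z x y c (p + 1) (a + 1) =
      Kl z x y c (p + 1) a - Kl z x y c p (a + 1) := by
  have hx : (z : ℂ) - x ≠ 0 := sub_ne_zero.mpr (by exact_mod_cast hzx)
  have hy : (z : ℂ) - y ≠ 0 := sub_ne_zero.mpr (by exact_mod_cast hzy)
  unfold Kl
  rw [← V_succ hx p, ← V_succ hy a]
  rw [mul_left_comm, ← PowerSeries.coeff_C_mul, ← mul_sub, ← map_sub]
  congr 2
  have : (PowerSeries.C ((x : ℂ) - y) : PowerSeries ℂ) =
    PowerSeries.C ((z : ℂ) - y) - PowerSeries.C ((z : ℂ) - x) := by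
    rw [← map_sub]; congr 1; ring
  rw [this]
  ring

lemma Kf_rec (x y z : ℤ) (hxy : x ≠ y) (hxz : x ≠ z) (hyz : y ≠ z) (p a c : ℕ) :
    ((x : ℂ) - y) * Kf x y z (p + 1) (a + 1) c =
      Kf x y z (p + 1) a c - Kf x y z p (a + 1) c := by
  unfold Kf
  have h1 := Kl_rec1 x y z hxy p a c
  have h2 := Kl_rec1 y x z hxy.symm a p c
  have h3 := Kl_rec2 x y z hxz.symm hyz.symm p a c
  linear_combination 2 * h1 - 2 * h2 + 2 * h3

lemma coeff_zero_Phi_V (u v : ℂ) (a : ℕ) :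
    PowerSeries.coeff 0 (Phi * (V u a * V v 0)) = -1 / 2 * (u ^ a)⁻¹ := by
  simp [Phi, V, vco, phi_zero]

lemma Kf_base (x y z : ℤ) (p : ℕ) :
    Kf x y z p 0 0 = (-1 : ℂ) ^ x * (2 * PowerSeries.coeff p Phi)
      - (-1 : ℂ) ^ y * (((y : ℂ) - x) ^ p)⁻¹ - (-1 : ℂ) ^ z * (((z : ℂ) - x) ^ p)⁻¹ := by
  unfold Kf Kl
  rw [coeff_zero_Phi_V, coeff_zero_Phi_V, V_zero, V_zero, mul_one, mul_one]
  ring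

open Filter Topology in
lemma symSum_single (x : ℤ) (v : ℂ) : SymSum (fun l => if l = x then v else 0) v := by
  unfold SymSum
  refine tendsto_const_nhds.congr' ?_
  filter_upwards [eventually_ge_atTop x.natAbs] with L hL
  rw [sum_ite_eq' _ x, if_pos]
  simp only [mem_Icc]
  omega

lemma symSum_base (x y z : ℤ) (hxy : x ≠ y) (hxz : x ≠ z) (hyz : y ≠ z) (p : ℕ) (hp : 0 < p) :
    SymSum (Hf x y z p 0 0) (Kf x y z p 0 0) := by
  rw [Kf_base]
  have h1 := (symSum_shift (altpow_decay p hp) _ x).mpr (symSum_altpow p hp)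
  have h2 := symSum_single y ((-1 : ℂ) ^ y * (((y : ℂ) - x) ^ p)⁻¹)
  have h3 := symSum_single z ((-1 : ℂ) ^ z * (((z : ℂ) - x) ^ p)⁻¹)
  unfold SymSum at *
  refine (((h1.const_mul ((-1 : ℂ) ^ x)).sub h2).sub h3).congr fun L => ?_
  rw [mul_sum, ← sum_sub_distrib, ← sum_sub_distrib]
  apply sum_congr rfl
  intro l _
  unfold Hf
  have hs : (-1 : ℂ) ^ x * (-1 : ℂ) ^ (l - x) = (-1 : ℂ) ^ l := by
    rw [← zpow_add₀ (by norm_num)]; congr 1; ring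
  rw [← mul_assoc, hs]
  by_cases hlx : l = x
  · subst hlx
    simp [hp.ne', hxy, hxz]
  by_cases hly : l = y
  · subst hly
    simp [hyz]
  by_cases hlz : l = z
  · subst hlz
    simp [hyz.symm]
  simp [hlx, hly, hlz]

lemma symSum_rec (x y z : ℤ) (hxy : x ≠ y) (hxz : x ≠ z) (hyz : y ≠ z) (p a c : ℕ)
    (h1 : SymSum (Hf x y z (p + 1) a c) (Kf x y z (p + 1) a c))
    (h2 : SymSum (Hf x y z p (a + 1) c) (Kf x y z p (a + 1) c)) :
    SymSum (Hf x y z (p + 1) (a + 1) c) (Kf x y z (p + 1) (a + 1) c) := by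
  have hxy' : (x : ℂ) - y ≠ 0 := sub_ne_zero.mpr (by exact_mod_cast hxy)
  unfold SymSum at *
  have e : Kf x y z (p + 1) (a + 1) c = ((x : ℂ) - y)⁻¹ *
      (Kf x y z (p + 1) a c - Kf x y z p (a + 1) c) := by
    rw [← Kf_rec x y z hxy hxz hyz, inv_mul_cancel_left₀ hxy']
  rw [e]
  refine ((h1.sub h2).const_mul (((x : ℂ) - y)⁻¹)).congr fun L => ?_
  rw [← sum_sub_distrib, mul_sum]
  apply sum_congr rfl
  intro l _
  rw [← Hf_rec, inv_mul_cancel_left₀ hxy']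

lemma symSum_main (n : ℕ) : ∀ (x y z : ℤ), x ≠ y → x ≠ z → y ≠ z → ∀ p a c : ℕ,
    p + a + c = n + 1 → SymSum (Hf x y z p a c) (Kf x y z p a c) := by
  induction n with
  | zero =>
    intro x y z hxy hxz hyz p a c h
    by_cases hp : p = 1
    · obtain rfl : a = 0 := by omega
      obtain rfl : c = 0 := by omega
      exact symSum_base x y z hxy hxz hyz p (by omega)
    by_cases ha : a = 1
    · obtain rfl : p = 0 := by omega
      obtain rfl : c = 0 := by omega
      rw [Hf_rot, Kf_rot]
      exact symSum_base y z x hyz hxy.symm hxz.symm a (by omega)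
    · obtain rfl : p = 0 := by omega
      obtain rfl : a = 0 := by omega
      rw [Hf_rot, Kf_rot, Hf_rot, Kf_rot]
      exact symSum_base z x y hxz.symm hyz.symm hxy c (by omega)
  | succ n ih =>
    have two : ∀ (x y z : ℤ), x ≠ y → x ≠ z → y ≠ z → ∀ p a c : ℕ,
        p + 1 + (a + 1) + c = n + 1 + 1 →
        SymSum (Hf x y z (p + 1) (a + 1) c) (Kf x y z (p + 1) (a + 1) c) := by
      intro x y z hxy hxz hyz p a c h
      exact symSum_rec x y z hxy hxz hyz p a c
        (ih x y z hxy hxz hyz _ _ _ (by omega)) (ih x y z hxy hxz hyz _ _ _ (by omega))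
    intro x y z hxy hxz hyz p a c h
    rcases p with _ | p
    · rcases a with _ | a
      · rw [Hf_rot, Kf_rot, Hf_rot, Kf_rot]
        exact symSum_base z x y hxz.symm hyz.symm hxy c (by omega)
      · rcases c with _ | c
        · rw [Hf_rot, Kf_rot]
          exact symSum_base y z x hyz hxy.symm hxz.symm _ (by omega)
        · rw [Hf_rot, Kf_rot]
          exact two y z x hyz hxy.symm hxz.symm a c 0 (by omega)
    · rcases a with _ | a
      · rcases c with _ | c
        · exact symSum_base x y z hxy hxz hyz _ (by omega)
        · rw [Hf_rot, Kf_rot, Hf_rot, Kf_rot]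
          exact two z x y hxz.symm hyz.symm hxy c p 0 (by omega)
      · exact two x y z hxy hxz hyz p a c (by omega)

lemma tsum_of_symSum {g : ℤ → ℂ} {A : ℂ} (hg : Summable g) (h : SymSum g A) : ∑' l, g l = A :=
  tendsto_nhds_unique (hg.hasSum.comp tendsto_Icc_neg) h


/-- the full summand -/
noncomputable def Ft (p q a b c : ℕ) (s : ℂ) (l m : ℤ) (n : ℕ) : ℂ :=
  (-1 : ℂ) ^ l * (-1 : ℂ) ^ (n + 1) * ((l : ℂ) ^ p)⁻¹ * ((m : ℂ) ^ q)⁻¹ *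
    ((((n + 1 : ℕ) : ℂ)) ^ s)⁻¹ * (((l + m : ℤ) : ℂ) ^ a)⁻¹ *
    (((m + (n + 1) : ℤ) : ℂ) ^ b)⁻¹ * (((l + m + (n + 1) : ℤ) : ℂ) ^ c)⁻¹

lemma norm_int_pow_inv_le (x : ℤ) (p : ℕ) (hp : 0 < p) : ‖((x : ℂ) ^ p)⁻¹‖ ≤ |(x : ℝ)|⁻¹ := by
  by_cases hx : x = 0
  · subst hx; simp [hp.ne']
  have h1 : (1 : ℝ) ≤ |(x : ℝ)| := by exact_mod_cast Int.one_le_abs hx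
  rw [norm_inv, norm_pow, Complex.norm_intCast]
  apply inv_anti₀ (by linarith)
  exact le_self_pow₀ h1 hp.ne'

lemma abs_int_inv_le (x : ℤ) : |(x : ℝ)|⁻¹ ≤ 1 := by
  by_cases hx : x = 0
  · subst hx; simp
  have h1 : (1 : ℝ) ≤ |(x : ℝ)| := by exact_mod_cast Int.one_le_abs hx
  exact inv_le_one_of_one_le₀ h1

/-- `x⁻²` -/
noncomputable def hR (x : ℤ) : ℝ := ((x : ℝ) ^ 2)⁻¹

lemma hR_nonneg (x : ℤ) : 0 ≤ hR x := by unfold hR; positivity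

lemma hR_summable : Summable hR := by
  have := (Real.summable_one_div_int_pow (p := 2)).mpr (by norm_num)
  exact this.congr fun n => by simp [hR]

lemma inv_mul_inv_le (x y : ℤ) : |(x : ℝ)|⁻¹ * |(y : ℝ)|⁻¹ ≤ hR x + hR y := by
  have hx : hR x = (|(x : ℝ)|⁻¹) ^ 2 := by simp [hR]
  have hy : hR y = (|(y : ℝ)|⁻¹) ^ 2 := by simp [hR]
  rw [hx, hy]
  nlinarith [sq_nonneg (|(x : ℝ)|⁻¹ - |(y : ℝ)|⁻¹), sq_nonneg (|(x : ℝ)|⁻¹ + |(y : ℝ)|⁻¹)]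

lemma wn_summable (s : ℂ) (hs : 1 < s.re) :
    Summable (fun n : ℕ => ‖((((n + 1 : ℕ) : ℂ)) ^ s)⁻¹‖) := by
  have h := (Real.summable_nat_rpow_inv (p := s.re)).mpr hs
  have h2 := (summable_nat_add_iff 1).mpr h
  refine h2.congr fun n => ?_
  rw [norm_inv, Complex.norm_natCast_cpow_of_pos (Nat.succ_pos n)]

lemma sum2_summable (s : ℂ) (hs : 1 < s.re) :
    Summable (fun t : ℤ × ℕ => hR t.1 * ‖((((t.2 + 1 : ℕ) : ℂ)) ^ s)⁻¹‖) :=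
  hR_summable.mul_of_nonneg (wn_summable s hs) hR_nonneg (fun _ => norm_nonneg _)

lemma sum3_summable (s : ℂ) (hs : 1 < s.re) :
    Summable (fun t : (ℤ × ℕ) × ℤ => (hR t.1.1 * ‖((((t.1.2 + 1 : ℕ) : ℂ)) ^ s)⁻¹‖) * hR t.2) :=
  (sum2_summable s hs).mul_of_nonneg hR_summable
    (fun _ => mul_nonneg (hR_nonneg _) (norm_nonneg _)) hR_nonneg

lemma Ft_summable (p q a b c : ℕ) (hp : 0 < p) (hq : 0 < q) (ha : 0 < a)
    (hb : 0 < b) (hc : 0 < c) (s : ℂ) (hs : 1 < s.re) :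
    Summable (fun t : (ℤ × ℕ) × ℤ => Ft p q a b c s t.2 t.1.1 t.1.2) := by
  have h0 := sum3_summable s hs
  have h1 := h0.comp_injective (i := fun t : (ℤ × ℕ) × ℤ => ((t.1.1, t.1.2), t.2 + t.1.1)) (by
    rintro ⟨⟨x, y⟩, z⟩ ⟨⟨x', y'⟩, z'⟩ h
    simp only [Prod.mk.injEq] at h ⊢
    omega)
  have h2 := h0.comp_injective
    (i := fun t : (ℤ × ℕ) × ℤ => ((t.1.1 + (t.1.2 + 1), t.1.2), t.2)) (by
    rintro ⟨⟨x, y⟩, z⟩ ⟨⟨x', y'⟩, z'⟩ h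
    simp only [Prod.mk.injEq] at h ⊢
    omega)
  have h3 := h0.comp_injective
    (i := fun t : (ℤ × ℕ) × ℤ => ((t.1.1 + (t.1.2 + 1), t.1.2), t.2 + t.1.1)) (by
    rintro ⟨⟨x, y⟩, z⟩ ⟨⟨x', y'⟩, z'⟩ h
    simp only [Prod.mk.injEq] at h ⊢
    omega)
  refine Summable.of_norm_bounded (((h0.add h1).add h2).add h3) ?_
  rintro ⟨⟨m, n⟩, l⟩
  simp only [Function.comp, Ft, norm_mul, norm_zpow, norm_pow, norm_neg, norm_one, one_zpow,
    one_pow, one_mul]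
  have e1 := norm_int_pow_inv_le l p hp
  have e2 := norm_int_pow_inv_le m q hq
  have e3 := norm_int_pow_inv_le (l + m) a ha
  have e4 := norm_int_pow_inv_le (m + (n + 1)) b hb
  have e5 := (norm_int_pow_inv_le (l + m + (n + 1)) c hc).trans (abs_int_inv_le _)
  have f1 := inv_mul_inv_le l (l + m)
  have f2 := inv_mul_inv_le m (m + (n + 1))
  set w := ‖((((n + 1 : ℕ) : ℂ)) ^ s)⁻¹‖ with hw
  have hw0 : 0 ≤ w := norm_nonneg _
  have g1 : ‖((l : ℂ) ^ p)⁻¹‖ * ‖(((l + m : ℤ) : ℂ) ^ a)⁻¹‖ ≤ hR l + hR (l + m) :=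
    (mul_le_mul e1 e3 (norm_nonneg _) (by positivity)).trans f1
  have g2 : ‖((m : ℂ) ^ q)⁻¹‖ * ‖(((m + (n + 1) : ℤ) : ℂ) ^ b)⁻¹‖ ≤ hR m + hR (m + (n + 1)) :=
    (mul_le_mul e2 e4 (norm_nonneg _) (by positivity)).trans f2
  have g3 := mul_le_mul g1 g2 (by positivity) (add_nonneg (hR_nonneg _) (hR_nonneg _))
  have g4 := mul_le_mul (mul_le_mul_of_nonneg_right g3 hw0) e5 (norm_nonneg _)
    (mul_nonneg (mul_nonneg (add_nonneg (hR_nonneg _) (hR_nonneg _))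
      (add_nonneg (hR_nonneg _) (hR_nonneg _))) hw0)
  refine le_trans (le_of_eq ?_) (g4.trans (le_of_eq ?_)) <;> ring

lemma Ft_tsum_inner (p q a b c : ℕ) (hp : 0 < p) (hq : 0 < q) (ha : 0 < a)
    (hb : 0 < b) (hc : 0 < c) (s : ℂ) (hs : 1 < s.re) (m : ℤ) (n : ℕ) :
    ∑' l : ℤ, Ft p q a b c s l m n =
      ((-1 : ℂ) ^ (n + 1) * ((m : ℂ) ^ q)⁻¹ * ((((n + 1 : ℕ) : ℂ)) ^ s)⁻¹ *
        (((m + (n + 1) : ℤ) : ℂ) ^ b)⁻¹) * Kf 0 (-m) (-(m + (n + 1))) p a c := by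
  by_cases hm : m = 0
  · subst hm; simp [Ft, hq.ne']
  by_cases hmn : m + (n + 1) = 0
  · simp [Ft, hmn, hb.ne']
  have hsum : Summable (fun l : ℤ => Ft p q a b c s l m n) :=
    (Ft_summable p q a b c hp hq ha hb hc s hs).comp_injective
      (i := fun l : ℤ => ((m, n), l)) (fun x y h => by simpa using h)
  have hK := symSum_main (p + a + c - 1) 0 (-m) (-(m + (n + 1))) (by omega) (by omega) (by omega)
    p a c (by omega)
  apply tsum_of_symSum hsum
  unfold SymSum at *
  refine (hK.const_mul _).congr fun L => ?_
  rw [mul_sum]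
  apply sum_congr rfl
  intro l _
  unfold Hf Ft
  split_ifs with h
  · rcases h with rfl | rfl | rfl
    · simp [hp.ne']
    · simp [ha.ne']
    · simp [hc.ne']
  · have h1 : ((l : ℂ) - (0 : ℤ)) = l := by simp
    have h2 : ((l : ℂ) - ((-m : ℤ) : ℂ)) = ((l + m : ℤ) : ℂ) := by push_cast; ring
    have h3 : ((l : ℂ) - ((-(m + (n + 1)) : ℤ) : ℂ)) = ((l + m + (n + 1) : ℤ) : ℂ) := by
      push_cast; ring
    rw [h1, h2, h3]
    ring


lemma sgn_pow_inv (e A p : ℕ) (x : ℤ) (h : x = (-1) ^ e * (A : ℤ)) :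
    ((x : ℂ) ^ p)⁻¹ = (-1) ^ (e * p) * ((A : ℂ) ^ (p : ℂ))⁻¹ := by
  rw [h, cpow_natCast]
  push_cast
  rw [mul_pow, mul_inv, ← pow_mul, ← inv_pow, inv_neg_one]

lemma sgn_parity (l k : ℤ) (n K : ℕ) (h : l + n = K + 2 * k) :
    (-1 : ℂ) ^ l * (-1 : ℂ) ^ n = (-1) ^ K := by
  rw [← zpow_natCast, ← zpow_add₀ (by norm_num), h, zpow_add₀ (by norm_num), zpow_mul]
  simp

lemma Ft_eq (p q a b c : ℕ) (s : ℂ) (l m : ℤ) (n : ℕ) (e1 e2 e3 e4 e5 : ℕ)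
    (A1 A2 A3 A4 A5 A6 K : ℕ) (k : ℤ) (h1 : l = (-1) ^ e1 * (A1 : ℤ)) (h2 : m = (-1) ^ e2 * (A2 : ℤ))
    (h3 : l + m = (-1) ^ e3 * (A3 : ℤ)) (h4 : m + (n + 1) = (-1) ^ e4 * (A4 : ℤ))
    (h5 : l + m + (n + 1) = (-1) ^ e5 * (A5 : ℤ)) (h6 : n + 1 = A6)
    (hK : l + ((n + 1 : ℕ) : ℤ) = K + 2 * k) :
    Ft p q a b c s l m n = (-1) ^ (e1 * p + e2 * q + e3 * a + e4 * b + e5 * c) *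
      ((-1) ^ K * ((A1 : ℂ) ^ (p : ℂ))⁻¹ * ((A2 : ℂ) ^ (q : ℂ))⁻¹ * ((A6 : ℂ) ^ s)⁻¹ *
      ((A3 : ℂ) ^ (a : ℂ))⁻¹ * ((A4 : ℂ) ^ (b : ℂ))⁻¹ * ((A5 : ℂ) ^ (c : ℂ))⁻¹) := by
  unfold Ft
  rw [sgn_parity l k (n + 1) K hK, sgn_pow_inv e1 A1 p l h1, sgn_pow_inv e2 A2 q m h2,
    sgn_pow_inv e3 A3 a _ h3, sgn_pow_inv e4 A4 b _ h4, sgn_pow_inv e5 A5 c _ h5, h6]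
  simp only [pow_add]
  ring

/-- the twelve chambers -/
def cham (i : Fin 12) (t : ℕ × ℕ × ℕ) : (ℤ × ℕ) × ℤ :=
  match t with
  | (x, y, z) =>
    (![((y + 1, z), x + 1),
      ((x + 1 + (y + 1), z), -(x + 1)),
      ((x + 1, y + z + 1), -(x + 1 + (y + 1))),
      ((x + 1, y), -(x + 1 + (y + 1) + (z + 1))),
      ((-(y + 1), y + z + 1), x + 1 + (y + 1)),
      ((-(y + 1 + (z + 1)), y), x + 1 + (y + 1) + (z + 1)),
      ((-(x + 1 + (y + 1)), x + y + z + 2), y + 1),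
      ((-(x + 1 + (y + 1) + (z + 1)), x + y + 1), y + 1 + (z + 1)),
      ((-(x + 1 + (y + 1) + (z + 1)), x), z + 1),
      ((-(x + 1), x + y + z + 2), -(y + 1)),
      ((-(x + 1), x + y + 1), -(y + 1 + (z + 1))),
      ((-(x + 1 + (y + 1)), x), -(z + 1))] : Fin 12 → (ℤ × ℕ) × ℤ) i

/-- all chambers together -/
def chamAll (u : Fin 12 × (ℕ × ℕ × ℕ)) : (ℤ × ℕ) × ℤ := cham u.1 u.2

set_option maxHeartbeats 4000000 in
lemma chamAll_injective : Function.Injective chamAll := by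
  rintro ⟨i, x, y, z⟩ ⟨i', x', y', z'⟩ h
  simp only [chamAll, cham] at h
  fin_cases i <;> fin_cases i' <;>
    simp only [Prod.mk.injEq, Fin.zero_eta, Fin.mk_one, Fin.reduceFinMk, Matrix.cons_val,
      Matrix.cons_val_zero, Matrix.cons_val_one, true_and] at h ⊢ <;> first | (exfalso; omega) | omega

set_option maxHeartbeats 4000000 in
lemma chamAll_range (l m : ℤ) (n : ℕ) (h1 : l ≠ 0) (h2 : m ≠ 0) (h3 : l + m ≠ 0)
    (h4 : m + (n + 1) ≠ 0) (h5 : l + m + (n + 1) ≠ 0) : ((m, n), l) ∈ Set.range chamAll := by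
  have key : ∀ (i : Fin 12) (x y z : ℕ), cham i (x, y, z) = ((m, n), l) →
      ((m, n), l) ∈ Set.range chamAll := fun i x y z h => ⟨(i, x, y, z), h⟩
  have hn : (0 : ℤ) ≤ n := Int.natCast_nonneg n
  rcases lt_or_gt_of_ne h1 with h1 | h1 <;> rcases lt_or_gt_of_ne h2 with h2 | h2 <;>
  rcases lt_or_gt_of_ne h3 with h3 | h3 <;> rcases lt_or_gt_of_ne h4 with h4 | h4 <;>
  rcases lt_or_gt_of_ne h5 with h5 | h5 <;>
  first
  | (exfalso; omega)
  | (refine key 0 (l - 1).toNat (m - 1).toNat n ?_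
     simp [cham]; omega)
  | (refine key 1 (-l - 1).toNat (l + m - 1).toNat n ?_
     simp [cham]; omega)
  | (refine key 2 (m - 1).toNat (-(l + m) - 1).toNat (l + m + n).toNat ?_
     simp [cham]; omega)
  | (refine key 3 (m - 1).toNat n (-(l + m + (n + 1)) - 1).toNat ?_
     simp [cham]; omega)
  | (refine key 4 (l + m - 1).toNat (-m - 1).toNat (m + n).toNat ?_
     simp [cham]; omega)
  | (refine key 5 (l + m - 1).toNat n (-(m + (n + 1)) - 1).toNat ?_
     simp [cham]; omega)
  | (refine key 6 (-(l + m) - 1).toNat (l - 1).toNat (m + n).toNat ?_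
     simp [cham]; omega)
  | (refine key 7 (-(l + m) - 1).toNat (l + m + n).toNat (-(m + (n + 1)) - 1).toNat ?_
     simp [cham]; omega)
  | (refine key 8 n (-(l + m + (n + 1)) - 1).toNat (l - 1).toNat ?_
     simp [cham]; omega)
  | (refine key 9 (-m - 1).toNat (-l - 1).toNat (l + m + n).toNat ?_
     simp [cham]; omega)
  | (refine key 10 (-m - 1).toNat (m + n).toNat (-(l + m + (n + 1)) - 1).toNat ?_
     simp [cham]; omega)
  | (refine key 11 n (-(m + (n + 1)) - 1).toNat (-l - 1).toNat ?_
     simp [cham]; omega)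

lemma Ft_tsum_chambers (p q a b c : ℕ) (hp : 0 < p) (hq : 0 < q) (ha : 0 < a)
    (hb : 0 < b) (hc : 0 < c) (s : ℂ) (hs : 1 < s.re) :
    ∑' t : (ℤ × ℕ) × ℤ, Ft p q a b c s t.2 t.1.1 t.1.2 =
      ∑ i : Fin 12, ∑' t : ℕ × ℕ × ℕ,
        Ft p q a b c s (cham i t).2 (cham i t).1.1 (cham i t).1.2 := by
  have hsum := Ft_summable p q a b c hp hq ha hb hc s hs
  rw [← chamAll_injective.tsum_eq]
  · have hsum' := hsum.comp_injective chamAll_injective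
    have := hsum'.tsum_prod
    simp only [Function.comp_def] at this
    rw [this, tsum_fintype]
    rfl
  · rintro ⟨⟨m, n⟩, l⟩ h
    rw [Function.mem_support] at h
    apply chamAll_range
    · rintro rfl
      exact h (by simp [Ft, hp.ne'])
    · rintro rfl
      exact h (by simp [Ft, hq.ne'])
    · intro h0
      exact h (by simp only [Ft]; rw [h0]; simp [ha.ne'])
    · intro h0
      exact h (by simp only [Ft]; rw [h0]; simp [hb.ne'])
    · intro h0
      exact h (by simp only [Ft]; rw [h0]; simp [hc.ne'])


lemma cham_tsum (p q a b c : ℕ) (s : ℂ) (s₁ s₂ s₃ s₄ s₅ s₆ : ℂ) (i : Fin 12) (E : ℕ)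
    (h : ∀ x y z : ℕ, Ft p q a b c s (cham i (x, y, z)).2 (cham i (x, y, z)).1.1
      (cham i (x, y, z)).1.2 = (-1) ^ E * ((-1) ^ (x + 1 + (z + 1)) *
        (((x + 1 : ℕ) : ℂ) ^ s₁)⁻¹ * (((y + 1 : ℕ) : ℂ) ^ s₂)⁻¹ * (((z + 1 : ℕ) : ℂ) ^ s₃)⁻¹ *
        (((x + 1 + (y + 1) : ℕ) : ℂ) ^ s₄)⁻¹ * (((y + 1 + (z + 1) : ℕ) : ℂ) ^ s₅)⁻¹ *
        (((x + 1 + (y + 1) + (z + 1) : ℕ) : ℂ) ^ s₆)⁻¹)) :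
    ∑' t : ℕ × ℕ × ℕ, Ft p q a b c s (cham i t).2 (cham i t).1.1 (cham i t).1.2 =
      (-1) ^ E * Zlam2 s₁ s₂ s₃ s₄ s₅ s₆ := by
  rw [Zlam2, Z3, ← tsum_mul_left]
  apply tsum_congr
  rintro ⟨x, y, z⟩
  rw [h]
  simp only [div_eq_mul_inv, mul_inv]
  ring

set_option maxHeartbeats 4000000 in
lemma Scomb_eq_tsum (p q a b c : ℕ) (hp : 0 < p) (hq : 0 < q) (ha : 0 < a)
    (hb : 0 < b) (hc : 0 < c) (s : ℂ) (hs : 1 < s.re) :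
    Scomb Zlam2 p q a b c s = ∑' t : (ℤ × ℕ) × ℤ, Ft p q a b c s t.2 t.1.1 t.1.2 := by
  rw [Ft_tsum_chambers p q a b c hp hq ha hb hc s hs]
  have h0 := cham_tsum p q a b c s p q s a b c 0 (0) (fun x y z => by
    rw [Ft_eq p q a b c s _ _ _ 0 0 0 0 0 (x + 1) (y + 1) (x + 1 + (y + 1)) (y + 1 + (z + 1)) (x + 1 + (y + 1) + (z + 1)) (z + 1) (x + 1 + (z + 1))
      ((0) * (x + 1) + (0) * (y + 1) + (0) * (z + 1))
      (by simp [cham]) (by simp [cham]) (by simp [cham]; try ring) (by simp [cham]; try ring)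
      (by simp [cham]; try ring) (by simp [cham]; try ring) (by simp [cham]; try ring)]
    simp only [zero_mul, one_mul, zero_add, add_zero]
    try ring)
  have h1 := cham_tsum p q a b c s p a s q c b 1 (p) (fun x y z => by
    rw [Ft_eq p q a b c s _ _ _ 1 0 0 0 0 (x + 1) (x + 1 + (y + 1)) (y + 1) (x + 1 + (y + 1) + (z + 1)) (y + 1 + (z + 1)) (z + 1) (x + 1 + (z + 1))
      ((-1) * (x + 1) + (0) * (y + 1) + (0) * (z + 1))
      (by simp [cham]) (by simp [cham]) (by simp [cham]; try ring) (by simp [cham]; try ring)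
      (by simp [cham]; try ring) (by simp [cham]; try ring) (by simp [cham]; try ring)]
    simp only [zero_mul, one_mul, zero_add, add_zero]
    try ring)
  have h2 := cham_tsum p q a b c s q a c p s b 2 (p + a) (fun x y z => by
    rw [Ft_eq p q a b c s _ _ _ 1 0 1 0 0 (x + 1 + (y + 1)) (x + 1) (y + 1) (x + 1 + (y + 1) + (z + 1)) (z + 1) (y + 1 + (z + 1)) (x + 1 + (z + 1))
      ((-1) * (x + 1) + (0) * (y + 1) + (0) * (z + 1))
      (by simp [cham]) (by simp [cham]) (by simp [cham]; try ring) (by simp [cham]; try ring)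
      (by simp [cham]; try ring) (by simp [cham]; try ring) (by simp [cham]; try ring)]
    simp only [zero_mul, one_mul, zero_add, add_zero]
    try ring)
  have h3 := cham_tsum p q a b c s q s c b a p 3 (p + a + c) (fun x y z => by
    rw [Ft_eq p q a b c s _ _ _ 1 0 1 0 1 (x + 1 + (y + 1) + (z + 1)) (x + 1) (y + 1 + (z + 1)) (x + 1 + (y + 1)) (z + 1) (y + 1) (x + 1 + (z + 1))
      ((-1) * (x + 1) + (0) * (y + 1) + (-1) * (z + 1))
      (by simp [cham]) (by simp [cham]) (by simp [cham]; try ring) (by simp [cham]; try ring)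
      (by simp [cham]; try ring) (by simp [cham]; try ring) (by simp [cham]; try ring)]
    simp only [zero_mul, one_mul, zero_add, add_zero]
    try ring)
  have h4 := cham_tsum p q a b c s a q b p s c 4 (q) (fun x y z => by
    rw [Ft_eq p q a b c s _ _ _ 0 1 0 0 0 (x + 1 + (y + 1)) (y + 1) (x + 1) (z + 1) (x + 1 + (y + 1) + (z + 1)) (y + 1 + (z + 1)) (x + 1 + (z + 1))
      ((0) * (x + 1) + (1) * (y + 1) + (0) * (z + 1))
      (by simp [cham]) (by simp [cham]) (by simp [cham]; try ring) (by simp [cham]; try ring)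
      (by simp [cham]; try ring) (by simp [cham]; try ring) (by simp [cham]; try ring)]
    simp only [zero_mul, one_mul, zero_add, add_zero]
    try ring)
  have h5 := cham_tsum p q a b c s a s b c q p 5 (q + b) (fun x y z => by
    rw [Ft_eq p q a b c s _ _ _ 0 1 0 1 0 (x + 1 + (y + 1) + (z + 1)) (y + 1 + (z + 1)) (x + 1) (z + 1) (x + 1 + (y + 1)) (y + 1) (x + 1 + (z + 1))
      ((0) * (x + 1) + (1) * (y + 1) + (0) * (z + 1))
      (by simp [cham]) (by simp [cham]) (by simp [cham]; try ring) (by simp [cham]; try ring)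
      (by simp [cham]; try ring) (by simp [cham]; try ring) (by simp [cham]; try ring)]
    simp only [zero_mul, one_mul, zero_add, add_zero]
    try ring)
  have h6 := cham_tsum p q a b c s a p b q c s 6 (q + a) (fun x y z => by
    rw [Ft_eq p q a b c s _ _ _ 0 1 1 0 0 (y + 1) (x + 1 + (y + 1)) (x + 1) (z + 1) (y + 1 + (z + 1)) (x + 1 + (y + 1) + (z + 1)) (x + 1 + (z + 1))
      ((0) * (x + 1) + (1) * (y + 1) + (0) * (z + 1))
      (by simp [cham]) (by simp [cham]) (by simp [cham]; try ring) (by simp [cham]; try ring)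
      (by simp [cham]; try ring) (by simp [cham]; try ring) (by simp [cham]; try ring)]
    simp only [zero_mul, one_mul, zero_add, add_zero]
    try ring)
  have h7 := cham_tsum p q a b c s a c b s p q 7 (q + a + b) (fun x y z => by
    rw [Ft_eq p q a b c s _ _ _ 0 1 1 1 0 (y + 1 + (z + 1)) (x + 1 + (y + 1) + (z + 1)) (x + 1) (z + 1) (y + 1) (x + 1 + (y + 1)) (x + 1 + (z + 1))
      ((0) * (x + 1) + (1) * (y + 1) + (0) * (z + 1))
      (by simp [cham]) (by simp [cham]) (by simp [cham]; try ring) (by simp [cham]; try ring)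
      (by simp [cham]; try ring) (by simp [cham]; try ring) (by simp [cham]; try ring)]
    simp only [zero_mul, one_mul, zero_add, add_zero]
    try ring)
  have h8 := cham_tsum p q a b c s s c p a b q 8 (q + a + b + c) (fun x y z => by
    rw [Ft_eq p q a b c s _ _ _ 0 1 1 1 1 (z + 1) (x + 1 + (y + 1) + (z + 1)) (x + 1 + (y + 1)) (y + 1 + (z + 1)) (y + 1) (x + 1) (x + 1 + (z + 1))
      ((0) * (x + 1) + (0) * (y + 1) + (0) * (z + 1))
      (by simp [cham]) (by simp [cham]) (by simp [cham]; try ring) (by simp [cham]; try ring)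
      (by simp [cham]; try ring) (by simp [cham]; try ring) (by simp [cham]; try ring)]
    simp only [zero_mul, one_mul, zero_add, add_zero]
    try ring)
  have h9 := cham_tsum p q a b c s q p c a b s 9 (p + q + a) (fun x y z => by
    rw [Ft_eq p q a b c s _ _ _ 1 1 1 0 0 (y + 1) (x + 1) (x + 1 + (y + 1)) (y + 1 + (z + 1)) (z + 1) (x + 1 + (y + 1) + (z + 1)) (x + 1 + (z + 1))
      ((0) * (x + 1) + (0) * (y + 1) + (0) * (z + 1))
      (by simp [cham]) (by simp [cham]) (by simp [cham]; try ring) (by simp [cham]; try ring)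
      (by simp [cham]; try ring) (by simp [cham]; try ring) (by simp [cham]; try ring)]
    simp only [zero_mul, one_mul, zero_add, add_zero]
    try ring)
  have h10 := cham_tsum p q a b c s q b c s p a 10 (p + q + a + c) (fun x y z => by
    rw [Ft_eq p q a b c s _ _ _ 1 1 1 0 1 (y + 1 + (z + 1)) (x + 1) (x + 1 + (y + 1) + (z + 1)) (y + 1) (z + 1) (x + 1 + (y + 1)) (x + 1 + (z + 1))
      ((0) * (x + 1) + (0) * (y + 1) + (-1) * (z + 1))
      (by simp [cham]) (by simp [cham]) (by simp [cham]; try ring) (by simp [cham]; try ring)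
      (by simp [cham]; try ring) (by simp [cham]; try ring) (by simp [cham]; try ring)]
    simp only [zero_mul, one_mul, zero_add, add_zero]
    try ring)
  have h11 := cham_tsum p q a b c s s b p q c a 11 (p + q + a + b + c) (fun x y z => by
    rw [Ft_eq p q a b c s _ _ _ 1 1 1 1 1 (z + 1) (x + 1 + (y + 1)) (x + 1 + (y + 1) + (z + 1)) (y + 1) (y + 1 + (z + 1)) (x + 1) (x + 1 + (z + 1))
      ((0) * (x + 1) + (0) * (y + 1) + (-1) * (z + 1))
      (by simp [cham]) (by simp [cham]) (by simp [cham]; try ring) (by simp [cham]; try ring)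
      (by simp [cham]; try ring) (by simp [cham]; try ring) (by simp [cham]; try ring)]
    simp only [zero_mul, one_mul, zero_add, add_zero]
    try ring)
  simp only [Fin.sum_univ_succ, Fin.sum_univ_zero]
  simp only [Fin.reduceSucc, Fin.succ_zero_eq_one, Fin.succ_one_eq_two]
  rw [h0, h1, h2, h3, h4, h5, h6, h7, h8, h9, h10, h11]
  unfold Scomb
  ring


/-- summand of `T` -/
noncomputable def Tt (p : ℕ) (s : ℂ) (q : ℕ) (x y : ℂ) (t : ℤ × ℕ) : ℂ :=
  x ^ t.1 * y ^ (t.2 + 1) * (((t.1 : ℂ) ^ p)⁻¹ * ((((t.2 + 1 : ℕ) : ℂ)) ^ s)⁻¹ *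
    (((t.1 + (t.2 + 1) : ℤ) : ℂ) ^ q)⁻¹)

lemma hasSum_T (p q : ℕ) (s : ℂ) (x y : ℂ) (hp : 0 < p) (hq : 0 < q) (hs : 1 < s.re)
    (hx : ‖x‖ = 1) (hy : ‖y‖ = 1) : HasSum (Tt p s q x y) (T p s q x y) := by
  have h0 := sum2_summable s hs
  have h1 := h0.comp_injective (i := fun t : ℤ × ℕ => (t.1 + (t.2 + 1), t.2)) (by
    rintro ⟨x, y⟩ ⟨x', y'⟩ h
    simp only [Prod.mk.injEq] at h ⊢
    omega)
  have hsum : Summable (Tt p s q x y) := by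
    refine Summable.of_norm_bounded (h0.add h1) ?_
    rintro ⟨m, n⟩
    simp only [Function.comp, Tt, norm_mul, norm_zpow, norm_pow, hx, hy, one_zpow, one_pow, one_mul]
    have e1 := norm_int_pow_inv_le m p hp
    have e2 := norm_int_pow_inv_le (m + (n + 1)) q hq
    have g := (mul_le_mul e1 e2 (norm_nonneg _) (by positivity)).trans (inv_mul_inv_le _ _)
    have g2 := mul_le_mul_of_nonneg_right g (norm_nonneg ((((n + 1 : ℕ) : ℂ)) ^ s)⁻¹)
    refine le_trans (le_of_eq ?_) (g2.trans (le_of_eq ?_)) <;> ring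
  have : T p s q x y = ∑' t, Tt p s q x y t := by
    unfold T
    apply tsum_congr
    rintro ⟨m, n⟩
    simp only [Tt, add_assoc]
    split_ifs with h
    · simp only [div_eq_mul_inv, mul_inv]
    · by_cases hm : m = 0
      · subst hm; simp [hp.ne']
      · have : m + ((n : ℤ) + 1) = 0 := by
          by_contra h'
          exact h ⟨hm, h'⟩
        rw [this]; simp [hq.ne']
  rw [this]
  exact hsum.hasSum

lemma coeff_Phi_mul (p : ℕ) (W : PowerSeries ℂ) :
    PowerSeries.coeff p (Phi * W) =
      ∑ j ∈ range (p / 2 + 1), phi (2 * j) * PowerSeries.coeff (p - 2 * j) W := by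
  rw [PowerSeries.coeff_mul, Nat.sum_antidiagonal_eq_sum_range_succ_mk]
  simp only [Phi, PowerSeries.coeff_mk, ite_mul, zero_mul]
  rw [← sum_filter]
  symm
  refine sum_nbij' (fun j => 2 * j) (fun i => i / 2) ?_ ?_ ?_ ?_ ?_
  · intro j hj
    simp only [mem_range, mem_filter] at hj ⊢
    exact ⟨by omega, even_two_mul j⟩
  · intro i hi
    simp only [mem_range, mem_filter] at hi ⊢
    omega
  · intro j _
    simp
  · intro i hi
    simp only [mem_range, mem_filter] at hi
    obtain ⟨r, hr⟩ := hi.2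
    omega
  · intro j _
    push_cast
    rfl

lemma coeff_V_mul (u v : ℂ) (a c k : ℕ) :
    PowerSeries.coeff k (V u a * V v c) =
      ∑ ω ∈ range (k + 1), vco u a ω * vco v c (k - ω) := by
  rw [PowerSeries.coeff_mul, Nat.sum_antidiagonal_eq_sum_range_succ_mk]
  simp only [V, PowerSeries.coeff_mk]

lemma vco_neg (x : ℂ) (c k : ℕ) :
    vco (-x) c k = (-1) ^ c * (Nat.choose (k + c - 1) k : ℂ) * (x ^ (c + k))⁻¹ := by
  unfold vco
  rw [neg_pow_inv', pow_add]
  have : ((-1 : ℂ) ^ k) * (-1) ^ k = 1 := by rw [← mul_pow]; simp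
  linear_combination ((-1 : ℂ) ^ c * (Nat.choose (k + c - 1) k : ℂ) * (x ^ (c + k))⁻¹) * this

lemma sgn_zpow_neg (m : ℤ) : (-1 : ℂ) ^ (-m) = (-1 : ℂ) ^ m := by
  rw [zpow_neg, ← inv_zpow, inv_neg_one]

lemma cpow_add_nat_inv (n k : ℕ) (s : ℂ) (s' : ℂ) (h : s' = s + k) :
    ((((n + 1 : ℕ) : ℂ)) ^ s')⁻¹ = ((((n + 1 : ℕ) : ℂ)) ^ s)⁻¹ * ((((n + 1 : ℕ) : ℂ)) ^ k)⁻¹ := by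
  rw [h, cpow_add _ _ (by exact_mod_cast Nat.succ_ne_zero n), cpow_natCast, mul_inv]

/-- common outer factor -/
noncomputable def pre (q b : ℕ) (s : ℂ) (m : ℤ) (n : ℕ) : ℂ :=
  (-1 : ℂ) ^ (n + 1) * ((m : ℂ) ^ q)⁻¹ * ((((n + 1 : ℕ) : ℂ)) ^ s)⁻¹ *
        (((m + (n + 1) : ℤ) : ℂ) ^ b)⁻¹

lemma block1 (p q a b c : ℕ) (hc : 0 < c) (s : ℂ) (m : ℤ) (n : ℕ) :
    pre q b s m n * Kl 0 (-m) (-(m + (n + 1))) p a c =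
    (-1 : ℂ) ^ p * ∑ j ∈ range (p / 2 + 1), phi (2 * j) *
      ∑ ω ∈ range (p - 2 * j + 1),
        (Nat.choose (ω + a - 1) ω : ℂ) * (Nat.choose (p + c - 2 * j - ω - 1) (c - 1) : ℂ) *
          Tt (q + a + ω) s (p + b + c - 2 * j - ω) 1 (-1) (m, n) := by
  have e1 : ((0 : ℤ) : ℂ) - ((-m : ℤ) : ℂ) = m := by push_cast; ring
  have e2 : ((0 : ℤ) : ℂ) - ((-(m + (n + 1)) : ℤ) : ℂ) = ((m + (n + 1) : ℤ) : ℂ) := by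
    push_cast; ring
  rw [Kl, e1, e2, coeff_Phi_mul, zpow_zero, one_mul, mul_sum, mul_sum]
  apply sum_congr rfl
  intro j hj
  rw [mem_range] at hj
  rw [coeff_V_mul, mul_left_comm, mul_left_comm ((-1 : ℂ) ^ p)]
  congr 1
  rw [mul_sum, mul_sum]
  apply sum_congr rfl
  intro ω hω
  rw [mem_range] at hω
  obtain ⟨r, rfl⟩ : ∃ r, p = 2 * j + ω + r := ⟨p - 2 * j - ω, by omega⟩
  obtain ⟨d, rfl⟩ : ∃ d, c = d + 1 := ⟨c - 1, by omega⟩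
  have n1 : 2 * j + ω + r - 2 * j - ω = r := by omega
  have n2 : 2 * j + ω + r + (d + 1) - 2 * j - ω - 1 = r + d := by omega
  have n3 : 2 * j + ω + r + b + (d + 1) - 2 * j - ω = r + b + (d + 1) := by omega
  have n4 : r + (d + 1) - 1 = r + d := by omega
  have hch : (r + d).choose r = (r + d).choose d := by
    rw [Nat.choose_symm_add]
  simp only [pre, vco, Tt, n1, n2, n3, n4, one_zpow, hch, Nat.add_sub_cancel]
  have hs : (-1 : ℂ) ^ (2 * j + ω + r) = (-1) ^ ω * (-1) ^ r := by
    rw [pow_add, pow_add, pow_mul]; simp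
  rw [hs]
  ring

lemma block3 (p q a b c : ℕ) (hp : 0 < p) (s : ℂ) (m : ℤ) (n : ℕ) :
    pre q b s m n * Kl (-(m + (n + 1))) 0 (-m) c p a =
    (-1 : ℂ) ^ (p + a) * ∑ j ∈ range (c / 2 + 1), phi (2 * j) *
      ∑ ω ∈ range (c - 2 * j + 1),
        (Nat.choose (ω + a - 1) ω : ℂ) * (Nat.choose (p + c - 2 * j - ω - 1) (p - 1) : ℂ) *
          Tt q (s + a + ω) (p + b + c - 2 * j - ω) (-1) 1 (m, n) := by
  have e1 : ((-(m + (n + 1)) : ℤ) : ℂ) - ((-m : ℤ) : ℂ) = -(((n + 1 : ℕ) : ℂ)) := by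
    push_cast; ring
  have e2 : ((-(m + (n + 1)) : ℤ) : ℂ) - ((0 : ℤ) : ℂ) = -((m + (n + 1) : ℤ) : ℂ) := by
    push_cast; ring
  rw [Kl_swap, Kl, e1, e2, coeff_Phi_mul, mul_sum, mul_sum, mul_sum]
  apply sum_congr rfl
  intro j hj
  rw [mem_range] at hj
  rw [coeff_V_mul, mul_left_comm ((-1 : ℂ) ^ (-(m + ((n:ℤ) + 1)))), mul_left_comm (pre q b s m n), mul_left_comm ((-1 : ℂ) ^ (p + a))]
  congr 1
  rw [mul_sum, mul_sum, mul_sum]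
  apply sum_congr rfl
  intro ω hω
  rw [mem_range] at hω
  obtain ⟨r, rfl⟩ : ∃ r, c = 2 * j + ω + r := ⟨c - 2 * j - ω, by omega⟩
  obtain ⟨d, rfl⟩ : ∃ d, p = d + 1 := ⟨p - 1, by omega⟩
  have n1 : 2 * j + ω + r - 2 * j - ω = r := by omega
  have n2 : d + 1 + (2 * j + ω + r) - 2 * j - ω - 1 = r + d := by omega
  have n3 : d + 1 + b + (2 * j + ω + r) - 2 * j - ω = r + b + (d + 1) := by omega
  have n4 : r + (d + 1) - 1 = r + d := by omega
  have hch : (r + d).choose r = (r + d).choose d := by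
    rw [Nat.choose_symm_add]
  have hs : (-1 : ℂ) ^ m = (-1 : ℂ) ^ (n + 1) * (-1 : ℂ) ^ (-(m + (n + 1))) := by
    rw [sgn_zpow_neg, ← zpow_natCast, ← zpow_add₀ (by norm_num)]
    push_cast
    rw [show (n : ℤ) + 1 + (m + (n + 1)) = m + 2 * (n + 1) by ring, zpow_add₀ (by norm_num),
      zpow_mul]
    simp
  simp only [pre, vco_neg, Tt, n1, n2, n3, n4, one_pow, hch, Nat.add_sub_cancel, hs]
  rw [cpow_add_nat_inv n (a + ω) s (s + a + ω) (by push_cast; ring)]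
  ring

lemma pre_zero (q b : ℕ) (hq : 0 < q) (hb : 0 < b) (s : ℂ) (m : ℤ) (n : ℕ)
    (h : m = 0 ∨ m + (n + 1) = 0) : pre q b s m n = 0 := by
  unfold pre
  rcases h with h | h
  · rw [h]; simp [hq.ne']
  · rw [h]; simp [hb.ne']

lemma Tt_zero (p q : ℕ) (hp : 0 < p) (hq : 0 < q) (s x y : ℂ) (m : ℤ) (n : ℕ)
    (h : m = 0 ∨ m + (n + 1) = 0) : Tt p s q x y (m, n) = 0 := by
  unfold Tt
  simp only
  rcases h with h | h
  · rw [h]; simp [hp.ne']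
  · rw [h]; simp [hq.ne']

lemma block2 (p q a b c : ℕ) (hp : 0 < p) (hq : 0 < q) (hb : 0 < b) (hc : 0 < c)
    (s : ℂ) (m : ℤ) (n : ℕ) :
    pre q b s m n * Kl (-m) 0 (-(m + (n + 1))) a p c =
    (-1 : ℂ) ^ p * ∑ j ∈ range (a / 2 + 1), phi (2 * j) *
      ∑ ω ∈ range p,
        (Nat.choose (ω + a - 2 * j) ω : ℂ) * (Nat.choose (p + c - 2 - ω) (c - 1) : ℂ) *
          Tt (q + a - 2 * j + ω + 1) s (p + b + c - 1 - ω) (-1) (-1) (m, n) +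
    (-1 : ℂ) ^ (p + a) * ∑ j ∈ range (a / 2 + 1), phi (2 * j) *
      ∑ ω ∈ range c,
        (Nat.choose (ω + a - 2 * j) ω : ℂ) * (Nat.choose (p + c - 2 - ω) (p - 1) : ℂ) *
          Tt q (s + ((a - 2 * j : ℕ) : ℂ) + ω + 1) (p + b + c - 1 - ω) (-1) (-1) (m, n) := by
  by_cases hz : m = 0 ∨ m + (n + 1) = 0
  · rw [pre_zero q b hq hb s m n hz, zero_mul, sum_eq_zero, sum_eq_zero]
    · simp
    · intro j hj
      rw [sum_eq_zero, mul_zero]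
      intro ω hω
      rw [mem_range] at hω
      rw [Tt_zero _ _ (by omega) (by omega) _ _ _ m n hz, mul_zero]
    · intro j hj
      rw [sum_eq_zero, mul_zero]
      intro ω hω
      rw [mem_range] at hω
      rw [Tt_zero _ _ (by omega) (by omega) _ _ _ m n hz, mul_zero]
  push Not at hz
  have hm : (m : ℂ) ≠ 0 := by exact_mod_cast hz.1
  have hN : (((n + 1 : ℕ) : ℂ)) ≠ 0 := by exact_mod_cast Nat.succ_ne_zero n
  have hY : (m : ℂ) + ((n + 1 : ℕ) : ℂ) = ((m + (n + 1) : ℤ) : ℂ) := by push_cast; ring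
  have hy : (m : ℂ) + ((n + 1 : ℕ) : ℂ) ≠ 0 := by
    rw [hY]; exact_mod_cast hz.2
  have e1 : ((-m : ℤ) : ℂ) - ((0 : ℤ) : ℂ) = -(m : ℂ) := by push_cast; ring
  have e2 : ((-m : ℤ) : ℂ) - ((-(m + (n + 1)) : ℤ) : ℂ) = ((n + 1 : ℕ) : ℂ) := by
    push_cast; ring
  rw [Kl, e1, e2, coeff_Phi_mul, mul_sum, mul_sum, mul_sum, mul_sum, ← sum_add_distrib]
  apply sum_congr rfl
  intro j hj
  rw [mem_range] at hj
  obtain ⟨k, rfl⟩ : ∃ k, a = 2 * j + k := ⟨a - 2 * j, by omega⟩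
  rw [V_parfrac hm hN hy p c _ (by omega), hY, Nat.add_sub_cancel_left]
  rw [mul_left_comm ((-1 : ℂ) ^ (-m)), mul_left_comm (pre q b s m n), mul_left_comm ((-1 : ℂ) ^ p),
    mul_left_comm ((-1 : ℂ) ^ (p + (2 * j + k))), ← mul_add]
  congr 1
  rw [← sum_range_reflect _ p, ← sum_range_reflect _ c, mul_add, mul_add]
  have hsg : (-1 : ℂ) ^ (-m) = (-1 : ℂ) ^ m := sgn_zpow_neg m
  congr 1
  · rw [mul_sum, mul_sum, mul_sum]
    apply sum_congr rfl
    intro ω hω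
    rw [mem_range] at hω
    obtain ⟨r, rfl⟩ : ∃ r, p = ω + r + 1 := ⟨p - ω - 1, by omega⟩
    obtain ⟨d, rfl⟩ : ∃ d, c = d + 1 := ⟨c - 1, by omega⟩
    have n1 : ω + r + 1 - 1 - ω = r := by omega
    have n2 : ω + r + 1 - r = ω + 1 := by omega
    have n3 : ω + (2 * j + k) - 2 * j = k + ω := by omega
    have n4 : ω + r + 1 + (d + 1) - 2 - ω = r + d := by omega
    have n5 : q + (2 * j + k) - 2 * j + ω + 1 = q + k + ω + 1 := by omega
    have n6 : ω + r + 1 + b + (d + 1) - 1 - ω = r + b + (d + 1) := by omega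
    have n7 : r + (d + 1) - 1 = r + d := by omega
    have n8 : k + (ω + 1) - 1 = k + ω := by omega
    have hch : (r + d).choose r = (r + d).choose d := by
      rw [Nat.choose_symm_add]
    have hch2 : (k + ω).choose k = (k + ω).choose ω := by
      rw [Nat.choose_symm_add]
    simp only [n1, n2, n3, n4, n5, n6, vco_neg]
    simp only [pre, vco, Tt, n7, n8, hch, hch2, Nat.add_sub_cancel, hsg]
    ring
  · rw [mul_sum, mul_sum, mul_sum]
    apply sum_congr rfl
    intro ω hω
    rw [mem_range] at hω
    obtain ⟨r, rfl⟩ : ∃ r, c = ω + r + 1 := ⟨c - ω - 1, by omega⟩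
    obtain ⟨d, rfl⟩ : ∃ d, p = d + 1 := ⟨p - 1, by omega⟩
    have n1 : ω + r + 1 - 1 - ω = r := by omega
    have n2 : ω + r + 1 - r = ω + 1 := by omega
    have n3 : ω + (2 * j + k) - 2 * j = k + ω := by omega
    have n4 : d + 1 + (ω + r + 1) - 2 - ω = r + d := by omega
    have n6 : d + 1 + b + (ω + r + 1) - 1 - ω = r + b + (d + 1) := by omega
    have n7 : r + (d + 1) - 1 = r + d := by omega
    have n8 : k + (ω + 1) - 1 = k + ω := by omega
    have hch : (r + d).choose r = (r + d).choose d := by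
      rw [Nat.choose_symm_add]
    have hch2 : (k + ω).choose k = (k + ω).choose ω := by
      rw [Nat.choose_symm_add]
    simp only [n1, n2, n3, n4, n6, vco_neg]
    simp only [pre, vco, Tt, n7, n8, hch, hch2, Nat.add_sub_cancel, hsg]
    rw [cpow_add_nat_inv n (k + ω + 1) s (s + (k : ℂ) + ω + 1) (by push_cast; ring)]
    have hs : (-1 : ℂ) ^ (d + 1 + (2 * j + k)) = (-1) ^ (d + 1) * (-1) ^ k := by
      rw [pow_add, pow_add _ (2 * j), pow_mul]; simp
    rw [hs]
    ring


/-- Functional relation for `ζ₃(·,λ₂∨;SU(4))`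
(Theorem 5.1 of Komori–Matsumoto–Tsumura). -/
theorem functional_relation_SU4_lam2 (p q a b c : ℕ) (hp : 0 < p) (hq : 0 < q) (ha : 0 < a)
    (hb : 0 < b) (hc : 0 < c) (s : ℂ) (hs : 1 < s.re) :
    Scomb Zlam2 p q a b c s = J2 p q a b c s := by
  rw [Scomb_eq_tsum p q a b c hp hq ha hb hc s hs,
    (Ft_summable p q a b c hp hq ha hb hc s hs).tsum_prod]
  have nm : ‖(-1 : ℂ)‖ = 1 := by simp
  have n1 : ‖(1 : ℂ)‖ = 1 := by simp
  have H1 := (hasSum_sum (s := range (p / 2 + 1)) fun j hj =>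
    (hasSum_sum (s := range (p - 2 * j + 1)) fun ω hω =>
      (hasSum_T (q + a + ω) (p + b + c - 2 * j - ω) s 1 (-1) (by omega)
        (by rw [mem_range] at hj hω; omega) hs n1 nm).mul_left
      ((Nat.choose (ω + a - 1) ω : ℂ) * (Nat.choose (p + c - 2 * j - ω - 1) (c - 1) : ℂ))).mul_left
    (phi (2 * j))).mul_left (2 * (-1 : ℂ) ^ p)
  have H2 := (hasSum_sum (s := range (c / 2 + 1)) fun j hj =>
    (hasSum_sum (s := range (c - 2 * j + 1)) fun ω hω =>
      (hasSum_T q (p + b + c - 2 * j - ω) (s + a + ω) (-1) 1 hq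
        (by rw [mem_range] at hj hω; omega)
        (by
          simp only [add_re, natCast_re]
          have := Nat.cast_nonneg (α := ℝ) a
          have := Nat.cast_nonneg (α := ℝ) ω
          linarith) nm n1).mul_left
      ((Nat.choose (ω + a - 1) ω : ℂ) * (Nat.choose (p + c - 2 * j - ω - 1) (p - 1) : ℂ))).mul_left
    (phi (2 * j))).mul_left (2 * (-1 : ℂ) ^ (p + a))
  have H3 := (hasSum_sum (s := range (a / 2 + 1)) fun j hj =>
    (hasSum_sum (s := range p) fun ω hω =>
      (hasSum_T (q + a - 2 * j + ω + 1) (p + b + c - 1 - ω) s (-1) (-1) (by omega)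
        (by rw [mem_range] at hj hω; omega) hs nm nm).mul_left
      ((Nat.choose (ω + a - 2 * j) ω : ℂ) * (Nat.choose (p + c - 2 - ω) (c - 1) : ℂ))).mul_left
    (phi (2 * j))).mul_left (2 * (-1 : ℂ) ^ p)
  have H4 := (hasSum_sum (s := range (a / 2 + 1)) fun j hj =>
    (hasSum_sum (s := range c) fun ω hω =>
      (hasSum_T q (p + b + c - 1 - ω) (s + ((a - 2 * j : ℕ) : ℂ) + ω + 1) (-1) (-1) hq
        (by rw [mem_range] at hj hω; omega)
        (by
          simp only [add_re, natCast_re, one_re]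
          have := Nat.cast_nonneg (α := ℝ) (a - 2 * j)
          have := Nat.cast_nonneg (α := ℝ) ω
          linarith) nm nm).mul_left
      ((Nat.choose (ω + a - 2 * j) ω : ℂ) * (Nat.choose (p + c - 2 - ω) (p - 1) : ℂ))).mul_left
    (phi (2 * j))).mul_left (2 * (-1 : ℂ) ^ (p + a))
  have H := ((H1.add H2).add H3).add H4
  unfold J2
  rw [← H.tsum_eq]
  apply tsum_congr
  rintro ⟨m, n⟩
  simp only
  rw [Ft_tsum_inner p q a b c hp hq ha hb hc s hs m n]
  have b1 := block1 p q a b c hc s m n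
  have b2 := block2 p q a b c hp hq hb hc s m n
  have b3 := block3 p q a b c hp s m n
  have hpre : ((-1 : ℂ) ^ (n + 1) * ((m : ℂ) ^ q)⁻¹ * ((((n + 1 : ℕ) : ℂ)) ^ s)⁻¹ *
        (((m + (n + 1) : ℤ) : ℂ) ^ b)⁻¹) = pre q b s m n := rfl
  rw [hpre, Kf]
  linear_combination 2 * b1 + 2 * b2 + 2 * b3
end

section
/- Let p, q, a, b, c be positive integers and let s be a complex number with Re(s) > 1. Then S_{A₃}(p,q,a,b,c,s) = 2(−1)^p Σ_{j=0}^{⌊p/2⌋} ζ(2j) Σ_{ω=0}^{p−2j} C(ω+a−1, ω) C(p+c−2j−ω−1, c−1) T(q+a+ω, s, p+b+c−2j−ω; 1, 1) + 2(−1)^{p+a} Σ_{j=0}^{⌊c/2⌋} ζ(2j) Σ_{ω=0}^{c−2j} C(ω+a−1, ω) C(p+c−2j−ω−1, p−1) T(q, s+a+ω, p+b+c−2j−ω; 1, 1) + 2(−1)^p Σ_{j=0}^{⌊a/2⌋} ζ(2j) Σ_{ω=0}^{p−1} C(ω+a−2j, ω) C(p+c−2−ω, c−1) T(q+a−2j+ω+1,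 s, p+b+c−1−ω; 1, 1) + 2(−1)^{p+a} Σ_{j=0}^{⌊a/2⌋} ζ(2j) Σ_{ω=0}^{c−1} C(ω+a−2j, ω) C(p+c−2−ω, p−1) T(q, s+a−2j+ω+1, p+b+c−1−ω; 1, 1), where C(n,k) denotes the binomial coefficient and ζ(0) = −1/2. -/
open Complex Finset

/-- `ζ₃(s₁,…,s₆;A₃)`. -/
noncomputable def ZA3 : ℂ → ℂ → ℂ → ℂ → ℂ → ℂ → ℂ := Z3 (fun _ _ _ => 1)

/-- The right-hand side `J₀` of the functional relation for `ζ₃(·;A₃)`. -/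
noncomputable def J0 (p q a b c : ℕ) (s : ℂ) : ℂ :=
  2 * (-1 : ℂ) ^ p * ∑ j ∈ range (p / 2 + 1), riemannZeta (2 * j) *
      ∑ ω ∈ range (p - 2 * j + 1),
        (Nat.choose (ω + a - 1) ω : ℂ) * (Nat.choose (p + c - 2 * j - ω - 1) (c - 1) : ℂ) *
          T (q + a + ω) s (p + b + c - 2 * j - ω) 1 1 +
  2 * (-1 : ℂ) ^ (p + a) * ∑ j ∈ range (c / 2 + 1), riemannZeta (2 * j) *
      ∑ ω ∈ range (c - 2 * j + 1),
        (Nat.choose (ω + a - 1) ω : ℂ) * (Nat.choose (p + c - 2 * j - ω - 1) (p - 1) : ℂ) *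
          T q (s + a + ω) (p + b + c - 2 * j - ω) 1 1 +
  2 * (-1 : ℂ) ^ p * ∑ j ∈ range (a / 2 + 1), riemannZeta (2 * j) *
      ∑ ω ∈ range p,
        (Nat.choose (ω + a - 2 * j) ω : ℂ) * (Nat.choose (p + c - 2 - ω) (c - 1) : ℂ) *
          T (q + a - 2 * j + ω + 1) s (p + b + c - 1 - ω) 1 1 +
  2 * (-1 : ℂ) ^ (p + a) * ∑ j ∈ range (a / 2 + 1), riemannZeta (2 * j) *
      ∑ ω ∈ range c,
        (Nat.choose (ω + a - 2 * j) ω : ℂ) * (Nat.choose (p + c - 2 - ω) (p - 1) : ℂ) *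
          T q (s + ((a - 2 * j : ℕ) : ℂ) + ω + 1) (p + b + c - 1 - ω) 1 1

namespace A3
open Filter Topology

/-- The Laurent series `X + x`. -/
noncomputable def lin (x : ℂ) : LaurentSeries ℂ :=
  HahnSeries.ofPowerSeries ℤ ℂ (PowerSeries.X + PowerSeries.C x)

/-- The power series of `(X + x)^{-k}` for `x ≠ 0`. -/
noncomputable def pinv (x : ℂ) (k : ℕ) : PowerSeries ℂ :=
  (PowerSeries.C x⁻¹ * PowerSeries.rescale (-x⁻¹) (PowerSeries.mk 1)) ^ k

lemma lin_ne_zero (x : ℂ) : lin x ≠ 0 := by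
  unfold lin
  intro h
  have h2 := congrArg (fun f : LaurentSeries ℂ => f.coeff ((1 : ℕ) : ℤ)) h
  simp only [HahnSeries.ofPowerSeries_apply_coeff] at h2
  simp at h2

lemma lin_sub (x y : ℂ) : lin x - lin y = HahnSeries.C (x - y) := by
  unfold lin
  rw [← HahnSeries.ofPowerSeries_C, map_sub PowerSeries.C, ← map_sub]
  congr 1
  ring

lemma pinv_one_mul (x : ℂ) (hx : x ≠ 0) :
    (PowerSeries.X + PowerSeries.C x) * pinv x 1 = 1 := by
  have h := congrArg (PowerSeries.rescale (-x⁻¹))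
    (PowerSeries.mk_one_mul_one_sub_eq_one ℂ)
  rw [map_mul, map_sub, map_one, PowerSeries.rescale_X] at h
  have hc : (PowerSeries.C x : PowerSeries ℂ) * PowerSeries.C x⁻¹ = 1 := by
    rw [← map_mul, mul_inv_cancel₀ hx, map_one]
  rw [pinv, pow_one]
  rw [map_neg] at h
  rw [← h]
  linear_combination (PowerSeries.rescale (-x⁻¹) (PowerSeries.mk 1)) * hc

lemma lin_pow_inv (x : ℂ) (hx : x ≠ 0) (k : ℕ) :
    (lin x ^ k)⁻¹ = HahnSeries.ofPowerSeries ℤ ℂ (pinv x k) := by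
  have h1 : lin x * HahnSeries.ofPowerSeries ℤ ℂ (pinv x 1) = 1 := by
    unfold lin
    rw [← map_mul, pinv_one_mul x hx, map_one]
  have h2 : pinv x k = pinv x 1 ^ k := by simp [pinv]
  rw [h2, map_pow, ← inv_pow, eq_comm]
  congr 1
  exact eq_inv_of_mul_eq_one_right h1

lemma coeff_pinv (x : ℂ) (k n : ℕ) :
    PowerSeries.coeff n (pinv x k) =
      (-1) ^ n * (Nat.choose (n + k - 1) n : ℂ) * (x ^ (k + n))⁻¹ := by
  rw [pinv, mul_pow, ← map_pow, ← map_pow, PowerSeries.coeff_C_mul, PowerSeries.coeff_rescale]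
  rcases k with _ | d
  · rcases n with _ | n
    · simp
    · simp [PowerSeries.coeff_one]
  · rw [PowerSeries.mk_one_pow_eq_mk_choose_add, PowerSeries.coeff_mk]
    have : n + (d + 1) - 1 = n + d := by omega
    rw [this, Nat.add_comm d n, Nat.choose_symm_add, neg_pow, pow_add x, mul_inv, inv_pow, inv_pow]
    ring

lemma constantCoeff_pinv (x : ℂ) (k : ℕ) :
    PowerSeries.constantCoeff (pinv x k) = (x ^ k)⁻¹ := by
  rw [← PowerSeries.coeff_zero_eq_constantCoeff_apply, coeff_pinv]
  simp

lemma lin_zero : lin 0 = HahnSeries.single 1 1 := by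
  simp [lin]

lemma lin_zero_pow_inv (k : ℕ) : (lin 0 ^ k)⁻¹ = HahnSeries.single (-(k : ℤ)) (1 : ℂ) := by
  have : lin 0 ^ k * HahnSeries.single (-(k : ℤ)) (1 : ℂ) = 1 := by
    rw [lin_zero, HahnSeries.single_pow, HahnSeries.single_mul_single]
    simp
  exact (eq_inv_of_mul_eq_one_right this).symm

lemma coeff_lin_neg (x : ℂ) (k i : ℕ) (hi : 0 < i) :
    ((lin x ^ k)⁻¹).coeff (-(i : ℤ)) = if x = 0 ∧ i = k then 1 else 0 := by
  by_cases hx : x = 0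
  · subst hx
    rw [lin_zero_pow_inv, HahnSeries.coeff_single]
    simp
  · rw [lin_pow_inv x hx, PowerSeries.coeff_coe]
    simp [hx, hi]

lemma coeff_lin_zero (x : ℂ) (k : ℕ) (hk : 0 < k) :
    ((lin x ^ k)⁻¹).coeff 0 = (x ^ k)⁻¹ := by
  by_cases hx : x = 0
  · subst hx
    rw [lin_zero_pow_inv, HahnSeries.coeff_single]
    simp [hk.ne']
  · rw [lin_pow_inv x hx, PowerSeries.coeff_coe]
    simp [constantCoeff_pinv]

/-- The Laurent series of `(X+x)^{-p} (X+y)^{-a} (X+z)^{-c}`. -/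
noncomputable def EE (x y z : ℂ) (p a c : ℕ) : LaurentSeries ℂ :=
  (lin x ^ p)⁻¹ * (lin y ^ a)⁻¹ * (lin z ^ c)⁻¹

lemma EE_rec1 (x y z : ℂ) (p a c : ℕ) (hxy : y ≠ x) :
    EE x y z (p + 1) (a + 1) c =
      HahnSeries.C (y - x)⁻¹ * (EE x y z (p + 1) a c - EE x y z p (a + 1) c) := by
  have h : HahnSeries.C (y - x)⁻¹ * (lin y - lin x) = 1 := by
    rw [lin_sub, ← map_mul, inv_mul_cancel₀ (sub_ne_zero.2 hxy), map_one]
  have hx := lin_ne_zero x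
  have hy := lin_ne_zero y
  have hz := lin_ne_zero z
  calc EE x y z (p + 1) (a + 1) c
      = (HahnSeries.C (y - x)⁻¹ * (lin y - lin x)) * EE x y z (p + 1) (a + 1) c := by
        rw [h, one_mul]
    _ = _ := by
        unfold EE
        rw [mul_assoc]
        congr 1
        rw [pow_succ, pow_succ]
        field_simp

lemma EE_swap1 (x y z : ℂ) (p a c : ℕ) : EE x y z p a c = EE y x z a p c := by
  unfold EE; ring

lemma EE_swap2 (x y z : ℂ) (p a c : ℕ) : EE x y z p a c = EE x z y p c a := by
  unfold EE; ring

lemma EE_rec2 (x y z : ℂ) (p a c : ℕ) (h : z ≠ x) :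
    EE x y z (p + 1) a (c + 1) =
      HahnSeries.C (z - x)⁻¹ * (EE x y z (p + 1) a c - EE x y z p a (c + 1)) := by
  rw [EE_swap2, EE_rec1 _ _ _ _ _ _ h, EE_swap2 x z y, EE_swap2 x z y]

lemma EE_rec3 (x y z : ℂ) (p a c : ℕ) (h : z ≠ y) :
    EE x y z p (a + 1) (c + 1) =
      HahnSeries.C (z - y)⁻¹ * (EE x y z p (a + 1) c - EE x y z p a (c + 1)) := by
  rw [EE_swap1, EE_rec2 _ _ _ _ _ _ h, EE_swap1 y x z, EE_swap1 y x z]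

lemma coeff_EE_zero (x y z : ℂ) (p a c : ℕ) (hx : x ≠ 0) (hy : y ≠ 0) (hz : z ≠ 0) :
    (EE x y z p a c).coeff 0 = (x ^ p * y ^ a * z ^ c)⁻¹ := by
  rw [EE, lin_pow_inv x hx, lin_pow_inv y hy, lin_pow_inv z hz, ← map_mul, ← map_mul,
    PowerSeries.coeff_coe]
  simp [constantCoeff_pinv]
  ring

lemma coeff_EE_pole (y z : ℂ) (p a c k : ℕ) (hy : y ≠ 0) (hz : z ≠ 0) (hk : k ≤ p) :
    (EE 0 y z p a c).coeff (-(k : ℤ)) = (-1) ^ (p - k) * ∑ ω ∈ range (p - k + 1),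
      (Nat.choose (ω + a - 1) ω : ℂ) * (Nat.choose (p - k - ω + c - 1) (p - k - ω) : ℂ) *
        ((y ^ (a + ω))⁻¹ * (z ^ (c + (p - k - ω)))⁻¹) := by
  rw [EE, lin_zero_pow_inv, lin_pow_inv y hy, lin_pow_inv z hz, mul_assoc, ← map_mul,
    HahnSeries.coeff_single_mul, one_mul]
  have : -(k : ℤ) - -(p : ℤ) = ((p - k : ℕ) : ℤ) := by omega
  rw [this, HahnSeries.ofPowerSeries_apply_coeff, PowerSeries.coeff_mul,
    Finset.Nat.sum_antidiagonal_eq_sum_range_succ_mk, mul_sum]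
  refine sum_congr rfl fun ω hω => ?_
  rw [mem_range] at hω
  simp only [coeff_pinv]
  have : (-1 : ℂ) ^ (p - k) = (-1) ^ ω * (-1) ^ (p - k - ω) := by
    rw [← pow_add]; congr 1; omega
  rw [this]; ring

lemma coeff_EE_pole_gt (y z : ℂ) (p a c k : ℕ) (hy : y ≠ 0) (hz : z ≠ 0) (hk : p < k) :
    (EE 0 y z p a c).coeff (-(k : ℤ)) = 0 := by
  rw [EE, lin_zero_pow_inv, lin_pow_inv y hy, lin_pow_inv z hz, mul_assoc, ← map_mul,
    HahnSeries.coeff_single_mul, one_mul, PowerSeries.coeff_coe, if_pos]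
  omega

end A3

namespace A3
open Filter Topology

lemma Icc_step (f : ℤ → ℂ) (L : ℕ) :
    ∑ l ∈ Icc (-((L + 1 : ℕ) : ℤ)) ((L + 1 : ℕ) : ℤ), f l =
      ∑ l ∈ Icc (-(L : ℤ)) (L : ℤ), f l + f ((L : ℤ) + 1) + f (-((L : ℤ) + 1)) := by
  have : Icc (-((L + 1 : ℕ) : ℤ)) ((L + 1 : ℕ) : ℤ) =
      insert (-((L : ℤ) + 1)) (insert ((L : ℤ) + 1) (Icc (-(L : ℤ)) (L : ℤ))) := by
    ext x; simp only [mem_Icc, mem_insert]; push_cast; omega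
  rw [this, sum_insert, sum_insert]
  · ring
  · simp
  · simp only [mem_Icc, mem_insert]; omega

lemma Icc_shift (f : ℤ → ℂ) (L : ℕ) :
    ∑ l ∈ Icc (-(L : ℤ)) (L : ℤ), f (l + 1) =
      ∑ l ∈ Icc (-(L : ℤ)) (L : ℤ), f l + (f ((L : ℤ) + 1) - f (-(L : ℤ))) := by
  induction L with
  | zero => simp
  | succ L ih =>
    rw [Icc_step, Icc_step, ih]
    push_cast
    have : -((L : ℤ) + 1) + 1 = -(L : ℤ) := by ring
    rw [this]; ring

lemma tendsto_inv_shift (k : ℕ) (hk : 0 < k) (u : ℕ → ℤ) (hu : Tendsto (fun L => |u L|) atTop atTop) :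
    Tendsto (fun L : ℕ => (((u L : ℤ) : ℂ) ^ k)⁻¹) atTop (𝓝 0) := by
  rw [tendsto_zero_iff_norm_tendsto_zero]
  have h1 : Tendsto (fun L : ℕ => ((|u L| : ℤ) : ℝ)) atTop atTop :=
    tendsto_intCast_atTop_atTop.comp hu
  have h2 := (tendsto_pow_atTop (α := ℝ) hk.ne').comp h1
  refine h2.inv_tendsto_atTop.congr fun L => ?_
  simp

lemma lim_base0 (k : ℕ) (hk : 0 < k) :
    Tendsto (fun L : ℕ => ∑ l ∈ Icc (-(L : ℤ)) (L : ℤ), (((l : ℤ) : ℂ) ^ k)⁻¹) atTop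
      (𝓝 (if Even k then 2 * riemannZeta k else 0)) := by
  by_cases he : Even k
  · rw [if_pos he]
    have h1 : 1 < k := by
      rcases he with ⟨r, rfl⟩; omega
    have hs : Summable (fun n : ℕ => 1 / (n : ℂ) ^ k) := by
      rw [← summable_norm_iff]
      simpa using Real.summable_one_div_nat_pow.2 h1
    have h2 : Tendsto (fun L : ℕ => 2 * ∑ n ∈ range (L + 1), 1 / (n : ℂ) ^ k) atTop
        (𝓝 (2 * riemannZeta k)) := by
      rw [zeta_nat_eq_tsum_of_gt_one h1]
      exact ((hs.hasSum.tendsto_sum_nat).comp (tendsto_add_atTop_nat 1)).const_mul 2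
    refine h2.congr fun L => ?_
    induction L with
    | zero => simp [hk.ne']
    | succ L ih =>
      rw [Icc_step, sum_range_succ, mul_add, ih]
      push_cast
      rw [← Even.neg_pow he ((L : ℂ) + 1)]
      ring_nf
  · rw [if_neg he]
    have ho : Odd k := Nat.not_even_iff_odd.1 he
    refine tendsto_const_nhds.congr fun L => ?_
    induction L with
    | zero => simp [hk.ne']
    | succ L ih =>
      rw [Icc_step, ← ih]
      push_cast
      rw [Odd.neg_pow ho, inv_neg]
      ring

lemma lim_base (k : ℕ) (hk : 0 < k) (r : ℤ) :
    Tendsto (fun L : ℕ => ∑ l ∈ Icc (-(L : ℤ)) (L : ℤ), (((l + r : ℤ) : ℂ) ^ k)⁻¹) atTop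
      (𝓝 (if Even k then 2 * riemannZeta k else 0)) := by
  have key : ∀ r : ℤ, Tendsto (fun L : ℕ => ((((L : ℤ) + 1 + r : ℤ) : ℂ) ^ k)⁻¹ -
      (((-(L : ℤ) + r : ℤ) : ℂ) ^ k)⁻¹) atTop (𝓝 0) := by
    intro r
    rw [← sub_zero (0 : ℂ)]
    refine (tendsto_inv_shift k hk _ ?_).sub (tendsto_inv_shift k hk _ ?_)
    · refine tendsto_atTop_mono (f := fun L : ℕ => (L : ℤ) + (1 + r)) (fun L => ?_) ?_
      · have := le_abs_self ((L : ℤ) + 1 + r); omega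
      · exact tendsto_atTop_add_const_right _ _ tendsto_natCast_atTop_atTop
    · refine tendsto_atTop_mono (f := fun L : ℕ => (L : ℤ) + (- r)) (fun L => ?_) ?_
      · have := neg_le_abs (-(L : ℤ) + r); omega
      · exact tendsto_atTop_add_const_right _ _ tendsto_natCast_atTop_atTop
  have step : ∀ r : ℤ, ∀ L : ℕ, ∑ l ∈ Icc (-(L : ℤ)) (L : ℤ), (((l + (r + 1) : ℤ) : ℂ) ^ k)⁻¹ =
      ∑ l ∈ Icc (-(L : ℤ)) (L : ℤ), (((l + r : ℤ) : ℂ) ^ k)⁻¹ +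
      (((((L : ℤ) + 1 + r : ℤ) : ℂ) ^ k)⁻¹ - (((-(L : ℤ) + r : ℤ) : ℂ) ^ k)⁻¹) := by
    intro r L
    rw [← Icc_shift (fun l => (((l + r : ℤ) : ℂ) ^ k)⁻¹)]
    refine sum_congr rfl fun l _ => ?_
    rw [show l + (r + 1) = l + 1 + r by ring]
  induction r using Int.induction_on with
  | zero => simpa using lim_base0 k hk
  | succ i ih =>
    have := ih.add (key i)
    rw [add_zero] at this
    exact this.congr fun L => (step _ L).symm
  | pred i ih =>
    have := ih.sub (key (-(i : ℤ) - 1))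
    rw [sub_zero] at this
    refine this.congr fun L => ?_
    have h := step (-(i : ℤ) - 1) L
    rw [show -(i : ℤ) - 1 + 1 = -(i : ℤ) by ring] at h
    rw [h]; ring

/-- The contribution of the principal part at one pole. -/
noncomputable def RR (J : ℕ) (f : LaurentSeries ℂ) : ℂ :=
  ∑ j ∈ range J, 2 * riemannZeta (2 * ((j + 1 : ℕ) : ℂ)) * f.coeff (-((2 * (j + 1) : ℕ) : ℤ))

lemma RR_lin (J : ℕ) (x : ℂ) (f g : LaurentSeries ℂ) :
    RR J (HahnSeries.C x * (f - g)) = x * (RR J f - RR J g) := by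
  unfold RR
  rw [← sum_sub_distrib, mul_sum]
  refine sum_congr rfl fun j _ => ?_
  rw [HahnSeries.C_mul_eq_smul, HahnSeries.coeff_smul, HahnSeries.coeff_sub, smul_eq_mul]
  ring

lemma RR_ne (J : ℕ) (x : ℂ) (hx : x ≠ 0) (k : ℕ) : RR J (lin x ^ k)⁻¹ = 0 := by
  unfold RR
  refine sum_eq_zero fun j _ => ?_
  rw [coeff_lin_neg _ _ _ (by omega)]
  simp [hx]

lemma RR_zero (J : ℕ) (k : ℕ) (hk : 0 < k) (hJ : k ≤ J) :
    RR J (lin 0 ^ k)⁻¹ = if Even k then 2 * riemannZeta k else 0 := by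
  unfold RR
  have : ∀ j ∈ range J, 2 * riemannZeta (2 * ((j + 1 : ℕ) : ℂ)) *
      ((lin 0 ^ k)⁻¹).coeff (-((2 * (j + 1) : ℕ) : ℤ)) =
      if 2 * (j + 1) = k then 2 * riemannZeta k else 0 := by
    intro j _
    rw [coeff_lin_neg _ _ _ (by omega)]
    by_cases h : 2 * (j + 1) = k
    · simp [← h]
    · simp [h]
  rw [sum_congr rfl this]
  by_cases he : Even k
  · rw [if_pos he]
    obtain ⟨r, hr⟩ := he
    rw [sum_eq_single (r - 1)]
    · rw [if_pos (by omega)]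
    · intro j _ hj; rw [if_neg (by omega)]
    · intro h; rw [mem_range] at h; omega
  · rw [if_neg he]
    refine sum_eq_zero fun j _ => ?_
    rw [if_neg]
    rintro rfl
    exact he (even_two_mul _)

/-- `EE` at the shifted points. -/
noncomputable def EZ (m N : ℤ) (p a c : ℕ) (l : ℤ) : LaurentSeries ℂ :=
  EE ((l : ℤ) : ℂ) ((l + m : ℤ) : ℂ) ((l + N : ℤ) : ℂ) p a c

lemma EZ_single1 (m N : ℤ) (k : ℕ) (l : ℤ) : EZ m N k 0 0 l = (lin (l : ℤ) ^ k)⁻¹ := by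
  simp [EZ, EE]
lemma EZ_single2 (m N : ℤ) (k : ℕ) (l : ℤ) : EZ m N 0 k 0 l = (lin (l + m : ℤ) ^ k)⁻¹ := by
  simp [EZ, EE]
lemma EZ_single3 (m N : ℤ) (k : ℕ) (l : ℤ) : EZ m N 0 0 k l = (lin (l + N : ℤ) ^ k)⁻¹ := by
  simp [EZ, EE]

/-- The statement that the regularised symmetric sum is given by the principal parts. -/
def PP (J : ℕ) (m N : ℤ) (f : ℤ → LaurentSeries ℂ) : Prop :=
  Tendsto (fun L : ℕ => ∑ l ∈ Icc (-(L : ℤ)) (L : ℤ), (f l).coeff 0) atTop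
    (𝓝 (RR J (f 0) + RR J (f (-m)) + RR J (f (-N))))

lemma PP_lin (J : ℕ) (m N : ℤ) (f g : ℤ → LaurentSeries ℂ) (x : ℂ)
    (hf : PP J m N f) (hg : PP J m N g) :
    PP J m N (fun l => HahnSeries.C x * (f l - g l)) := by
  unfold PP at *
  convert (hf.sub hg).const_mul x using 2
  · rw [← sum_sub_distrib, mul_sum]
    refine sum_congr rfl fun l _ => ?_
    beta_reduce
    rw [HahnSeries.C_mul_eq_smul, HahnSeries.coeff_smul, HahnSeries.coeff_sub, smul_eq_mul]
  · simp only [RR_lin]; ring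

lemma PP_main (J : ℕ) (m N : ℤ) (hm : m ≠ 0) (hN : N ≠ 0) (hmN : N ≠ m) :
    ∀ t p a c : ℕ, p + a + c = t → 0 < t → t ≤ J → PP J m N (EZ m N p a c) := by
  intro t
  induction t with
  | zero => intro p a c _ h; omega
  | succ t ih =>
    have r1 : ∀ p a c, p + 1 + (a + 1) + c = t + 1 → t + 1 ≤ J →
        PP J m N (EZ m N (p + 1) (a + 1) c) := by
      intro p a c h hJ
      have := PP_lin J m N _ _ ((m : ℂ)⁻¹) (ih (p + 1) a c (by omega) (by omega) (by omega))
        (ih p (a + 1) c (by omega) (by omega) (by omega))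
      refine (congrArg (PP J m N) ?_).mpr this
      funext l
      simp only [EZ]
      rw [EE_rec1]
      · congr 3; push_cast; ring
      · intro h; apply hm; push_cast at h; exact_mod_cast (by linear_combination h : (m : ℂ) = 0)
    have r2 : ∀ p a c, p + 1 + a + (c + 1) = t + 1 → t + 1 ≤ J →
        PP J m N (EZ m N (p + 1) a (c + 1)) := by
      intro p a c h hJ
      have := PP_lin J m N _ _ ((N : ℂ)⁻¹) (ih (p + 1) a c (by omega) (by omega) (by omega))
        (ih p a (c + 1) (by omega) (by omega) (by omega))
      refine (congrArg (PP J m N) ?_).mpr this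
      funext l
      simp only [EZ]
      rw [EE_rec2]
      · congr 3; push_cast; ring
      · intro h; apply hN; push_cast at h; exact_mod_cast (by linear_combination h : (N : ℂ) = 0)
    have r3 : ∀ p a c, p + (a + 1) + (c + 1) = t + 1 → t + 1 ≤ J →
        PP J m N (EZ m N p (a + 1) (c + 1)) := by
      intro p a c h hJ
      have := PP_lin J m N _ _ (((N : ℂ) - m)⁻¹)
        (ih p (a + 1) c (by omega) (by omega) (by omega))
        (ih p a (c + 1) (by omega) (by omega) (by omega))
      refine (congrArg (PP J m N) ?_).mpr this
      funext l
      simp only [EZ]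
      rw [EE_rec3]
      · congr 3; push_cast; ring
      · intro h; apply hmN; push_cast at h; exact_mod_cast (by linear_combination h : (N : ℂ) = m)
    intro p a c h _ hJ
    rcases p with _ | p <;> rcases a with _ | a <;> rcases c with _ | c
    · omega
    · unfold PP
      simp only [EZ_single3]
      rw [RR_ne, RR_ne, neg_add_cancel, Int.cast_zero, RR_zero _ _ (by omega) (by omega), zero_add,
        zero_add]
      · refine (lim_base (c + 1) (by omega) N).congr fun L => sum_congr rfl fun l _ => ?_
        rw [coeff_lin_zero _ _ (by omega)]
      · norm_cast; omega
      · norm_cast; omega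
    · unfold PP
      simp only [EZ_single2]
      rw [RR_ne, RR_ne J ((-N + m : ℤ) : ℂ), neg_add_cancel, Int.cast_zero,
        RR_zero _ _ (by omega) (by omega), zero_add, add_zero]
      · refine (lim_base (a + 1) (by omega) m).congr fun L => sum_congr rfl fun l _ => ?_
        rw [coeff_lin_zero _ _ (by omega)]
      · norm_cast; omega
      · norm_cast; omega
    · exact r3 _ _ _ h hJ
    · unfold PP
      simp only [EZ_single1]
      rw [RR_ne J ((-m : ℤ) : ℂ), RR_ne J ((-N : ℤ) : ℂ), Int.cast_zero,
        RR_zero _ _ (by omega) (by omega), add_zero, add_zero]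
      · refine (lim_base0 (p + 1) (by omega)).congr fun L => sum_congr rfl fun l _ => ?_
        rw [coeff_lin_zero _ _ (by omega)]
      · norm_cast; omega
      · norm_cast; omega
    · exact r2 _ _ _ h hJ
    · exact r1 _ _ _ h hJ
    · exact r1 _ _ _ h hJ

/-- `RR` together with the `ζ(0)` term. -/
noncomputable def RR0 (J : ℕ) (f : LaurentSeries ℂ) : ℂ :=
  ∑ j ∈ range (J + 1), 2 * riemannZeta (2 * (j : ℂ)) * f.coeff (-((2 * j : ℕ) : ℤ))

lemma RR0_eq (J : ℕ) (f : LaurentSeries ℂ) : RR0 J f = RR J f - f.coeff 0 := by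
  unfold RR0 RR
  rw [sum_range_succ']
  simp [riemannZeta_zero]
  ring

lemma inner_lim (m N : ℤ) (hm : m ≠ 0) (hN : N ≠ 0) (hmN : N ≠ m) (p a c : ℕ) (hp : 0 < p)
    (ha : 0 < a) (hc : 0 < c) (J : ℕ) (hJ : p + a + c ≤ J) :
    Tendsto (fun L : ℕ => ∑ l ∈ Icc (-(L : ℤ)) (L : ℤ),
      ((l : ℂ) ^ p * ((l + m : ℤ) : ℂ) ^ a * ((l + N : ℤ) : ℂ) ^ c)⁻¹) atTop
    (𝓝 (RR0 J (EZ m N p a c 0) + RR0 J (EZ m N p a c (-m)) + RR0 J (EZ m N p a c (-N)))) := by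
  have h := PP_main J m N hm hN hmN _ p a c rfl (by omega) hJ
  unfold PP at h
  have h2 := h.sub_const ((EZ m N p a c 0).coeff 0 + (EZ m N p a c (-m)).coeff 0 +
    (EZ m N p a c (-N)).coeff 0)
  refine (h2.congr' ?_).trans (le_of_eq ?_)
  · filter_upwards [eventually_ge_atTop (m.natAbs + N.natAbs)] with L hL
    set S : Finset ℤ := {0, -m, -N} with hS
    have hsub : S ⊆ Icc (-(L : ℤ)) (L : ℤ) := by
      intro x hx
      simp only [hS, mem_insert, mem_singleton] at hx
      rw [mem_Icc]; omega
    rw [← sum_sdiff hsub, ← sum_sdiff hsub]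
    have h3 : ∑ l ∈ S, (EZ m N p a c l).coeff 0 = (EZ m N p a c 0).coeff 0 +
      (EZ m N p a c (-m)).coeff 0 + (EZ m N p a c (-N)).coeff 0 := by
      rw [hS, sum_insert, sum_insert, sum_singleton, add_assoc]
      · simp only [mem_singleton]; omega
      · simp only [mem_insert, mem_singleton]; omega
    have h4 : ∑ l ∈ S, ((l : ℂ) ^ p * ((l + m : ℤ) : ℂ) ^ a * ((l + N : ℤ) : ℂ) ^ c)⁻¹ = 0 := by
      refine sum_eq_zero fun l hl => ?_
      simp only [hS, mem_insert, mem_singleton] at hl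
      rcases hl with rfl | rfl | rfl
      · simp [hp.ne']
      · simp [ha.ne']
      · simp [hc.ne']
    rw [h3, h4, add_sub_cancel_right, add_zero]
    refine sum_congr rfl fun l hl => ?_
    rw [Finset.mem_sdiff] at hl
    simp only [hS, mem_insert, mem_singleton, not_or] at hl
    rw [EZ, coeff_EE_zero]
    · norm_cast; omega
    · norm_cast; omega
    · norm_cast; omega
  · simp only [RR0_eq]; congr 1; ring

end A3

namespace A3
open Filter Topology

section PartialFractions
variable {K : Type*} [Field K]

/-- One half of the partial fraction decomposition of `1/(x^{P+1} y^{C+1})`, `x + y = d`. -/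
def HH (d : K) (P C : ℕ) (x : K) : K :=
  ∑ ω ∈ range (P + 1), (Nat.choose (P + C - ω) C : K) *
    ((d ^ (P + C + 1 - ω))⁻¹ * (x ^ (ω + 1))⁻¹)

lemma HH_rec (d : K) (hd : d ≠ 0) (P C : ℕ) (x : K) :
    d * HH d (P + 1) (C + 1) x = HH d P (C + 1) x + HH d (P + 1) C x := by
  unfold HH
  have e1 : ∀ ω ∈ range (P + 1), (Nat.choose (P + (C + 1) - ω) (C + 1) : K) *
      ((d ^ (P + (C + 1) + 1 - ω))⁻¹ * (x ^ (ω + 1))⁻¹) =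
      (Nat.choose (P + C + 1 - ω) (C + 1) : K) *
      ((d ^ (P + C + 2 - ω))⁻¹ * (x ^ (ω + 1))⁻¹) := by
    intro ω _
    rw [show P + (C + 1) - ω = P + C + 1 - ω by omega,
      show P + (C + 1) + 1 - ω = P + C + 2 - ω by omega]
  have e2 : ∑ ω ∈ range (P + 1), (Nat.choose (P + C + 1 - ω) (C + 1) : K) *
      ((d ^ (P + C + 2 - ω))⁻¹ * (x ^ (ω + 1))⁻¹) =
      ∑ ω ∈ range (P + 2), (Nat.choose (P + C + 1 - ω) (C + 1) : K) *
      ((d ^ (P + C + 2 - ω))⁻¹ * (x ^ (ω + 1))⁻¹) := by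
    rw [sum_range_succ _ (P + 1), Nat.choose_eq_zero_of_lt (by omega)]
    simp
  rw [sum_congr rfl e1, e2, mul_sum, ← sum_add_distrib]
  refine sum_congr rfl fun ω hω => ?_
  rw [mem_range] at hω
  rw [show P + 1 + (C + 1) - ω = (P + C + 1 - ω) + 1 by omega,
    show P + 1 + (C + 1) + 1 - ω = (P + C + 2 - ω) + 1 by omega,
    show P + 1 + C - ω = P + C + 1 - ω by omega,
    show P + 1 + C + 1 - ω = P + C + 2 - ω by omega, Nat.choose_succ_succ, pow_succ]
  push_cast
  field_simp
  ring

lemma HH_rec0 (d : K) (hd : d ≠ 0) (P : ℕ) (x : K) :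
    d * HH d (P + 1) 0 x = HH d P 0 x + (x ^ (P + 2))⁻¹ := by
  unfold HH
  rw [sum_range_succ, mul_add, mul_sum]
  congr 1
  · refine sum_congr rfl fun ω hω => ?_
    rw [mem_range] at hω
    rw [show P + 1 + 0 + 1 - ω = (P + 0 + 1 - ω) + 1 by omega, pow_succ]
    simp only [Nat.choose_zero_right]
    field_simp
  · simp
    field_simp

lemma HH_0 (d : K) (hd : d ≠ 0) (C : ℕ) (x : K) : d * HH d 0 (C + 1) x = HH d 0 C x := by
  simp [HH]
  field_simp
  ring

lemma pf2 (d x y : K) (hd : d ≠ 0) (hx : x ≠ 0) (hy : y ≠ 0) (h : x + y = d) :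
    ∀ P C : ℕ, (x ^ (P + 1) * y ^ (C + 1))⁻¹ = HH d P C x + HH d C P y := by
  intro P
  induction P with
  | zero =>
    intro C
    induction C with
    | zero =>
      simp [HH]
      field_simp
      rw [← h]; ring
    | succ C ih =>
      apply mul_left_cancel₀ hd
      rw [mul_add, HH_rec0 d hd, HH_0 d hd, ← add_assoc, ← ih, ← h]
      field_simp
      ring
  | succ P ihP =>
    intro C
    induction C with
    | zero =>
      apply mul_left_cancel₀ hd
      have := ihP 0
      rw [mul_add, HH_rec0 d hd, HH_0 d hd]
      have e : HH d P 0 x + (x ^ (P + 2))⁻¹ + HH d 0 P y =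
        (HH d P 0 x + HH d 0 P y) + (x ^ (P + 2))⁻¹ := by ring
      rw [e, ← this, ← h]
      field_simp
      ring
    | succ C ih =>
      apply mul_left_cancel₀ hd
      have := ihP (C + 1)
      rw [mul_add, HH_rec d hd, HH_rec d hd]
      have e : HH d P (C + 1) x + HH d (P + 1) C x + (HH d C (P + 1) y + HH d (C + 1) P y) =
        (HH d P (C + 1) x + HH d (C + 1) P y) + (HH d (P + 1) C x + HH d C (P + 1) y) := by ring
      rw [e, ← this, ← ih, ← h]
      field_simp
      ring

end PartialFractions

lemma coeff_X_lin (a k i : ℕ) (x : ℂ) (hx : x ≠ 0) (hk : k ≤ a) :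
    ((lin 0 ^ a)⁻¹ * (lin x ^ i)⁻¹).coeff (-(k : ℤ)) =
      (-1) ^ (a - k) * (Nat.choose (a - k + i - 1) (a - k) : ℂ) * (x ^ (i + (a - k)))⁻¹ := by
  rw [lin_zero_pow_inv, lin_pow_inv x hx, HahnSeries.coeff_single_mul, one_mul]
  have : -(k : ℤ) - -(a : ℤ) = ((a - k : ℕ) : ℤ) := by omega
  rw [this, HahnSeries.ofPowerSeries_apply_coeff, coeff_pinv]

lemma laurent_inv_neg_one : (-1 : LaurentSeries ℂ)⁻¹ = -1 :=
  (eq_inv_of_mul_eq_one_right (by ring)).symm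

lemma EE_mid (m n : ℂ) (P a C : ℕ) (hN : m + n ≠ 0) :
    EE (-m) 0 n (P + 1) a (C + 1) =
      HahnSeries.C ((-1) ^ (P + 1)) *
      (∑ ω ∈ range (P + 1), HahnSeries.C ((Nat.choose (P + C - ω) C : ℂ) *
        ((m + n) ^ (P + C + 1 - ω))⁻¹ * (-1) ^ (ω + 1)) *
          ((lin 0 ^ a)⁻¹ * (lin (-m) ^ (ω + 1))⁻¹) +
       ∑ ω ∈ range (C + 1), HahnSeries.C ((Nat.choose (P + C - ω) P : ℂ) *
        ((m + n) ^ (P + C + 1 - ω))⁻¹) *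
          ((lin 0 ^ a)⁻¹ * (lin n ^ (ω + 1))⁻¹)) := by
  have hd : (HahnSeries.C (m + n) : LaurentSeries ℂ) ≠ 0 := by
    rw [Ne, map_eq_zero]; exact hN
  have hs : -lin (-m) + lin n = HahnSeries.C (m + n) := by
    have := lin_sub n (-m)
    rw [show m + n = n - -m by ring, ← this]; ring
  have h := pf2 (HahnSeries.C (m + n) : LaurentSeries ℂ) (-lin (-m)) (lin n) hd
    (neg_ne_zero.2 (lin_ne_zero _)) (lin_ne_zero _) hs P C
  have e0 : EE (-m) 0 n (P + 1) a (C + 1) = HahnSeries.C ((-1) ^ (P + 1)) *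
      ((lin 0 ^ a)⁻¹ * ((-lin (-m)) ^ (P + 1) * lin n ^ (C + 1))⁻¹) := by
    unfold EE
    rw [neg_pow (lin (-m)), map_pow, map_neg, map_one, mul_inv, mul_inv, ← inv_pow (-1 : LaurentSeries ℂ),
      laurent_inv_neg_one]
    have : (-1 : LaurentSeries ℂ) ^ (P + 1) * (-1) ^ (P + 1) = 1 := by
      rw [← mul_pow, show (-1 : LaurentSeries ℂ) * -1 = 1 by ring, one_pow]
    linear_combination (-(lin (-m) ^ (P + 1))⁻¹ * (lin 0 ^ a)⁻¹ * (lin n ^ (C + 1))⁻¹) * this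
  rw [e0, h]
  congr 1
  rw [mul_add, HH, HH, mul_sum, mul_sum]
  congr 1
  · refine sum_congr rfl fun ω _ => ?_
    rw [neg_pow (lin (-m)), mul_inv, ← inv_pow (-1 : LaurentSeries ℂ), laurent_inv_neg_one]
    simp only [map_mul, map_inv₀, map_pow, map_neg, map_one, map_natCast]
    ring
  · refine sum_congr rfl fun ω _ => ?_
    rw [Nat.add_comm C P]
    simp only [map_mul, map_inv₀, map_pow, map_natCast]
    ring

lemma coeff_EE_mid (m n : ℂ) (P a C k : ℕ) (hm : m ≠ 0) (hn : n ≠ 0) (hN : m + n ≠ 0)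
    (hk : k ≤ a) :
    (EE (-m) 0 n (P + 1) a (C + 1)).coeff (-(k : ℤ)) =
      (-1) ^ (P + 1) * ∑ ω ∈ range (P + 1), (Nat.choose (ω + (a - k)) ω : ℂ) *
        (Nat.choose (P + C - ω) C : ℂ) *
        ((m ^ (a - k + ω + 1))⁻¹ * ((m + n) ^ (P + C + 1 - ω))⁻¹) +
      (-1) ^ (P + 1 + (a - k)) * ∑ ω ∈ range (C + 1), (Nat.choose (ω + (a - k)) ω : ℂ) *
        (Nat.choose (P + C - ω) P : ℂ) *
        ((n ^ (a - k + ω + 1))⁻¹ * ((m + n) ^ (P + C + 1 - ω))⁻¹) := by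
  rw [EE_mid m n P a C hN, HahnSeries.C_mul_eq_smul, HahnSeries.coeff_smul, HahnSeries.coeff_add,
    smul_eq_mul, mul_add, pow_add (-1 : ℂ) (P + 1) (a - k), mul_assoc ((-1 : ℂ) ^ (P + 1))]
  simp only [HahnSeries.coeff_sum, HahnSeries.C_mul_eq_smul, HahnSeries.coeff_smul, smul_eq_mul]
  congr 2
  · refine sum_congr rfl fun ω _ => ?_
    rw [coeff_X_lin _ _ _ _ (neg_ne_zero.2 hm) hk]
    rw [show a - k + (ω + 1) - 1 = (a - k) + ω by omega, Nat.choose_symm_add,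
      show ω + (a - k) = a - k + ω by omega, neg_pow m, mul_inv,
      show ω + 1 + (a - k) = a - k + ω + 1 by omega, ← inv_pow (-1 : ℂ), inv_neg, inv_one]
    have : (-1 : ℂ) ^ (ω + 1) * (-1) ^ (a - k) * (-1) ^ (a - k + ω + 1) = 1 := by
      rw [← pow_add, ← pow_add]
      exact Even.neg_one_pow ⟨a - k + ω + 1, by ring⟩
    linear_combination (((a - k + ω).choose ω : ℂ) * ((P + C - ω).choose C : ℂ) *
      (m ^ (a - k + ω + 1))⁻¹ * ((m + n) ^ (P + C + 1 - ω))⁻¹) * this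
  · rw [mul_sum]
    refine sum_congr rfl fun ω _ => ?_
    rw [coeff_X_lin _ _ _ _ hn hk]
    rw [show a - k + (ω + 1) - 1 = (a - k) + ω by omega, Nat.choose_symm_add,
      show ω + (a - k) = a - k + ω by omega,
      show ω + 1 + (a - k) = a - k + ω + 1 by omega]
    ring

lemma RR0_trunc (J p : ℕ) (f : LaurentSeries ℂ) (hp : p ≤ J)
    (h : ∀ k : ℕ, p < k → f.coeff (-(k : ℤ)) = 0) :
    RR0 J f = ∑ j ∈ range (p / 2 + 1),
      2 * riemannZeta (2 * (j : ℂ)) * f.coeff (-((2 * j : ℕ) : ℤ)) := by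
  unfold RR0
  symm
  apply sum_subset
  · intro j hj; rw [mem_range] at *; omega
  · intro j _ hj
    rw [mem_range] at hj
    rw [h _ (by omega), mul_zero]

lemma neg_one_pow_sub_two_mul (p j : ℕ) (h : 2 * j ≤ p) : (-1 : ℂ) ^ (p - 2 * j) = (-1) ^ p := by
  have : p = p - 2 * j + 2 * j := by omega
  conv_rhs => rw [this, pow_add, pow_mul]
  simp

lemma val1 (m N : ℤ) (hm : m ≠ 0) (hN : N ≠ 0) (p a c : ℕ) (hc : 0 < c) (J : ℕ)
    (hJ : p ≤ J) :
    RR0 J (EZ m N p a c 0) = 2 * (-1 : ℂ) ^ p * ∑ j ∈ range (p / 2 + 1), riemannZeta (2 * j) *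
      ∑ ω ∈ range (p - 2 * j + 1),
        (Nat.choose (ω + a - 1) ω : ℂ) * (Nat.choose (p + c - 2 * j - ω - 1) (c - 1) : ℂ) *
          (((m : ℂ) ^ (a + ω))⁻¹ * ((N : ℂ) ^ (p + c - 2 * j - ω))⁻¹) := by
  have hm' : (m : ℂ) ≠ 0 := by exact_mod_cast hm
  have hN' : (N : ℂ) ≠ 0 := by exact_mod_cast hN
  have e : EZ m N p a c 0 = EE 0 m N p a c := by simp [EZ]
  rw [e, RR0_trunc J p _ hJ fun k hk => coeff_EE_pole_gt _ _ _ _ _ _ hm' hN' hk, mul_sum]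
  refine sum_congr rfl fun j hj => ?_
  rw [mem_range] at hj
  rw [coeff_EE_pole _ _ _ _ _ _ hm' hN' (by omega), neg_one_pow_sub_two_mul _ _ (by omega)]
  have : ∀ ω ∈ range (p - 2 * j + 1),
      (Nat.choose (ω + a - 1) ω : ℂ) * (Nat.choose (p - 2 * j - ω + c - 1) (p - 2 * j - ω) : ℂ) *
        (((m : ℂ) ^ (a + ω))⁻¹ * ((N : ℂ) ^ (c + (p - 2 * j - ω)))⁻¹) =
      (Nat.choose (ω + a - 1) ω : ℂ) * (Nat.choose (p + c - 2 * j - ω - 1) (c - 1) : ℂ) *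
          (((m : ℂ) ^ (a + ω))⁻¹ * ((N : ℂ) ^ (p + c - 2 * j - ω))⁻¹) := by
    intro ω hω
    rw [mem_range] at hω
    rw [show p - 2 * j - ω + c - 1 = (c - 1) + (p - 2 * j - ω) by omega, ← Nat.choose_symm_add,
      show p + c - 2 * j - ω - 1 = c - 1 + (p - 2 * j - ω) by omega,
      show p + c - 2 * j - ω = c + (p - 2 * j - ω) by omega]
  rw [sum_congr rfl this]
  ring

lemma val2 (m N : ℤ) (hmN : N ≠ m) (hN : N ≠ 0) (p a c : ℕ) (hp : 0 < p) (J : ℕ)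
    (hJ : c ≤ J) :
    RR0 J (EZ m N p a c (-N)) =
      2 * (-1 : ℂ) ^ (p + a) * ∑ j ∈ range (c / 2 + 1), riemannZeta (2 * j) *
      ∑ ω ∈ range (c - 2 * j + 1),
        (Nat.choose (ω + a - 1) ω : ℂ) * (Nat.choose (p + c - 2 * j - ω - 1) (p - 1) : ℂ) *
          ((((N - m : ℤ) : ℂ) ^ (a + ω))⁻¹ * ((N : ℂ) ^ (p + c - 2 * j - ω))⁻¹) := by
  have hm' : ((m - N : ℤ) : ℂ) ≠ 0 := by norm_cast; omega
  have hN' : ((-N : ℤ) : ℂ) ≠ 0 := by norm_cast; omega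
  have e : EZ m N p a c (-N) = EE 0 (m - N : ℤ) (-N : ℤ) c a p := by
    rw [EZ, neg_add_cancel, Int.cast_zero, show -N + m = m - N by ring]
    unfold EE; ring
  rw [e, RR0_trunc J c _ hJ fun k hk => coeff_EE_pole_gt _ _ _ _ _ _ hm' hN' hk, mul_sum]
  refine sum_congr rfl fun j hj => ?_
  rw [mem_range] at hj
  rw [coeff_EE_pole _ _ _ _ _ _ hm' hN' (by omega), neg_one_pow_sub_two_mul _ _ (by omega)]
  have : ∀ ω ∈ range (c - 2 * j + 1),
      (Nat.choose (ω + a - 1) ω : ℂ) * (Nat.choose (c - 2 * j - ω + p - 1) (c - 2 * j - ω) : ℂ) *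
        ((((m - N : ℤ) : ℂ) ^ (a + ω))⁻¹ * (((-N : ℤ) : ℂ) ^ (p + (c - 2 * j - ω)))⁻¹) =
      (-1) ^ (p + a + c) * ((Nat.choose (ω + a - 1) ω : ℂ) * (Nat.choose (p + c - 2 * j - ω - 1) (p - 1) : ℂ) *
          ((((N - m : ℤ) : ℂ) ^ (a + ω))⁻¹ * ((N : ℂ) ^ (p + c - 2 * j - ω))⁻¹)) := by
    intro ω hω
    rw [mem_range] at hω
    rw [show c - 2 * j - ω + p - 1 = (p - 1) + (c - 2 * j - ω) by omega, ← Nat.choose_symm_add,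
      show p + c - 2 * j - ω - 1 = p - 1 + (c - 2 * j - ω) by omega,
      show p + c - 2 * j - ω = p + (c - 2 * j - ω) by omega,
      show m - N = -(N - m) by ring, Int.cast_neg, Int.cast_neg, neg_pow, neg_pow (N : ℂ),
      mul_inv, mul_inv, ← inv_pow (-1 : ℂ), ← inv_pow (-1 : ℂ), inv_neg, inv_one]
    have : (-1 : ℂ) ^ (a + ω) * (-1) ^ (p + (c - 2 * j - ω)) = (-1) ^ (p + a + c) := by
      rw [← pow_add, ← neg_one_pow_sub_two_mul (p + a + c) j (by omega)]
      congr 1; omega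
    rw [← this]; ring
  rw [sum_congr rfl this, ← mul_sum]
  have h1 : (-1 : ℂ) ^ c * (-1) ^ (p + a + c) = (-1) ^ (p + a) := by
    rw [pow_add _ (p + a) c, mul_left_comm, ← mul_pow]; simp
  rw [← h1]
  ring

lemma val3 (m n : ℤ) (hm : m ≠ 0) (hn : n ≠ 0) (hN : m + n ≠ 0) (p a c : ℕ) (hp : 0 < p)
    (hc : 0 < c) (J : ℕ) (hJ : a ≤ J) :
    RR0 J (EZ m (m + n) p a c (-m)) =
      2 * (-1 : ℂ) ^ p * ∑ j ∈ range (a / 2 + 1), riemannZeta (2 * j) *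
      ∑ ω ∈ range p,
        (Nat.choose (ω + a - 2 * j) ω : ℂ) * (Nat.choose (p + c - 2 - ω) (c - 1) : ℂ) *
          (((m : ℂ) ^ (a - 2 * j + ω + 1))⁻¹ * (((m + n : ℤ) : ℂ) ^ (p + c - 1 - ω))⁻¹) +
      2 * (-1 : ℂ) ^ (p + a) * ∑ j ∈ range (a / 2 + 1), riemannZeta (2 * j) *
      ∑ ω ∈ range c,
        (Nat.choose (ω + a - 2 * j) ω : ℂ) * (Nat.choose (p + c - 2 - ω) (p - 1) : ℂ) *
          (((n : ℂ) ^ (a - 2 * j + ω + 1))⁻¹ * (((m + n : ℤ) : ℂ) ^ (p + c - 1 - ω))⁻¹) := by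
  obtain ⟨P, rfl⟩ : ∃ P, p = P + 1 := ⟨p - 1, by omega⟩
  obtain ⟨C, rfl⟩ : ∃ C, c = C + 1 := ⟨c - 1, by omega⟩
  have hm' : (m : ℂ) ≠ 0 := by exact_mod_cast hm
  have hn' : (n : ℂ) ≠ 0 := by exact_mod_cast hn
  have hN' : (m : ℂ) + n ≠ 0 := by exact_mod_cast hN
  have e : EZ m (m + n) (P + 1) a (C + 1) (-m) = EE (-(m : ℂ)) 0 n (P + 1) a (C + 1) := by
    rw [EZ, neg_add_cancel, Int.cast_zero, show -m + (m + n) = n by ring, Int.cast_neg]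
  have hg : ∀ k : ℕ, a < k → (EE (-(m : ℂ)) 0 n (P + 1) a (C + 1)).coeff (-(k : ℤ)) = 0 := by
    intro k hk
    rw [EE_swap1]
    exact coeff_EE_pole_gt _ _ _ _ _ _ (neg_ne_zero.2 hm') hn' hk
  rw [e, RR0_trunc J a _ hJ hg, mul_sum, mul_sum, ← sum_add_distrib]
  refine sum_congr rfl fun j hj => ?_
  rw [mem_range] at hj
  rw [coeff_EE_mid _ _ _ _ _ _ hm' hn' hN' (by omega), pow_add _ (P + 1) (a - 2 * j),
    neg_one_pow_sub_two_mul a j (by omega), ← pow_add]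
  have e1 : ∀ x : ℂ, ∀ Q : ℕ, ∀ R : ℕ, ∑ ω ∈ range (R + 1), (Nat.choose (ω + (a - 2 * j)) ω : ℂ) *
        (Nat.choose (P + C - ω) Q : ℂ) *
        ((x ^ (a - 2 * j + ω + 1))⁻¹ * (((m : ℂ) + n) ^ (P + C + 1 - ω))⁻¹) =
      ∑ ω ∈ range (R + 1),
        (Nat.choose (ω + a - 2 * j) ω : ℂ) * (Nat.choose (P + 1 + (C + 1) - 2 - ω) (Q + 1 - 1) : ℂ) *
          ((x ^ (a - 2 * j + ω + 1))⁻¹ * (((m + n : ℤ) : ℂ) ^ (P + 1 + (C + 1) - 1 - ω))⁻¹) := by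
    intro x Q R
    refine sum_congr rfl fun ω _ => ?_
    rw [show ω + a - 2 * j = ω + (a - 2 * j) by omega,
      show P + 1 + (C + 1) - 2 - ω = P + C - ω by omega,
      show P + 1 + (C + 1) - 1 - ω = P + C + 1 - ω by omega, Nat.add_sub_cancel, Int.cast_add]
  rw [e1, e1]
  ring

end A3

namespace A3
open Filter Topology

lemma neg_pow_inv (u : ℂ) (k : ℕ) : ((-u) ^ k)⁻¹ = (-1) ^ k * (u ^ k)⁻¹ := by
  rw [neg_pow, mul_inv, ← inv_pow (-1 : ℂ), inv_neg, inv_one]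

lemma summable_sq_shift : Summable (fun n : ℕ => (((n + 1 : ℕ) : ℝ) ^ 2)⁻¹) := by
  have h : Summable (fun n : ℕ => ((n : ℝ) ^ 2)⁻¹) := by
    simp
  exact (summable_nat_add_iff 1).2 h

lemma norm_cpow_ge (n : ℕ) (hn : 0 < n) (s : ℂ) (hs : 1 ≤ s.re) : (n : ℝ) ≤ ‖(n : ℂ) ^ s‖ := by
  rw [Complex.norm_natCast_cpow_of_pos hn]
  have h1 : (1 : ℝ) ≤ n := by exact_mod_cast hn
  calc (n : ℝ) = (n : ℝ) ^ (1 : ℝ) := (Real.rpow_one _).symm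
    _ ≤ _ := Real.rpow_le_rpow_of_exponent_le h1 hs

lemma summable_Z (s₁ s₂ s₃ s₄ s₅ s₆ : ℂ) (h₁ : 1 ≤ s₁.re) (h₂ : 1 ≤ s₂.re) (h₃ : 1 ≤ s₃.re)
    (h₄ : 1 ≤ s₄.re) (h₅ : 1 ≤ s₅.re) (h₆ : 1 ≤ s₆.re) :
    Summable (fun t : ℕ × ℕ × ℕ => (1 : ℂ) /
      ((((t.1 + 1 : ℕ) : ℂ)) ^ s₁ * (((t.2.1 + 1 : ℕ) : ℂ)) ^ s₂ *
        (((t.2.2 + 1 : ℕ) : ℂ)) ^ s₃ * (((t.1 + 1 + (t.2.1 + 1) : ℕ) : ℂ)) ^ s₄ *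
        (((t.2.1 + 1 + (t.2.2 + 1) : ℕ) : ℂ)) ^ s₅ *
        (((t.1 + 1 + (t.2.1 + 1) + (t.2.2 + 1) : ℕ) : ℂ)) ^ s₆)) := by
  have hS : Summable (fun t : ℕ × ℕ × ℕ => (((t.1 + 1 : ℕ) : ℝ) ^ 2)⁻¹ *
      ((((t.2.1 + 1 : ℕ) : ℝ) ^ 2)⁻¹ * (((t.2.2 + 1 : ℕ) : ℝ) ^ 2)⁻¹)) := by
    refine summable_sq_shift.mul_of_nonneg
      (summable_sq_shift.mul_of_nonneg summable_sq_shift ?_ ?_) ?_ ?_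
    all_goals intro t; simp only [Pi.zero_apply]; positivity
  refine Summable.of_norm_bounded hS fun t => ?_
  obtain ⟨x, y, z⟩ := t
  simp only [norm_div, norm_one, norm_mul]
  rw [← mul_inv, ← mul_inv, one_div]
  have e1 := norm_cpow_ge (x + 1) (by omega) s₁ h₁
  have e2 := norm_cpow_ge (y + 1) (by omega) s₂ h₂
  have e3 := norm_cpow_ge (z + 1) (by omega) s₃ h₃
  have e4 := norm_cpow_ge (x + 1 + (y + 1)) (by omega) s₄ h₄
  have e5 := norm_cpow_ge (y + 1 + (z + 1)) (by omega) s₅ h₅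
  have e6 := norm_cpow_ge (x + 1 + (y + 1) + (z + 1)) (by omega) s₆ h₆
  have e4' : ((x + 1 : ℕ) : ℝ) ≤ _ := le_trans (by norm_cast; omega) e4
  have e5' : ((y + 1 : ℕ) : ℝ) ≤ _ := le_trans (by norm_cast; omega) e5
  have e6' : ((z + 1 : ℕ) : ℝ) ≤ _ := le_trans (by norm_cast; omega) e6
  refine inv_anti₀ (by positivity) ?_
  calc ((x + 1 : ℕ) : ℝ) ^ 2 * (((y + 1 : ℕ) : ℝ) ^ 2 * ((z + 1 : ℕ) : ℝ) ^ 2)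
      = ((x + 1 : ℕ) : ℝ) * ((y + 1 : ℕ) : ℝ) * ((z + 1 : ℕ) : ℝ) * ((x + 1 : ℕ) : ℝ) *
        ((y + 1 : ℕ) : ℝ) * ((z + 1 : ℕ) : ℝ) := by ring
    _ ≤ _ := by gcongr

/-- The summand with all six linear forms as independent arguments. -/
noncomputable def Gf (p q a b c : ℕ) (s : ℂ) (l m lm mn lmn : ℤ) (n : ℕ) : ℂ :=
  ((l : ℂ) ^ p)⁻¹ * ((m : ℂ) ^ q)⁻¹ * ((n : ℂ) ^ s)⁻¹ * ((lm : ℂ) ^ a)⁻¹ * ((mn : ℂ) ^ b)⁻¹ *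
    ((lmn : ℂ) ^ c)⁻¹

/-- The summand over `((m,n),l)`. -/
noncomputable def GG (p q a b c : ℕ) (s : ℂ) (v : (ℤ × ℕ) × ℤ) : ℂ :=
  Gf p q a b c s v.2 v.1.1 (v.2 + v.1.1) (v.1.1 + v.1.2 + 1) (v.2 + (v.1.1 + v.1.2 + 1))
    (v.1.2 + 1)

lemma chamber (G : (ℤ × ℕ) × ℤ → ℂ) (Ch : (ℤ × ℕ) × ℤ → Prop) [DecidablePred Ch]
    (φ : ℕ × ℕ × ℕ → (ℤ × ℕ) × ℤ) (s₁ s₂ s₃ s₄ s₅ s₆ sgn : ℂ)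
    (h : 1 ≤ s₁.re ∧ 1 ≤ s₂.re ∧ 1 ≤ s₃.re ∧ 1 ≤ s₄.re ∧ 1 ≤ s₅.re ∧ 1 ≤ s₆.re)
    (hinj : ∀ t t', φ t = φ t' → t = t')
    (hmem : ∀ t, Ch (φ t)) (hsurj : ∀ v, Ch v → ∃ t, φ t = v)
    (hval : ∀ x y z : ℕ, G (φ (x, y, z)) = sgn * (1 /
      ((((x + 1 : ℕ) : ℂ)) ^ s₁ * (((y + 1 : ℕ) : ℂ)) ^ s₂ *
        (((z + 1 : ℕ) : ℂ)) ^ s₃ * (((x + 1 + (y + 1) : ℕ) : ℂ)) ^ s₄ *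
        (((y + 1 + (z + 1) : ℕ) : ℂ)) ^ s₅ *
        (((x + 1 + (y + 1) + (z + 1) : ℕ) : ℂ)) ^ s₆))) :
    HasSum (fun v => if Ch v then G v else 0) (sgn * ZA3 s₁ s₂ s₃ s₄ s₅ s₆) := by
  obtain ⟨h₁, h₂, h₃, h₄, h₅, h₆⟩ := h
  have hs := ((summable_Z s₁ s₂ s₃ s₄ s₅ s₆ h₁ h₂ h₃ h₄ h₅ h₆).hasSum).mul_left sgn
  have hi : Function.Injective φ := fun t t' h => hinj t t' h
  refine (hi.hasSum_iff ?_).1 ?_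
  · intro v hv
    rw [if_neg]
    intro hc
    exact hv (hsurj v hc)
  · refine hs.congr_fun ?_
    intro t
    simp only [Function.comp_apply, if_pos (hmem t)]
    exact hval t.1 t.2.1 t.2.2

end A3

namespace A3
open Filter Topology

lemma chamber1 (p q a b c : ℕ) (hp : 0 < p) (hq : 0 < q) (ha : 0 < a)
    (hb : 0 < b) (hc : 0 < c) (s : ℂ) (hs : 1 < s.re) :
    HasSum (fun v : (ℤ × ℕ) × ℤ => if 0 < v.2 ∧ 0 < v.1.1 ∧ 0 < ((v.1.2 : ℤ) + 1) then
      GG p q a b c s v else 0) (1 * ZA3 p q s a b c) := by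
  refine chamber (GG p q a b c s) (fun v => 0 < v.2 ∧ 0 < v.1.1 ∧ 0 < ((v.1.2 : ℤ) + 1))
    (fun t => ((((t.2.1 : ℕ) : ℤ) + 1, t.2.2), ((t.1 : ℕ) : ℤ) + 1))
    p q s a b c (1) ?_ ?_ ?_ ?_ ?_
  · simp only [natCast_re, Nat.one_le_cast]
    refine ⟨?_, ?_, ?_, ?_, ?_, ?_⟩ <;> first | omega | exact hs.le
  · rintro ⟨x, y, z⟩ ⟨x', y', z'⟩ h
    simp only [Prod.mk.injEq] at h ⊢
    omega
  · rintro ⟨x, y, z⟩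
    dsimp only
    omega
  · rintro v hv
    refine ⟨((v.2 - 1).toNat, (v.1.1 - 1).toNat, (((v.1.2 : ℤ) + 1) - 1).toNat), ?_⟩
    obtain ⟨⟨m, n⟩, l⟩ := v
    simp only [Prod.mk.injEq]
    dsimp only at hv
    omega
  · intro x y z
    have e : GG p q a b c s ((((y : ℕ) : ℤ) + 1, z),
        ((x : ℕ) : ℤ) + 1) =
      Gf p q a b c s ((x + 1 : ℕ) : ℤ) ((y + 1 : ℕ) : ℤ) ((x + 1 + (y + 1) : ℕ) : ℤ)
        ((y + 1 + (z + 1) : ℕ) : ℤ) ((x + 1 + (y + 1) + (z + 1) : ℕ) : ℤ) (z + 1) := by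
      unfold GG
      congr 1 <;> (push_cast; ring)
    refine e.trans ?_
    simp only [Gf, Int.cast_neg, Int.cast_natCast, neg_pow_inv, cpow_natCast, pow_add (-1 : ℂ),
      one_div, mul_inv]
    ring

lemma chamber2 (p q a b c : ℕ) (hp : 0 < p) (hq : 0 < q) (ha : 0 < a)
    (hb : 0 < b) (hc : 0 < c) (s : ℂ) (hs : 1 < s.re) :
    HasSum (fun v : (ℤ × ℕ) × ℤ => if 0 < -v.2 ∧ 0 < (v.2 + v.1.1) ∧ 0 < ((v.1.2 : ℤ) + 1) then
      GG p q a b c s v else 0) ((-1) ^ (p) * ZA3 p a s q c b) := by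
  refine chamber (GG p q a b c s) (fun v => 0 < -v.2 ∧ 0 < (v.2 + v.1.1) ∧ 0 < ((v.1.2 : ℤ) + 1))
    (fun t => ((((t.1 + t.2.1 + 1 : ℕ) : ℤ) + 1, t.2.2), -(((t.1 : ℕ) : ℤ) + 1)))
    p a s q c b ((-1) ^ (p)) ?_ ?_ ?_ ?_ ?_
  · simp only [natCast_re, Nat.one_le_cast]
    refine ⟨?_, ?_, ?_, ?_, ?_, ?_⟩ <;> first | omega | exact hs.le
  · rintro ⟨x, y, z⟩ ⟨x', y', z'⟩ h
    simp only [Prod.mk.injEq] at h ⊢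
    omega
  · rintro ⟨x, y, z⟩
    dsimp only
    omega
  · rintro v hv
    refine ⟨((-v.2 - 1).toNat, ((v.2 + v.1.1) - 1).toNat, (((v.1.2 : ℤ) + 1) - 1).toNat), ?_⟩
    obtain ⟨⟨m, n⟩, l⟩ := v
    simp only [Prod.mk.injEq]
    dsimp only at hv
    omega
  · intro x y z
    have e : GG p q a b c s ((((x + y + 1 : ℕ) : ℤ) + 1, z),
        -(((x : ℕ) : ℤ) + 1)) =
      Gf p q a b c s (-((x + 1 : ℕ) : ℤ)) ((x + 1 + (y + 1) : ℕ) : ℤ) ((y + 1 : ℕ) : ℤ)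
        ((x + 1 + (y + 1) + (z + 1) : ℕ) : ℤ) ((y + 1 + (z + 1) : ℕ) : ℤ) (z + 1) := by
      unfold GG
      congr 1 <;> (push_cast; ring)
    refine e.trans ?_
    simp only [Gf, Int.cast_neg, Int.cast_natCast, neg_pow_inv, cpow_natCast, pow_add (-1 : ℂ),
      one_div, mul_inv]
    ring

lemma chamber3 (p q a b c : ℕ) (hp : 0 < p) (hq : 0 < q) (ha : 0 < a)
    (hb : 0 < b) (hc : 0 < c) (s : ℂ) (hs : 1 < s.re) :
    HasSum (fun v : (ℤ × ℕ) × ℤ => if 0 < v.1.1 ∧ 0 < -(v.2 + v.1.1) ∧ 0 < (v.2 + v.1.1 + v.1.2 + 1) then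
      GG p q a b c s v else 0) ((-1) ^ (p + a) * ZA3 q a c p s b) := by
  refine chamber (GG p q a b c s) (fun v => 0 < v.1.1 ∧ 0 < -(v.2 + v.1.1) ∧ 0 < (v.2 + v.1.1 + v.1.2 + 1))
    (fun t => ((((t.1 : ℕ) : ℤ) + 1, t.2.1 + t.2.2 + 1), -(((t.1 + t.2.1 + 1 : ℕ) : ℤ) + 1)))
    q a c p s b ((-1) ^ (p + a)) ?_ ?_ ?_ ?_ ?_
  · simp only [natCast_re, Nat.one_le_cast]
    refine ⟨?_, ?_, ?_, ?_, ?_, ?_⟩ <;> first | omega | exact hs.le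
  · rintro ⟨x, y, z⟩ ⟨x', y', z'⟩ h
    simp only [Prod.mk.injEq] at h ⊢
    omega
  · rintro ⟨x, y, z⟩
    dsimp only
    omega
  · rintro v hv
    refine ⟨((v.1.1 - 1).toNat, (-(v.2 + v.1.1) - 1).toNat, ((v.2 + v.1.1 + v.1.2 + 1) - 1).toNat), ?_⟩
    obtain ⟨⟨m, n⟩, l⟩ := v
    simp only [Prod.mk.injEq]
    dsimp only at hv
    omega
  · intro x y z
    have e : GG p q a b c s ((((x : ℕ) : ℤ) + 1, y + z + 1),
        -(((x + y + 1 : ℕ) : ℤ) + 1)) =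
      Gf p q a b c s (-((x + 1 + (y + 1) : ℕ) : ℤ)) ((x + 1 : ℕ) : ℤ) (-((y + 1 : ℕ) : ℤ))
        ((x + 1 + (y + 1) + (z + 1) : ℕ) : ℤ) ((z + 1 : ℕ) : ℤ) (y + 1 + (z + 1)) := by
      unfold GG
      congr 1 <;> (push_cast; ring)
    refine e.trans ?_
    simp only [Gf, Int.cast_neg, Int.cast_natCast, neg_pow_inv, cpow_natCast, pow_add (-1 : ℂ),
      one_div, mul_inv]
    ring

lemma chamber4 (p q a b c : ℕ) (hp : 0 < p) (hq : 0 < q) (ha : 0 < a)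
    (hb : 0 < b) (hc : 0 < c) (s : ℂ) (hs : 1 < s.re) :
    HasSum (fun v : (ℤ × ℕ) × ℤ => if 0 < v.1.1 ∧ 0 < ((v.1.2 : ℤ) + 1) ∧ 0 < -(v.2 + v.1.1 + v.1.2 + 1) then
      GG p q a b c s v else 0) ((-1) ^ (p + a + c) * ZA3 q s c b a p) := by
  refine chamber (GG p q a b c s) (fun v => 0 < v.1.1 ∧ 0 < ((v.1.2 : ℤ) + 1) ∧ 0 < -(v.2 + v.1.1 + v.1.2 + 1))
    (fun t => ((((t.1 : ℕ) : ℤ) + 1, t.2.1), -(((t.1 + t.2.1 + t.2.2 + 2 : ℕ) : ℤ) + 1)))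
    q s c b a p ((-1) ^ (p + a + c)) ?_ ?_ ?_ ?_ ?_
  · simp only [natCast_re, Nat.one_le_cast]
    refine ⟨?_, ?_, ?_, ?_, ?_, ?_⟩ <;> first | omega | exact hs.le
  · rintro ⟨x, y, z⟩ ⟨x', y', z'⟩ h
    simp only [Prod.mk.injEq] at h ⊢
    omega
  · rintro ⟨x, y, z⟩
    dsimp only
    omega
  · rintro v hv
    refine ⟨((v.1.1 - 1).toNat, (((v.1.2 : ℤ) + 1) - 1).toNat, (-(v.2 + v.1.1 + v.1.2 + 1) - 1).toNat), ?_⟩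
    obtain ⟨⟨m, n⟩, l⟩ := v
    simp only [Prod.mk.injEq]
    dsimp only at hv
    omega
  · intro x y z
    have e : GG p q a b c s ((((x : ℕ) : ℤ) + 1, y),
        -(((x + y + z + 2 : ℕ) : ℤ) + 1)) =
      Gf p q a b c s (-((x + 1 + (y + 1) + (z + 1) : ℕ) : ℤ)) ((x + 1 : ℕ) : ℤ) (-((y + 1 + (z + 1) : ℕ) : ℤ))
        ((x + 1 + (y + 1) : ℕ) : ℤ) (-((z + 1 : ℕ) : ℤ)) (y + 1) := by
      unfold GG
      congr 1 <;> (push_cast; ring)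
    refine e.trans ?_
    simp only [Gf, Int.cast_neg, Int.cast_natCast, neg_pow_inv, cpow_natCast, pow_add (-1 : ℂ),
      one_div, mul_inv]
    ring

lemma chamber5 (p q a b c : ℕ) (hp : 0 < p) (hq : 0 < q) (ha : 0 < a)
    (hb : 0 < b) (hc : 0 < c) (s : ℂ) (hs : 1 < s.re) :
    HasSum (fun v : (ℤ × ℕ) × ℤ => if 0 < (v.2 + v.1.1) ∧ 0 < -v.1.1 ∧ 0 < (v.1.1 + v.1.2 + 1) then
      GG p q a b c s v else 0) ((-1) ^ (q) * ZA3 a q b p s c) := by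
  refine chamber (GG p q a b c s) (fun v => 0 < (v.2 + v.1.1) ∧ 0 < -v.1.1 ∧ 0 < (v.1.1 + v.1.2 + 1))
    (fun t => ((-(((t.2.1 : ℕ) : ℤ) + 1), t.2.1 + t.2.2 + 1), ((t.1 + t.2.1 + 1 : ℕ) : ℤ) + 1))
    a q b p s c ((-1) ^ (q)) ?_ ?_ ?_ ?_ ?_
  · simp only [natCast_re, Nat.one_le_cast]
    refine ⟨?_, ?_, ?_, ?_, ?_, ?_⟩ <;> first | omega | exact hs.le
  · rintro ⟨x, y, z⟩ ⟨x', y', z'⟩ h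
    simp only [Prod.mk.injEq] at h ⊢
    omega
  · rintro ⟨x, y, z⟩
    dsimp only
    omega
  · rintro v hv
    refine ⟨(((v.2 + v.1.1) - 1).toNat, (-v.1.1 - 1).toNat, ((v.1.1 + v.1.2 + 1) - 1).toNat), ?_⟩
    obtain ⟨⟨m, n⟩, l⟩ := v
    simp only [Prod.mk.injEq]
    dsimp only at hv
    omega
  · intro x y z
    have e : GG p q a b c s ((-(((y : ℕ) : ℤ) + 1), y + z + 1),
        ((x + y + 1 : ℕ) : ℤ) + 1) =
      Gf p q a b c s ((x + 1 + (y + 1) : ℕ) : ℤ) (-((y + 1 : ℕ) : ℤ)) ((x + 1 : ℕ) : ℤ)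
        ((z + 1 : ℕ) : ℤ) ((x + 1 + (y + 1) + (z + 1) : ℕ) : ℤ) (y + 1 + (z + 1)) := by
      unfold GG
      congr 1 <;> (push_cast; ring)
    refine e.trans ?_
    simp only [Gf, Int.cast_neg, Int.cast_natCast, neg_pow_inv, cpow_natCast, pow_add (-1 : ℂ),
      one_div, mul_inv]
    ring

lemma chamber6 (p q a b c : ℕ) (hp : 0 < p) (hq : 0 < q) (ha : 0 < a)
    (hb : 0 < b) (hc : 0 < c) (s : ℂ) (hs : 1 < s.re) :
    HasSum (fun v : (ℤ × ℕ) × ℤ => if 0 < (v.2 + v.1.1) ∧ 0 < ((v.1.2 : ℤ) + 1) ∧ 0 < -(v.1.1 + v.1.2 + 1) then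
      GG p q a b c s v else 0) ((-1) ^ (q + b) * ZA3 a s b c q p) := by
  refine chamber (GG p q a b c s) (fun v => 0 < (v.2 + v.1.1) ∧ 0 < ((v.1.2 : ℤ) + 1) ∧ 0 < -(v.1.1 + v.1.2 + 1))
    (fun t => ((-(((t.2.1 + t.2.2 + 1 : ℕ) : ℤ) + 1), t.2.1), ((t.1 + t.2.1 + t.2.2 + 2 : ℕ) : ℤ) + 1))
    a s b c q p ((-1) ^ (q + b)) ?_ ?_ ?_ ?_ ?_
  · simp only [natCast_re, Nat.one_le_cast]
    refine ⟨?_, ?_, ?_, ?_, ?_, ?_⟩ <;> first | omega | exact hs.le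
  · rintro ⟨x, y, z⟩ ⟨x', y', z'⟩ h
    simp only [Prod.mk.injEq] at h ⊢
    omega
  · rintro ⟨x, y, z⟩
    dsimp only
    omega
  · rintro v hv
    refine ⟨(((v.2 + v.1.1) - 1).toNat, (((v.1.2 : ℤ) + 1) - 1).toNat, (-(v.1.1 + v.1.2 + 1) - 1).toNat), ?_⟩
    obtain ⟨⟨m, n⟩, l⟩ := v
    simp only [Prod.mk.injEq]
    dsimp only at hv
    omega
  · intro x y z
    have e : GG p q a b c s ((-(((y + z + 1 : ℕ) : ℤ) + 1), y),
        ((x + y + z + 2 : ℕ) : ℤ) + 1) =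
      Gf p q a b c s ((x + 1 + (y + 1) + (z + 1) : ℕ) : ℤ) (-((y + 1 + (z + 1) : ℕ) : ℤ)) ((x + 1 : ℕ) : ℤ)
        (-((z + 1 : ℕ) : ℤ)) ((x + 1 + (y + 1) : ℕ) : ℤ) (y + 1) := by
      unfold GG
      congr 1 <;> (push_cast; ring)
    refine e.trans ?_
    simp only [Gf, Int.cast_neg, Int.cast_natCast, neg_pow_inv, cpow_natCast, pow_add (-1 : ℂ),
      one_div, mul_inv]
    ring

lemma chamber7 (p q a b c : ℕ) (hp : 0 < p) (hq : 0 < q) (ha : 0 < a)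
    (hb : 0 < b) (hc : 0 < c) (s : ℂ) (hs : 1 < s.re) :
    HasSum (fun v : (ℤ × ℕ) × ℤ => if 0 < -(v.2 + v.1.1) ∧ 0 < v.2 ∧ 0 < (v.1.1 + v.1.2 + 1) then
      GG p q a b c s v else 0) ((-1) ^ (q + a) * ZA3 a p b q c s) := by
  refine chamber (GG p q a b c s) (fun v => 0 < -(v.2 + v.1.1) ∧ 0 < v.2 ∧ 0 < (v.1.1 + v.1.2 + 1))
    (fun t => ((-(((t.1 + t.2.1 + 1 : ℕ) : ℤ) + 1), t.1 + t.2.1 + t.2.2 + 2), ((t.2.1 : ℕ) : ℤ) + 1))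
    a p b q c s ((-1) ^ (q + a)) ?_ ?_ ?_ ?_ ?_
  · simp only [natCast_re, Nat.one_le_cast]
    refine ⟨?_, ?_, ?_, ?_, ?_, ?_⟩ <;> first | omega | exact hs.le
  · rintro ⟨x, y, z⟩ ⟨x', y', z'⟩ h
    simp only [Prod.mk.injEq] at h ⊢
    omega
  · rintro ⟨x, y, z⟩
    dsimp only
    omega
  · rintro v hv
    refine ⟨((-(v.2 + v.1.1) - 1).toNat, (v.2 - 1).toNat, ((v.1.1 + v.1.2 + 1) - 1).toNat), ?_⟩
    obtain ⟨⟨m, n⟩, l⟩ := v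
    simp only [Prod.mk.injEq]
    dsimp only at hv
    omega
  · intro x y z
    have e : GG p q a b c s ((-(((x + y + 1 : ℕ) : ℤ) + 1), x + y + z + 2),
        ((y : ℕ) : ℤ) + 1) =
      Gf p q a b c s ((y + 1 : ℕ) : ℤ) (-((x + 1 + (y + 1) : ℕ) : ℤ)) (-((x + 1 : ℕ) : ℤ))
        ((z + 1 : ℕ) : ℤ) ((y + 1 + (z + 1) : ℕ) : ℤ) (x + 1 + (y + 1) + (z + 1)) := by
      unfold GG
      congr 1 <;> (push_cast; ring)
    refine e.trans ?_
    simp only [Gf, Int.cast_neg, Int.cast_natCast, neg_pow_inv, cpow_natCast, pow_add (-1 : ℂ),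
      one_div, mul_inv]
    ring

lemma chamber8 (p q a b c : ℕ) (hp : 0 < p) (hq : 0 < q) (ha : 0 < a)
    (hb : 0 < b) (hc : 0 < c) (s : ℂ) (hs : 1 < s.re) :
    HasSum (fun v : (ℤ × ℕ) × ℤ => if 0 < -(v.2 + v.1.1) ∧ 0 < (v.2 + v.1.1 + v.1.2 + 1) ∧ 0 < -(v.1.1 + v.1.2 + 1) then
      GG p q a b c s v else 0) ((-1) ^ (q + a + b) * ZA3 a c b s p q) := by
  refine chamber (GG p q a b c s) (fun v => 0 < -(v.2 + v.1.1) ∧ 0 < (v.2 + v.1.1 + v.1.2 + 1) ∧ 0 < -(v.1.1 + v.1.2 + 1))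
    (fun t => ((-(((t.1 + t.2.1 + t.2.2 + 2 : ℕ) : ℤ) + 1), t.1 + t.2.1 + 1), ((t.2.1 + t.2.2 + 1 : ℕ) : ℤ) + 1))
    a c b s p q ((-1) ^ (q + a + b)) ?_ ?_ ?_ ?_ ?_
  · simp only [natCast_re, Nat.one_le_cast]
    refine ⟨?_, ?_, ?_, ?_, ?_, ?_⟩ <;> first | omega | exact hs.le
  · rintro ⟨x, y, z⟩ ⟨x', y', z'⟩ h
    simp only [Prod.mk.injEq] at h ⊢
    omega
  · rintro ⟨x, y, z⟩
    dsimp only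
    omega
  · rintro v hv
    refine ⟨((-(v.2 + v.1.1) - 1).toNat, ((v.2 + v.1.1 + v.1.2 + 1) - 1).toNat, (-(v.1.1 + v.1.2 + 1) - 1).toNat), ?_⟩
    obtain ⟨⟨m, n⟩, l⟩ := v
    simp only [Prod.mk.injEq]
    dsimp only at hv
    omega
  · intro x y z
    have e : GG p q a b c s ((-(((x + y + z + 2 : ℕ) : ℤ) + 1), x + y + 1),
        ((y + z + 1 : ℕ) : ℤ) + 1) =
      Gf p q a b c s ((y + 1 + (z + 1) : ℕ) : ℤ) (-((x + 1 + (y + 1) + (z + 1) : ℕ) : ℤ)) (-((x + 1 : ℕ) : ℤ))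
        (-((z + 1 : ℕ) : ℤ)) ((y + 1 : ℕ) : ℤ) (x + 1 + (y + 1)) := by
      unfold GG
      congr 1 <;> (push_cast; ring)
    refine e.trans ?_
    simp only [Gf, Int.cast_neg, Int.cast_natCast, neg_pow_inv, cpow_natCast, pow_add (-1 : ℂ),
      one_div, mul_inv]
    ring

lemma chamber9 (p q a b c : ℕ) (hp : 0 < p) (hq : 0 < q) (ha : 0 < a)
    (hb : 0 < b) (hc : 0 < c) (s : ℂ) (hs : 1 < s.re) :
    HasSum (fun v : (ℤ × ℕ) × ℤ => if 0 < ((v.1.2 : ℤ) + 1) ∧ 0 < -(v.2 + v.1.1 + v.1.2 + 1) ∧ 0 < v.2 then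
      GG p q a b c s v else 0) ((-1) ^ (q + a + b + c) * ZA3 s c p a b q) := by
  refine chamber (GG p q a b c s) (fun v => 0 < ((v.1.2 : ℤ) + 1) ∧ 0 < -(v.2 + v.1.1 + v.1.2 + 1) ∧ 0 < v.2)
    (fun t => ((-(((t.1 + t.2.1 + t.2.2 + 2 : ℕ) : ℤ) + 1), t.1), ((t.2.2 : ℕ) : ℤ) + 1))
    s c p a b q ((-1) ^ (q + a + b + c)) ?_ ?_ ?_ ?_ ?_
  · simp only [natCast_re, Nat.one_le_cast]
    refine ⟨?_, ?_, ?_, ?_, ?_, ?_⟩ <;> first | omega | exact hs.le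
  · rintro ⟨x, y, z⟩ ⟨x', y', z'⟩ h
    simp only [Prod.mk.injEq] at h ⊢
    omega
  · rintro ⟨x, y, z⟩
    dsimp only
    omega
  · rintro v hv
    refine ⟨((((v.1.2 : ℤ) + 1) - 1).toNat, (-(v.2 + v.1.1 + v.1.2 + 1) - 1).toNat, (v.2 - 1).toNat), ?_⟩
    obtain ⟨⟨m, n⟩, l⟩ := v
    simp only [Prod.mk.injEq]
    dsimp only at hv
    omega
  · intro x y z
    have e : GG p q a b c s ((-(((x + y + z + 2 : ℕ) : ℤ) + 1), x),
        ((z : ℕ) : ℤ) + 1) =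
      Gf p q a b c s ((z + 1 : ℕ) : ℤ) (-((x + 1 + (y + 1) + (z + 1) : ℕ) : ℤ)) (-((x + 1 + (y + 1) : ℕ) : ℤ))
        (-((y + 1 + (z + 1) : ℕ) : ℤ)) (-((y + 1 : ℕ) : ℤ)) (x + 1) := by
      unfold GG
      congr 1 <;> (push_cast; ring)
    refine e.trans ?_
    simp only [Gf, Int.cast_neg, Int.cast_natCast, neg_pow_inv, cpow_natCast, pow_add (-1 : ℂ),
      one_div, mul_inv]
    ring

lemma chamber10 (p q a b c : ℕ) (hp : 0 < p) (hq : 0 < q) (ha : 0 < a)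
    (hb : 0 < b) (hc : 0 < c) (s : ℂ) (hs : 1 < s.re) :
    HasSum (fun v : (ℤ × ℕ) × ℤ => if 0 < -v.1.1 ∧ 0 < -v.2 ∧ 0 < (v.2 + v.1.1 + v.1.2 + 1) then
      GG p q a b c s v else 0) ((-1) ^ (p + q + a) * ZA3 q p c a b s) := by
  refine chamber (GG p q a b c s) (fun v => 0 < -v.1.1 ∧ 0 < -v.2 ∧ 0 < (v.2 + v.1.1 + v.1.2 + 1))
    (fun t => ((-(((t.1 : ℕ) : ℤ) + 1), t.1 + t.2.1 + t.2.2 + 2), -(((t.2.1 : ℕ) : ℤ) + 1)))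
    q p c a b s ((-1) ^ (p + q + a)) ?_ ?_ ?_ ?_ ?_
  · simp only [natCast_re, Nat.one_le_cast]
    refine ⟨?_, ?_, ?_, ?_, ?_, ?_⟩ <;> first | omega | exact hs.le
  · rintro ⟨x, y, z⟩ ⟨x', y', z'⟩ h
    simp only [Prod.mk.injEq] at h ⊢
    omega
  · rintro ⟨x, y, z⟩
    dsimp only
    omega
  · rintro v hv
    refine ⟨((-v.1.1 - 1).toNat, (-v.2 - 1).toNat, ((v.2 + v.1.1 + v.1.2 + 1) - 1).toNat), ?_⟩
    obtain ⟨⟨m, n⟩, l⟩ := v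
    simp only [Prod.mk.injEq]
    dsimp only at hv
    omega
  · intro x y z
    have e : GG p q a b c s ((-(((x : ℕ) : ℤ) + 1), x + y + z + 2),
        -(((y : ℕ) : ℤ) + 1)) =
      Gf p q a b c s (-((y + 1 : ℕ) : ℤ)) (-((x + 1 : ℕ) : ℤ)) (-((x + 1 + (y + 1) : ℕ) : ℤ))
        ((y + 1 + (z + 1) : ℕ) : ℤ) ((z + 1 : ℕ) : ℤ) (x + 1 + (y + 1) + (z + 1)) := by
      unfold GG
      congr 1 <;> (push_cast; ring)
    refine e.trans ?_
    simp only [Gf, Int.cast_neg, Int.cast_natCast, neg_pow_inv, cpow_natCast, pow_add (-1 : ℂ),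
      one_div, mul_inv]
    ring

lemma chamber11 (p q a b c : ℕ) (hp : 0 < p) (hq : 0 < q) (ha : 0 < a)
    (hb : 0 < b) (hc : 0 < c) (s : ℂ) (hs : 1 < s.re) :
    HasSum (fun v : (ℤ × ℕ) × ℤ => if 0 < -v.1.1 ∧ 0 < (v.1.1 + v.1.2 + 1) ∧ 0 < -(v.2 + v.1.1 + v.1.2 + 1) then
      GG p q a b c s v else 0) ((-1) ^ (p + q + a + c) * ZA3 q b c s p a) := by
  refine chamber (GG p q a b c s) (fun v => 0 < -v.1.1 ∧ 0 < (v.1.1 + v.1.2 + 1) ∧ 0 < -(v.2 + v.1.1 + v.1.2 + 1))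
    (fun t => ((-(((t.1 : ℕ) : ℤ) + 1), t.1 + t.2.1 + 1), -(((t.2.1 + t.2.2 + 1 : ℕ) : ℤ) + 1)))
    q b c s p a ((-1) ^ (p + q + a + c)) ?_ ?_ ?_ ?_ ?_
  · simp only [natCast_re, Nat.one_le_cast]
    refine ⟨?_, ?_, ?_, ?_, ?_, ?_⟩ <;> first | omega | exact hs.le
  · rintro ⟨x, y, z⟩ ⟨x', y', z'⟩ h
    simp only [Prod.mk.injEq] at h ⊢
    omega
  · rintro ⟨x, y, z⟩
    dsimp only
    omega
  · rintro v hv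
    refine ⟨((-v.1.1 - 1).toNat, ((v.1.1 + v.1.2 + 1) - 1).toNat, (-(v.2 + v.1.1 + v.1.2 + 1) - 1).toNat), ?_⟩
    obtain ⟨⟨m, n⟩, l⟩ := v
    simp only [Prod.mk.injEq]
    dsimp only at hv
    omega
  · intro x y z
    have e : GG p q a b c s ((-(((x : ℕ) : ℤ) + 1), x + y + 1),
        -(((y + z + 1 : ℕ) : ℤ) + 1)) =
      Gf p q a b c s (-((y + 1 + (z + 1) : ℕ) : ℤ)) (-((x + 1 : ℕ) : ℤ)) (-((x + 1 + (y + 1) + (z + 1) : ℕ) : ℤ))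
        ((y + 1 : ℕ) : ℤ) (-((z + 1 : ℕ) : ℤ)) (x + 1 + (y + 1)) := by
      unfold GG
      congr 1 <;> (push_cast; ring)
    refine e.trans ?_
    simp only [Gf, Int.cast_neg, Int.cast_natCast, neg_pow_inv, cpow_natCast, pow_add (-1 : ℂ),
      one_div, mul_inv]
    ring

lemma chamber12 (p q a b c : ℕ) (hp : 0 < p) (hq : 0 < q) (ha : 0 < a)
    (hb : 0 < b) (hc : 0 < c) (s : ℂ) (hs : 1 < s.re) :
    HasSum (fun v : (ℤ × ℕ) × ℤ => if 0 < ((v.1.2 : ℤ) + 1) ∧ 0 < -(v.1.1 + v.1.2 + 1) ∧ 0 < -v.2 then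
      GG p q a b c s v else 0) ((-1) ^ (p + q + a + b + c) * ZA3 s b p q c a) := by
  refine chamber (GG p q a b c s) (fun v => 0 < ((v.1.2 : ℤ) + 1) ∧ 0 < -(v.1.1 + v.1.2 + 1) ∧ 0 < -v.2)
    (fun t => ((-(((t.1 + t.2.1 + 1 : ℕ) : ℤ) + 1), t.1), -(((t.2.2 : ℕ) : ℤ) + 1)))
    s b p q c a ((-1) ^ (p + q + a + b + c)) ?_ ?_ ?_ ?_ ?_
  · simp only [natCast_re, Nat.one_le_cast]
    refine ⟨?_, ?_, ?_, ?_, ?_, ?_⟩ <;> first | omega | exact hs.le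
  · rintro ⟨x, y, z⟩ ⟨x', y', z'⟩ h
    simp only [Prod.mk.injEq] at h ⊢
    omega
  · rintro ⟨x, y, z⟩
    dsimp only
    omega
  · rintro v hv
    refine ⟨((((v.1.2 : ℤ) + 1) - 1).toNat, (-(v.1.1 + v.1.2 + 1) - 1).toNat, (-v.2 - 1).toNat), ?_⟩
    obtain ⟨⟨m, n⟩, l⟩ := v
    simp only [Prod.mk.injEq]
    dsimp only at hv
    omega
  · intro x y z
    have e : GG p q a b c s ((-(((x + y + 1 : ℕ) : ℤ) + 1), x),
        -(((z : ℕ) : ℤ) + 1)) =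
      Gf p q a b c s (-((z + 1 : ℕ) : ℤ)) (-((x + 1 + (y + 1) : ℕ) : ℤ)) (-((x + 1 + (y + 1) + (z + 1) : ℕ) : ℤ))
        (-((y + 1 : ℕ) : ℤ)) (-((y + 1 + (z + 1) : ℕ) : ℤ)) (x + 1) := by
      unfold GG
      congr 1 <;> (push_cast; ring)
    refine e.trans ?_
    simp only [Gf, Int.cast_neg, Int.cast_natCast, neg_pow_inv, cpow_natCast, pow_add (-1 : ℂ),
      one_div, mul_inv]
    ring

lemma GG_split (p q a b c : ℕ) (hp : 0 < p) (hq : 0 < q) (ha : 0 < a)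
    (hb : 0 < b) (hc : 0 < c) (s : ℂ) (v : (ℤ × ℕ) × ℤ) :
    GG p q a b c s v =
      (if 0 < v.2 ∧ 0 < v.1.1 ∧ 0 < ((v.1.2 : ℤ) + 1) then
        GG p q a b c s v else 0) +
      (if 0 < -v.2 ∧ 0 < (v.2 + v.1.1) ∧ 0 < ((v.1.2 : ℤ) + 1) then
        GG p q a b c s v else 0) +
      (if 0 < v.1.1 ∧ 0 < -(v.2 + v.1.1) ∧ 0 < (v.2 + v.1.1 + v.1.2 + 1) then
        GG p q a b c s v else 0) +
      (if 0 < v.1.1 ∧ 0 < ((v.1.2 : ℤ) + 1) ∧ 0 < -(v.2 + v.1.1 + v.1.2 + 1) then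
        GG p q a b c s v else 0) +
      (if 0 < (v.2 + v.1.1) ∧ 0 < -v.1.1 ∧ 0 < (v.1.1 + v.1.2 + 1) then
        GG p q a b c s v else 0) +
      (if 0 < (v.2 + v.1.1) ∧ 0 < ((v.1.2 : ℤ) + 1) ∧ 0 < -(v.1.1 + v.1.2 + 1) then
        GG p q a b c s v else 0) +
      (if 0 < -(v.2 + v.1.1) ∧ 0 < v.2 ∧ 0 < (v.1.1 + v.1.2 + 1) then
        GG p q a b c s v else 0) +
      (if 0 < -(v.2 + v.1.1) ∧ 0 < (v.2 + v.1.1 + v.1.2 + 1) ∧ 0 < -(v.1.1 + v.1.2 + 1) then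
        GG p q a b c s v else 0) +
      (if 0 < ((v.1.2 : ℤ) + 1) ∧ 0 < -(v.2 + v.1.1 + v.1.2 + 1) ∧ 0 < v.2 then
        GG p q a b c s v else 0) +
      (if 0 < -v.1.1 ∧ 0 < -v.2 ∧ 0 < (v.2 + v.1.1 + v.1.2 + 1) then
        GG p q a b c s v else 0) +
      (if 0 < -v.1.1 ∧ 0 < (v.1.1 + v.1.2 + 1) ∧ 0 < -(v.2 + v.1.1 + v.1.2 + 1) then
        GG p q a b c s v else 0) +
      (if 0 < ((v.1.2 : ℤ) + 1) ∧ 0 < -(v.1.1 + v.1.2 + 1) ∧ 0 < -v.2 then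
        GG p q a b c s v else 0) := by
  by_cases h0 : GG p q a b c s v = 0
  · simp [h0]
  obtain ⟨⟨m, n⟩, l⟩ := v
  have h : l ≠ 0 ∧ m ≠ 0 ∧ l + m ≠ 0 ∧ m + n + 1 ≠ 0 ∧ l + m + n + 1 ≠ 0 := by
    refine ⟨?_, ?_, ?_, ?_, ?_⟩ <;> intro h <;> apply h0
    · simp [GG, Gf, h, hp.ne']
    · simp [GG, Gf, h, hq.ne']
    · simp only [GG, Gf, h]; simp [ha.ne']
    · simp only [GG, Gf, h]; simp [hb.ne']
    · have h' : l + (m + n + 1) = 0 := by omega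
      simp only [GG, Gf, h']; simp [hc.ne']
  obtain ⟨h1, h2, h3, h4, h5⟩ := h
  generalize GG p q a b c s ((m, n), l) = g
  dsimp only
  rcases lt_or_gt_of_ne h1 with h1 | h1 <;> rcases lt_or_gt_of_ne h2 with h2 | h2 <;>
  rcases lt_or_gt_of_ne h3 with h3 | h3 <;> rcases lt_or_gt_of_ne h4 with h4 | h4 <;>
  rcases lt_or_gt_of_ne h5 with h5 | h5 <;> first
  | (exfalso; omega)
  | ((repeat first | rw [if_pos (by omega)] | rw [if_neg (by omega)]); ring)

lemma hasSum_GG (p q a b c : ℕ) (hp : 0 < p) (hq : 0 < q) (ha : 0 < a)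
    (hb : 0 < b) (hc : 0 < c) (s : ℂ) (hs : 1 < s.re) :
    HasSum (GG p q a b c s) (Scomb ZA3 p q a b c s) := by
  have h := (((((((((((chamber1 p q a b c hp hq ha hb hc s hs).add
    (chamber2 p q a b c hp hq ha hb hc s hs)).add
    (chamber3 p q a b c hp hq ha hb hc s hs)).add
    (chamber4 p q a b c hp hq ha hb hc s hs)).add
    (chamber5 p q a b c hp hq ha hb hc s hs)).add
    (chamber6 p q a b c hp hq ha hb hc s hs)).add
    (chamber7 p q a b c hp hq ha hb hc s hs)).add
    (chamber8 p q a b c hp hq ha hb hc s hs)).add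
    (chamber9 p q a b c hp hq ha hb hc s hs)).add
    (chamber10 p q a b c hp hq ha hb hc s hs)).add
    (chamber11 p q a b c hp hq ha hb hc s hs)).add
    (chamber12 p q a b c hp hq ha hb hc s hs)
  rw [funext (GG_split p q a b c hp hq ha hb hc s)]
  unfold Scomb
  rw [one_mul] at h
  exact h

end A3

namespace A3
open Filter Topology

/-- The shape of `J0` with `T · · · 1 1` replaced by an arbitrary function. -/
noncomputable def Jgen (t : ℕ → ℂ → ℕ → ℂ) (p q a b c : ℕ) (s : ℂ) : ℂ :=
  2 * (-1 : ℂ) ^ p * ∑ j ∈ range (p / 2 + 1), riemannZeta (2 * j) *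
      ∑ ω ∈ range (p - 2 * j + 1),
        (Nat.choose (ω + a - 1) ω : ℂ) * (Nat.choose (p + c - 2 * j - ω - 1) (c - 1) : ℂ) *
          t (q + a + ω) s (p + b + c - 2 * j - ω) +
  2 * (-1 : ℂ) ^ (p + a) * ∑ j ∈ range (c / 2 + 1), riemannZeta (2 * j) *
      ∑ ω ∈ range (c - 2 * j + 1),
        (Nat.choose (ω + a - 1) ω : ℂ) * (Nat.choose (p + c - 2 * j - ω - 1) (p - 1) : ℂ) *
          t q (s + a + ω) (p + b + c - 2 * j - ω) +
  2 * (-1 : ℂ) ^ p * ∑ j ∈ range (a / 2 + 1), riemannZeta (2 * j) *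
      ∑ ω ∈ range p,
        (Nat.choose (ω + a - 2 * j) ω : ℂ) * (Nat.choose (p + c - 2 - ω) (c - 1) : ℂ) *
          t (q + a - 2 * j + ω + 1) s (p + b + c - 1 - ω) +
  2 * (-1 : ℂ) ^ (p + a) * ∑ j ∈ range (a / 2 + 1), riemannZeta (2 * j) *
      ∑ ω ∈ range c,
        (Nat.choose (ω + a - 2 * j) ω : ℂ) * (Nat.choose (p + c - 2 - ω) (p - 1) : ℂ) *
          t q (s + ((a - 2 * j : ℕ) : ℂ) + ω + 1) (p + b + c - 1 - ω)

/-- The summand of `T`, with vanishing junk terms. -/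
noncomputable def tau (v : ℤ × ℕ) (P : ℕ) (s : ℂ) (Q : ℕ) : ℂ :=
  ((v.1 : ℂ) ^ P)⁻¹ * (((v.2 + 1 : ℕ) : ℂ) ^ s)⁻¹ * (((v.1 + v.2 + 1 : ℤ) : ℂ) ^ Q)⁻¹

lemma norm_int_pow_inv_le (m : ℤ) (P : ℕ) (hP : 0 < P) :
    ‖((m : ℂ) ^ P)⁻¹‖ ≤ |(m : ℝ)|⁻¹ := by
  by_cases h : m = 0
  · simp [h, hP.ne']
  have h1 : (1 : ℝ) ≤ |(m : ℝ)| := by exact_mod_cast Int.one_le_abs h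
  rw [norm_inv, norm_pow, Complex.norm_intCast]
  exact inv_anti₀ (by positivity) (le_self_pow₀ h1 hP.ne')

lemma summable_tau (P Q : ℕ) (hP : 0 < P) (hQ : 0 < Q) (s : ℂ) (hs : 1 < s.re) :
    Summable (fun v => tau v P s Q) := by
  have h1 : Summable (fun m : ℤ => ((m : ℝ) ^ 2)⁻¹) := by
    have := (Real.summable_one_div_int_pow (p := 2)).2 (by norm_num)
    simpa using this
  have h2 : Summable (fun n : ℕ => (((n + 1 : ℕ) : ℝ) ^ s.re)⁻¹) := by
    have h : Summable (fun n : ℕ => ((n : ℝ) ^ s.re)⁻¹) := Real.summable_nat_rpow_inv.2 hs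
    exact (summable_nat_add_iff 1).2 h
  have h3 : Summable (fun v : ℤ × ℕ => ((v.1 : ℝ) ^ 2)⁻¹ * (((v.2 + 1 : ℕ) : ℝ) ^ s.re)⁻¹) := by
    refine h1.mul_of_nonneg h2 ?_ ?_
    all_goals intro t; simp only [Pi.zero_apply]; positivity
  let e : ℤ × ℕ → ℤ × ℕ := fun v => (v.1 + v.2 + 1, v.2)
  have he : Function.Injective e := by
    rintro ⟨x, y⟩ ⟨x', y'⟩ h
    simp only [e, Prod.mk.injEq] at h ⊢
    omega
  have h4 := h3.comp_injective he
  refine Summable.of_norm_bounded (h3.add h4) fun v => ?_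
  obtain ⟨m, n⟩ := v
  simp only [tau, norm_mul, Function.comp_apply, e]
  rw [norm_inv (_ ^ s), Complex.norm_natCast_cpow_of_pos (by omega)]
  have e1 := norm_int_pow_inv_le m P hP
  have e2 := norm_int_pow_inv_le (m + n + 1) Q hQ
  set A := ‖((m : ℂ) ^ P)⁻¹‖
  set B := ‖(((m + n + 1 : ℤ) : ℂ) ^ Q)⁻¹‖
  set x := |(m : ℝ)|⁻¹ with hx
  set y := |((m + n + 1 : ℤ) : ℝ)|⁻¹ with hy
  have hx2 : ((m : ℝ) ^ 2)⁻¹ = x ^ 2 := by rw [hx, inv_pow, sq_abs]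
  have hy2 : (((m + n + 1 : ℤ) : ℝ) ^ 2)⁻¹ = y ^ 2 := by rw [hy, inv_pow, sq_abs]
  have hx0 : 0 ≤ x := by positivity
  have hB : 0 ≤ B := norm_nonneg _
  have hAB : A * B ≤ x ^ 2 + y ^ 2 := by
    have : A * B ≤ x * y := mul_le_mul e1 e2 hB hx0
    nlinarith [sq_nonneg (x - y), sq_nonneg x, sq_nonneg y]
  rw [hx2, hy2]
  have hz : 0 ≤ (((n + 1 : ℕ) : ℝ) ^ s.re)⁻¹ := by positivity
  nlinarith [mul_le_mul_of_nonneg_right hAB hz]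

lemma hasSum_tau (P Q : ℕ) (hP : 0 < P) (hQ : 0 < Q) (s : ℂ) (hs : 1 < s.re) :
    HasSum (fun v => tau v P s Q) (T P s Q 1 1) := by
  have h := (summable_tau P Q hP hQ s hs).hasSum
  convert h using 1
  unfold T
  refine tsum_congr fun v => ?_
  obtain ⟨m, n⟩ := v
  simp only [one_zpow, one_pow, mul_one, tau]
  split_ifs with h0
  · rw [one_div, mul_inv, mul_inv]
  · rw [not_and_or, not_ne_iff, not_ne_iff] at h0
    rcases h0 with h0 | h0
    · simp [h0, hP.ne']
    · have : m + (n : ℤ) + 1 = 0 := by omega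
      rw [this]
      simp [hQ.ne']

lemma hasSum_Jgen (p q a b c : ℕ) (hp : 0 < p) (hq : 0 < q) (ha : 0 < a)
    (hb : 0 < b) (hc : 0 < c) (s : ℂ) (hs : 1 < s.re) :
    HasSum (fun v => Jgen (tau v) p q a b c s) (J0 p q a b c s) := by
  unfold Jgen J0
  refine HasSum.add (HasSum.add (HasSum.add ?_ ?_) ?_) ?_
  all_goals
    refine HasSum.mul_left _ (hasSum_sum fun j hj => HasSum.mul_left _
      (hasSum_sum fun ω hω => HasSum.mul_left _ ?_))
    rw [mem_range] at hj hω
    refine hasSum_tau _ _ (by omega) (by omega) _ ?_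
    have h1 : (0 : ℝ) ≤ ω := by positivity
    have h2 : (0 : ℝ) ≤ a := by positivity
    have h3 : (0 : ℝ) ≤ (a - 2 * j : ℕ) := by positivity
    first
    | exact hs
    | (simp only [Complex.add_re, Complex.natCast_re, Complex.one_re]; linarith)

lemma Jgen_zero (p q a b c : ℕ) (hq : 0 < q) (hb : 0 < b) (s : ℂ) (v : ℤ × ℕ)
    (hv : v.1 = 0 ∨ v.1 + v.2 + 1 = 0) (hc : 0 < c) : Jgen (tau v) p q a b c s = 0 := by
  have h : ∀ P Q s, 0 < P → 0 < Q → tau v P s Q = 0 := by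
    intro P Q s hP hQ
    unfold tau
    rcases hv with hv | hv <;> rw [hv] <;> simp [hP.ne', hQ.ne']
  unfold Jgen
  have z : ∀ (r : ℕ) (k : ℕ → ℕ) (f : ℕ → ℂ) (g : ℕ → ℕ → ℂ) (x : ℂ),
      (∀ j ∈ range r, ∀ ω ∈ range (k j), g j ω = 0) →
      x * ∑ j ∈ range r, f j * ∑ ω ∈ range (k j), g j ω = 0 := by
    intro r k f g x hg
    rw [sum_eq_zero fun j hj => ?_, mul_zero]
    rw [sum_eq_zero (hg j hj), mul_zero]
  rw [z, z, z, z]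
  · simp
  all_goals
    intro j hj ω hω
    rw [mem_range] at hj hω
    rw [h _ _ _ (by omega) (by omega), mul_zero]

lemma Jgen_eval (p q a b c : ℕ) (hp : 0 < p) (ha : 0 < a) (hc : 0 < c) (s : ℂ) (m : ℤ) (n : ℕ)
    (hm : m ≠ 0) (hN : m + n + 1 ≠ 0) :
    ((m : ℂ) ^ q)⁻¹ * (((n + 1 : ℕ) : ℂ) ^ s)⁻¹ * (((m + n + 1 : ℤ) : ℂ) ^ b)⁻¹ *
      (RR0 (p + a + c) (EZ m (m + n + 1) p a c 0) +
        RR0 (p + a + c) (EZ m (m + n + 1) p a c (-m)) +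
        RR0 (p + a + c) (EZ m (m + n + 1) p a c (-(m + n + 1)))) =
      Jgen (tau (m, n)) p q a b c s := by
  have h3 := val3 m (n + 1) hm (by omega) (by omega) p a c hp hc (p + a + c) (by omega)
  rw [← add_assoc] at h3
  rw [val1 m (m + n + 1) hm hN p a c hc _ (by omega), h3,
    val2 m (m + n + 1) (by omega) hN p a c hp _ (by omega)]
  have hn1 : m + n + 1 - m = ((n + 1 : ℕ) : ℤ) := by push_cast; ring
  have hn2 : (n : ℤ) + 1 = ((n + 1 : ℕ) : ℤ) := by push_cast; ring
  rw [hn1, hn2, Int.cast_natCast]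
  have hM : (m : ℂ) ≠ 0 := by exact_mod_cast hm
  have hn0 : ((n + 1 : ℕ) : ℂ) ≠ 0 := by norm_cast
  unfold Jgen
  have z : ∀ (K x : ℂ) (r : ℕ) (k : ℕ → ℕ) (f : ℕ → ℂ) (g g' h : ℕ → ℕ → ℂ),
      (∀ j ∈ range r, ∀ ω ∈ range (k j), K * g j ω = g' j ω) →
      K * (x * ∑ j ∈ range r, f j * ∑ ω ∈ range (k j), h j ω * g j ω) =
      x * ∑ j ∈ range r, f j * ∑ ω ∈ range (k j), h j ω * g' j ω := by
    intro K x r k f g g' h hg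
    rw [mul_left_comm, mul_sum]
    congr 1
    refine sum_congr rfl fun j hj => ?_
    rw [mul_left_comm, mul_sum]
    congr 1
    refine sum_congr rfl fun ω hω => ?_
    rw [mul_left_comm, hg j hj ω hω]
  have step : ∀ K A B C D A' B' C' D' : ℂ, K * A = A' → K * B = B' → K * C = C' → K * D = D' →
      K * (A + (B + C) + D) = A' + D' + B' + C' := by
    intro K A B C D A' B' C' D' h1 h2 h3 h4
    rw [← h1, ← h2, ← h3, ← h4]
    ring
  refine step _ _ _ _ _ _ _ _ _ (z _ _ _ _ _ _ _ _ fun j hj ω hω => ?_)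
    (z _ _ _ _ _ _ _ _ fun j hj ω hω => ?_) (z _ _ _ _ _ _ _ _ fun j hj ω hω => ?_)
    (z _ _ _ _ _ _ _ _ fun j hj ω hω => ?_)
  all_goals
    rw [mem_range] at hj hω
    simp only [tau]
  · rw [show q + a + ω = q + (a + ω) by omega,
      show p + b + c - 2 * j - ω = b + (p + c - 2 * j - ω) by omega, pow_add (m : ℂ),
      pow_add (_ : ℂ) b, mul_inv, mul_inv]
    ring
  · rw [show q + a - 2 * j + ω + 1 = q + (a - 2 * j + ω + 1) by omega,
      show p + b + c - 1 - ω = b + (p + c - 1 - ω) by omega, pow_add (m : ℂ) q,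
      pow_add (_ : ℂ) b, mul_inv, mul_inv]
    ring
  · rw [show s + ((a - 2 * j : ℕ) : ℂ) + ω + 1 = s + ((a - 2 * j + ω + 1 : ℕ) : ℂ) by
        push_cast; ring,
      show p + b + c - 1 - ω = b + (p + c - 1 - ω) by omega, Complex.cpow_add _ _ hn0,
      Complex.cpow_natCast, pow_add (_ : ℂ) b, mul_inv, mul_inv]
    ring
  · rw [show s + (a : ℂ) + ω = s + ((a + ω : ℕ) : ℂ) by push_cast; ring,
      show p + b + c - 2 * j - ω = b + (p + c - 2 * j - ω) by omega, Complex.cpow_add _ _ hn0,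
      Complex.cpow_natCast, pow_add (_ : ℂ) b, mul_inv, mul_inv]
    ring

lemma hasSum_fibre (p q a b c : ℕ) (hp : 0 < p) (hq : 0 < q) (ha : 0 < a)
    (hb : 0 < b) (hc : 0 < c) (s : ℂ) (hS : Summable (GG p q a b c s)) (v : ℤ × ℕ) :
    HasSum (fun l => GG p q a b c s (v, l)) (Jgen (tau v) p q a b c s) := by
  by_cases hv : v.1 = 0 ∨ v.1 + v.2 + 1 = 0
  · rw [Jgen_zero p q a b c hq hb s v hv hc]
    convert hasSum_zero using 1
    funext l
    unfold GG Gf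
    rcases hv with hv | hv <;> simp only [hv] <;> simp [hq.ne', hb.ne']
  · obtain ⟨m, n⟩ := v
    rw [not_or] at hv
    obtain ⟨hm, hN⟩ := hv
    simp only at hm hN
    have h1 := (hS.prod_factor (m, n)).hasSum
    have h2 := h1.comp (tendsto_Icc_neg (R := ℤ))
    have h3 := (inner_lim m (m + n + 1) hm hN (by omega) p a c hp ha hc (p + a + c) le_rfl).const_mul
      (((m : ℂ) ^ q)⁻¹ * (((n + 1 : ℕ) : ℂ) ^ s)⁻¹ * (((m + n + 1 : ℤ) : ℂ) ^ b)⁻¹)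
    rw [Jgen_eval p q a b c hp ha hc s m n hm hN] at h3
    have h4 := tendsto_nhds_unique h2 (h3.congr fun L => ?_)
    · rw [h4] at h1
      exact h1
    · simp only [Function.comp_apply]
      rw [mul_sum]
      refine sum_congr rfl fun l _ => ?_
      simp only [GG, Gf, mul_inv]
      ring

end A3


/-- Functional relation for the zeta-function of the root system `A₃`
(Theorem 5.2 of Komori–Matsumoto–Tsumura). -/
theorem functional_relation_A3 (p q a b c : ℕ) (hp : 0 < p) (hq : 0 < q) (ha : 0 < a)
    (hb : 0 < b) (hc : 0 < c) (s : ℂ) (hs : 1 < s.re) :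
    Scomb ZA3 p q a b c s = J0 p q a b c s := by
  have h := A3.hasSum_GG p q a b c hp hq ha hb hc s hs
  have h1 := h.prod_fiberwise (A3.hasSum_fibre p q a b c hp hq ha hb hc s h.summable)
  exact h1.unique (A3.hasSum_Jgen p q a b c hp hq ha hb hc s hs)
end
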